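/- arXiv:2501.18570 — 3 statements merged into one kernel-verified Lean document; each statement's English description precedes it below -/
import Mathlib

section
/- Let K_{n_1,…,n_d} be the complete multipartite graph with vertex partition V_1 ∪ ⋯ ∪ V_d, |V_i| = n_i, n = n_1 + ⋯ + n_d, d ≥ 2. Let F be a spanning forest of K_{n_1,…,n_d} with components T_1,…,T_k and let n_{ij} be the number of vertices of T_j in V_i. Set α_j = Σ_{i=1}^d (n−n_i) n_{ij} and a_{pq} = Σ_{j=1}^k n_{pj} n_{qj} / α_j. Then the number of spanning trees of K_{n_1,…,n_d} containing F equals (∏_{j=1}^k α_j) / ((d−1)^{d−2} ∏_{i=1}^d (n−n_i)²) times Σ over all spanning trees T of the complete graph K_d on vertices v_1,…,v_d of ∏ over edges v_p v_q of T of (n−n_p)(n−n_q)(1 − (d−1) a_{pq}). -/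
/-- `n_{ij}`: the number of vertices of the component `j` of the forest `F` that lie in
the `i`-th part of the complete multipartite graph. -/
noncomputable def multipartiteNij {d : ℕ} (nn : Fin d → ℕ)
    (F : SimpleGraph (Σ i : Fin d, Fin (nn i))) (i : Fin d)
    (j : F.ConnectedComponent) : ℕ :=
  Nat.card {v : Σ i : Fin d, Fin (nn i) // v.1 = i ∧ F.connectedComponentMk v = j}

/-- `α_j = Σ_{i=1}^d (n − n_i) n_{ij}`, where `n = n_1 + ⋯ + n_d`. -/
noncomputable def multipartiteAlpha {d : ℕ} (nn : Fin d → ℕ)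
    (F : SimpleGraph (Σ i : Fin d, Fin (nn i))) (j : F.ConnectedComponent) : ℚ :=
  ∑ i : Fin d, ((∑ i', nn i' : ℕ) - (nn i : ℚ)) * multipartiteNij nn F i j

/-- `a_{pq} = Σ_{j=1}^k n_{pj} n_{qj} / α_j`, the sum taken over all components of `F`. -/
noncomputable def multipartiteA {d : ℕ} (nn : Fin d → ℕ)
    (F : SimpleGraph (Σ i : Fin d, Fin (nn i))) (p q : Fin d) : ℚ :=
  ∑ᶠ j : F.ConnectedComponent,
    (multipartiteNij nn F p j * multipartiteNij nn F q j : ℚ) / multipartiteAlpha nn F j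


section
open Finset

def MPFlow {C : Type*} (j0 : C) (f : C → C) : Prop := ∃ h : C → ℕ, ∀ j, j ≠ j0 → h (f j) < h j

lemma MPFlow_dichotomy {C : Type*} (j0 : C) (f : C → C) (hf : ¬ MPFlow j0 f) :
    ∃ S : Set C, S.Nonempty ∧ j0 ∉ S ∧ ∀ j, j ≠ j0 → (j ∈ S ↔ f j ∈ S) := by
  classical
  refine ⟨{j | ∀ n, f^[n] j ≠ j0}, ?_, ?_, ?_⟩
  · by_contra hne
    rw [Set.not_nonempty_iff_eq_empty] at hne
    have hall : ∀ j, ∃ n, f^[n] j = j0 := by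
      intro j
      by_contra hj
      push Not at hj
      have : j ∈ ({j | ∀ n, f^[n] j ≠ j0} : Set C) := hj
      rw [hne] at this
      exact this
    refine hf ⟨fun j => Nat.find (hall j), fun j hj => ?_⟩
    have h1 := Nat.find_spec (hall j)
    have h0 : Nat.find (hall j) ≠ 0 := by
      intro h
      rw [h] at h1
      exact hj h1
    obtain ⟨m, hm⟩ := Nat.exists_eq_succ_of_ne_zero h0
    rw [hm, Function.iterate_succ_apply] at h1
    have := Nat.find_min' (hall (f j)) h1
    simp only
    omega
  · intro h
    exact h 0 rfl
  · intro j hj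
    constructor
    · intro h n
      have := h (n+1)
      rwa [Function.iterate_succ_apply] at this
    · intro h n
      cases n with
      | zero => exact hj
      | succ n => rw [Function.iterate_succ_apply]; exact h n

def MPmat {C : Type*} [DecidableEq C] (j0 : C) (f : C → C) : Matrix C C ℚ :=
  fun i => if i = j0 then Pi.single j0 1 else Pi.single i 1 - Pi.single (f i) 1

lemma MPmat_det_zero {C : Type*} [Fintype C] [DecidableEq C] (j0 : C) (f : C → C)
    (hf : ¬ MPFlow j0 f) : (MPmat j0 f).det = 0 := by
  classical
  obtain ⟨S, ⟨s, hs⟩, h0, hS⟩ := MPFlow_dichotomy j0 f hf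
  rw [← Matrix.exists_mulVec_eq_zero_iff]
  refine ⟨fun j => if j ∈ S then 1 else 0, ?_, ?_⟩
  · intro h
    have := congrFun h s
    simp [hs] at this
  · funext i
    unfold MPmat Matrix.mulVec
    by_cases hi : i = j0
    · simp [hi, h0]
    · simp only [hi, if_false, sub_dotProduct, single_dotProduct, hS i hi]
      simp

lemma MPmat_det_one {C : Type*} [Fintype C] [DecidableEq C] (j0 : C) (f : C → C)
    (hf : MPFlow j0 f) : (MPmat j0 f).det = 1 := by
  classical
  obtain ⟨h, hh⟩ := hf
  have hb : Matrix.BlockTriangular (MPmat j0 f) (fun i => OrderDual.toDual (h i)) := by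
    intro i j hij
    have hij' : h i < h j := hij
    unfold MPmat
    by_cases hi : i = j0
    · subst hi
      have : j ≠ i := by rintro rfl; exact lt_irrefl _ hij'
      simp [this]
    · have h1 : j ≠ i := by rintro rfl; exact lt_irrefl _ hij'
      have h2 : j ≠ f i := by rintro rfl; have := hh i hi; omega
      simp [hi, h1, h2]
  rw [hb.det]
  apply Finset.prod_eq_one
  intro a _
  have : (MPmat j0 f).toSquareBlock (fun i => OrderDual.toDual (h i)) a = 1 := by
    ext ⟨i, hi⟩ ⟨j, hj⟩
    have hij : h i = h j := by
      have := hi.trans hj.symm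
      exact this
    change MPmat j0 f i j = _
    simp only [Matrix.one_apply, Subtype.mk.injEq]
    unfold MPmat
    by_cases hi : i = j0
    · subst hi
      simp [Pi.single_apply, eq_comm]
    · have h2 : j ≠ f i := by rintro rfl; have := hh i hi; omega
      simp [hi, h2, Pi.single_apply, eq_comm]
  rw [this, Matrix.det_one]

/-- Laplacian-like matrices with rank-one perturbation. -/
lemma MPdet_pert {C : Type*} [Fintype C] [DecidableEq C] (L : Matrix C C ℚ) (j0 : C)
    (hr : ∀ i, ∑ j, L i j = 0) (hc : ∀ j, ∑ i, L i j = 0) (x y : C → ℚ) :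
    (L + Matrix.vecMulVec x y).det = (∑ i, x i) * (∑ i, y i) * (L.updateRow j0 (Pi.single j0 1)).det := by
  have h1 : (L + Matrix.vecMulVec x y).det =
      ((L + Matrix.vecMulVec x y).updateRow j0 ((∑ i, x i) • y)).det := by
    have := Matrix.det_updateRow_sum (L + Matrix.vecMulVec x y) j0 (fun _ => 1)
    rw [one_smul] at this
    rw [← this]
    congr 2
    funext j
    refine (Finset.sum_apply j Finset.univ
      (fun k => (1 : ℚ) • ((L + Matrix.vecMulVec x y) k : C → ℚ))).trans ?_
    simp [Matrix.vecMulVec_apply, Finset.sum_add_distrib, hc, Finset.sum_mul]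
  have h2 : ((L + Matrix.vecMulVec x y).updateRow j0 y).det = (L.updateRow j0 y).det := by
    apply Matrix.det_eq_of_forall_row_eq_smul_add_const (fun i => if i = j0 then 0 else x i) j0
    · simp
    · intro i j
      by_cases hi : i = j0
      · subst hi; simp
      · simp [hi, Matrix.vecMulVec_apply]
  have h3 : (L.updateRow j0 (y - (∑ i, y i) • (Pi.single j0 1))).det = 0 := by
    rw [← Matrix.exists_mulVec_eq_zero_iff]
    refine ⟨fun _ => 1, ?_, ?_⟩
    · intro h
      have := congrFun h j0
      simp at this
    · funext i
      by_cases hi : i = j0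
      · subst hi; simp [Matrix.mulVec, dotProduct, Finset.sum_sub_distrib, ← Finset.mul_sum, Pi.single_apply]
      · simp [Matrix.mulVec, dotProduct, hi, hr]
  have h4 : y = (y - (∑ i, y i) • (Pi.single j0 1)) + (∑ i, y i) • (Pi.single j0 (1:ℚ)) := by simp
  have h5 : (L.updateRow j0 y).det = (∑ i, y i) * (L.updateRow j0 (Pi.single j0 1)).det := by
    conv_lhs => rw [h4]
    rw [Matrix.det_updateRow_add, h3, Matrix.det_updateRow_smul, zero_add]
  rw [h1, Matrix.det_updateRow_smul, h2, h5]
  ring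

structure MPValid {V C : Type*} (c : V → C) (r : V) (g : C → V × V) : Prop where
  root : g (c r) = (r, r)
  fst : ∀ j, j ≠ c r → c (g j).1 = j
  flow : MPFlow (c r) (fun j => c (g j).2)

def MPedge {V C : Type*} (g : C → V × V) (j : C) : Sym2 V := s((g j).1, (g j).2)

def MPgraph {V C : Type*} (F : SimpleGraph V) (c : V → C) (r : V) (g : C → V × V) :
    SimpleGraph V :=
  F ⊔ SimpleGraph.fromEdgeSet {e | ∃ j, j ≠ c r ∧ e = MPedge g j}

lemma MPextract {V C : Type*} (F T : SimpleGraph V) (c : V → C)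
    (hc : Function.Surjective c) (r : V) (hT : T.Connected) :
    ∃ g : C → V × V, MPValid c r g ∧ ∀ j, j ≠ c r → T.Adj (g j).1 (g j).2 := by
  classical
  have key : ∀ j : C, ∃ u : V, c u = j ∧ ∀ u', c u' = j → T.dist r u ≤ T.dist r u' := by
    intro j
    obtain ⟨u0, hu0⟩ := hc j
    have hne : {n | ∃ u, c u = j ∧ T.dist r u = n}.Nonempty := ⟨_, u0, hu0, rfl⟩
    obtain ⟨u, hu, hn⟩ := Nat.sInf_mem hne
    refine ⟨u, hu, fun u' hu' => ?_⟩
    rw [hn]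
    exact Nat.sInf_le ⟨u', hu', rfl⟩
  choose top htop hmin using key
  have step : ∀ u : V, u ≠ r → ∃ v, T.Adj u v ∧ T.dist r v < T.dist r u := by
    intro u hu
    obtain ⟨p, hp⟩ := hT.exists_walk_length_eq_dist u r
    cases p with
    | nil => exact absurd rfl hu
    | cons h q =>
      refine ⟨_, h, ?_⟩
      rw [SimpleGraph.dist_comm, SimpleGraph.dist_comm (u := r) (v := u), ← hp,
        SimpleGraph.Walk.length_cons]
      have := SimpleGraph.dist_le q
      omega
  have hne : ∀ j, j ≠ c r → top j ≠ r := by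
    intro j hj h
    apply hj
    rw [← htop j, h]
  choose! nx hadj hlt using step
  refine ⟨fun j => if j = c r then (r, r) else (top j, nx (top j)), ⟨by simp, ?_, ?_⟩, ?_⟩
  · intro j hj
    simp [hj, htop]
  · refine ⟨fun j => T.dist r (top j), fun j hj => ?_⟩
    simp only [hj, if_false]
    exact lt_of_le_of_lt (hmin _ (nx (top j)) rfl) (hlt _ (hne j hj))
  · intro j hj
    simp only [hj, if_false]
    exact hadj _ (hne j hj)

lemma MPValid.snd_ne {V C : Type*} {c : V → C} {r : V} {g : C → V × V} (hg : MPValid c r g)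
    {j : C} (hj : j ≠ c r) : c (g j).2 ≠ j := by
  obtain ⟨h, hh⟩ := hg.flow
  intro h'
  have := hh j hj
  simp only [h'] at this
  omega

lemma MPValid.injOn {V C : Type*} {c : V → C} {r : V} {g : C → V × V} (hg : MPValid c r g) :
    Set.InjOn (MPedge g) {j | j ≠ c r} := by
  intro i hi j hj hij
  obtain ⟨h, hh⟩ := hg.flow
  simp only [MPedge, Sym2.eq_iff] at hij
  rcases hij with ⟨h1, h2⟩ | ⟨h1, h2⟩
  · rw [← hg.fst i hi, h1, hg.fst j hj]
  · have e1 := hh i hi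
    have e2 := hh j hj
    simp only [h2, hg.fst j hj] at e1
    simp only [← h1, hg.fst i hi] at e2
    omega

lemma MPValid.notMem {V C : Type*} {F : SimpleGraph V} {c : V → C} {r : V} {g : C → V × V}
    (hcr : ∀ u v, c u = c v ↔ F.Reachable u v)
    (hg : MPValid c r g) {j : C} (hj : j ≠ c r) : MPedge g j ∉ F.edgeSet := by
  intro h
  have : F.Adj (g j).1 (g j).2 := h
  have := (hcr _ _).2 this.reachable
  rw [hg.fst j hj] at this
  exact hg.snd_ne hj this.symm

lemma MPValid.adj {V C : Type*} {F : SimpleGraph V} {c : V → C} {r : V} {g : C → V × V}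
    (hg : MPValid c r g) {j : C} (hj : j ≠ c r) : (MPgraph F c r g).Adj (g j).1 (g j).2 := by
  unfold MPgraph
  rw [SimpleGraph.sup_adj]
  right
  rw [SimpleGraph.fromEdgeSet_adj]
  refine ⟨⟨j, hj, rfl⟩, fun h => ?_⟩
  have := hg.fst j hj
  rw [h] at this
  exact hg.snd_ne hj this

lemma MPValid.connected {V C : Type*} {F : SimpleGraph V} {c : V → C} {r : V} {g : C → V × V}
    (hcr : ∀ u v, c u = c v ↔ F.Reachable u v)
    (hg : MPValid c r g) : (MPgraph F c r g).Connected := by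
  obtain ⟨h, hh⟩ := hg.flow
  have hle : F ≤ MPgraph F c r g := le_sup_left
  have key : ∀ n v, h (c v) = n → (MPgraph F c r g).Reachable v r := by
    intro n
    induction n using Nat.strong_induction_on with
    | _ n ih =>
      intro v hv
      by_cases hvr : c v = c r
      · exact ((hcr _ _).1 hvr).mono hle
      · have h1 : (MPgraph F c r g).Reachable v (g (c v)).1 :=
          ((hcr _ _).1 (hg.fst _ hvr).symm).mono hle
        have h2 : (MPgraph F c r g).Reachable (g (c v)).1 (g (c v)).2 :=
          (hg.adj hvr).reachable
        have h3 := ih _ (by rw [← hv]; exact hh _ hvr) (g (c v)).2 rfl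
        exact (h1.trans h2).trans h3
  haveI : Nonempty V := ⟨r⟩
  exact ⟨fun u v => (key _ u rfl).trans (key _ v rfl).symm⟩

lemma MPgraph_edgeSet_sdiff {V C : Type*} {F : SimpleGraph V} {c : V → C} {r : V}
    {g : C → V × V} (hcr : ∀ u v, c u = c v ↔ F.Reachable u v)
    (hg : MPValid c r g) :
    (MPgraph F c r g).edgeSet \ F.edgeSet = MPedge g '' {j | j ≠ c r} := by
  ext e
  constructor
  · rintro ⟨h1, h2⟩
    induction e with
    | h a b =>
      have h1' : (MPgraph F c r g).Adj a b := h1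
      unfold MPgraph at h1'
      rw [SimpleGraph.sup_adj, SimpleGraph.fromEdgeSet_adj] at h1'
      rcases h1' with h | ⟨⟨j, hj, h⟩, -⟩
      · exact absurd h h2
      · exact ⟨j, hj, h.symm⟩
  · rintro ⟨j, hj, rfl⟩
    exact ⟨hg.adj hj, hg.notMem hcr hj⟩

lemma MPncard_image {V C : Type*} [Finite C] {c : V → C} {r : V}
    {g : C → V × V} (hg : MPValid c r g) :
    (MPedge g '' {j | j ≠ c r}).ncard + 1 = Nat.card C := by
  rw [Set.ncard_image_of_injOn hg.injOn]
  have : {j | j ≠ c r} = ({c r} : Set C)ᶜ := by ext; simp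
  rw [this]
  have := Set.ncard_add_ncard_compl ({c r} : Set C)
  rw [Set.ncard_singleton] at this
  omega

lemma MPforest_card {V C : Type*} [Finite V] [Finite C] {F : SimpleGraph V}
    (hF : F.IsAcyclic) {c : V → C} (hc : Function.Surjective c) (r : V)
    (hcr : ∀ u v, c u = c v ↔ F.Reachable u v) :
    F.edgeSet.ncard + Nat.card C ≤ Nat.card V := by
  haveI : Nonempty V := ⟨r⟩
  obtain ⟨T, hFT, -, hT⟩ :=
    (SimpleGraph.connected_top (V := V)).exists_isTree_le_of_le_of_isAcyclic le_top hF
  obtain ⟨g, hg, hadj⟩ := MPextract F T c hc r hT.connected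
  have h1 := (SimpleGraph.isTree_iff_connected_and_card.1 hT).2
  have h2 : F.edgeSet ∪ MPedge g '' {j | j ≠ c r} ⊆ T.edgeSet := by
    apply Set.union_subset (SimpleGraph.edgeSet_mono hFT)
    rintro _ ⟨j, hj, rfl⟩
    exact hadj j hj
  have h3 := Set.ncard_le_ncard h2 (Set.toFinite _)
  rw [Set.ncard_union_eq ?_ (Set.toFinite _) (Set.toFinite _)] at h3
  · have h4 := MPncard_image hg
    rw [Nat.card_coe_set_eq] at h1
    omega
  · rw [Set.disjoint_right]
    rintro _ ⟨j, hj, rfl⟩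
    exact hg.notMem hcr hj

lemma MPValid.isTree {V C : Type*} [Finite V] [Finite C] {F : SimpleGraph V}
    (hF : F.IsAcyclic) {c : V → C} (hc : Function.Surjective c) {r : V}
    (hcr : ∀ u v, c u = c v ↔ F.Reachable u v) {g : C → V × V} (hg : MPValid c r g) :
    (MPgraph F c r g).IsTree := by
  have hcon := hg.connected hcr
  rw [SimpleGraph.isTree_iff_connected_and_card]
  refine ⟨hcon, le_antisymm ?_ hcon.card_vert_le_card_edgeSet_add_one⟩
  have h1 := MPforest_card hF hc r hcr
  have h2 := MPncard_image hg
  rw [← MPgraph_edgeSet_sdiff hcr hg] at h2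
  have h3 : ((MPgraph F c r g).edgeSet \ F.edgeSet).ncard + F.edgeSet.ncard =
      (MPgraph F c r g).edgeSet.ncard := Set.ncard_sdiff_add_ncard_of_subset
    (SimpleGraph.edgeSet_mono (le_sup_left : F ≤ MPgraph F c r g)) (Set.toFinite _)
  rw [Nat.card_coe_set_eq]
  omega

lemma MPinj {V C : Type*} {F : SimpleGraph V} {c : V → C} {r : V}
    (hcr : ∀ u v, c u = c v ↔ F.Reachable u v) {g g' : C → V × V} (hg : MPValid c r g)
    (hg' : MPValid c r g') (h : MPgraph F c r g = MPgraph F c r g') : g = g' := by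
  have himg : MPedge g '' {j | j ≠ c r} = MPedge g' '' {j | j ≠ c r} := by
    rw [← MPgraph_edgeSet_sdiff hcr hg, ← MPgraph_edgeSet_sdiff hcr hg', h]
  obtain ⟨ht, hh⟩ := hg.flow
  have key : ∀ n j, ht j = n → g j = g' j := by
    intro n
    induction n using Nat.strong_induction_on with
    | _ n ih =>
      intro j hn
      by_cases hj : j = c r
      · rw [hj, hg.root, hg'.root]
      have hm : MPedge g j ∈ MPedge g' '' {j | j ≠ c r} := by
        rw [← himg]; exact ⟨j, hj, rfl⟩
      obtain ⟨i, hi, hij⟩ := hm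
      have hij0 := hij
      simp only [MPedge, Sym2.eq_iff] at hij
      rcases hij with ⟨h1, h2⟩ | ⟨h1, h2⟩
      · have : i = j := by rw [← hg'.fst i hi, h1, hg.fst j hj]
        subst this
        exact (Prod.ext h1 h2).symm
      · exfalso
        have e1 : c (g j).2 = i := by rw [← h1, hg'.fst i hi]
        have hlt : ht i < ht j := by
          have := hh j hj
          simp only [e1] at this
          exact this
        have e2 := ih (ht i) (by omega) i rfl
        have e3 : MPedge g i = MPedge g j := by
          rw [← hij0]; unfold MPedge; rw [e2]
        have := hg.injOn hi hj e3
        subst this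
        omega
  funext j
  exact key _ j rfl

lemma MPsurj {V C : Type*} [Finite V] [Finite C] {F T : SimpleGraph V}
    (hF : F.IsAcyclic) {c : V → C} (hc : Function.Surjective c) (r : V)
    (hcr : ∀ u v, c u = c v ↔ F.Reachable u v) (hT : T.IsTree) (hFT : F ≤ T) :
    ∃ g, MPValid c r g ∧ MPgraph F c r g = T := by
  obtain ⟨g, hg, hadj⟩ := MPextract F T c hc r hT.connected
  refine ⟨g, hg, ?_⟩
  have hle : MPgraph F c r g ≤ T := by
    unfold MPgraph
    refine sup_le hFT ?_
    intro a b hab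
    rw [SimpleGraph.fromEdgeSet_adj] at hab
    obtain ⟨⟨j, hj, h⟩, -⟩ := hab
    have : MPedge g j ∈ T.edgeSet := hadj j hj
    rw [← h] at this
    exact this
  exact le_antisymm hle
    ((SimpleGraph.isTree_iff_minimal_connected.1 hT).2 (hg.connected hcr) hle)

open Classical in
lemma MPsum {V C : Type*} [Fintype V] [Fintype C] {F : SimpleGraph V}
    (hF : F.IsAcyclic) {c : V → C} (hc : Function.Surjective c) (r : V)
    (hcr : ∀ u v, c u = c v ↔ F.Reachable u v) (w : Sym2 V → ℚ) :
    ∑ g : C → V × V with MPValid c r g, ∏ j with j ≠ c r, w (MPedge g j) =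
    ∑ T : SimpleGraph V with T.IsTree ∧ F ≤ T,
      ∏ e with e ∈ T.edgeSet \ F.edgeSet, w e := by
  refine Finset.sum_bij (fun g _ => MPgraph F c r g) ?_ ?_ ?_ ?_
  · intro g hg
    rw [Finset.mem_filter] at hg ⊢
    exact ⟨Finset.mem_univ _, hg.2.isTree hF hc hcr, le_sup_left⟩
  · intro g hg g' hg' h
    rw [Finset.mem_filter] at hg hg'
    exact MPinj hcr hg.2 hg'.2 h
  · intro T hT
    rw [Finset.mem_filter] at hT
    obtain ⟨g, hg, h⟩ := MPsurj hF hc r hcr hT.2.1 hT.2.2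
    exact ⟨g, by simpa using hg, h⟩
  · intro g hg
    rw [Finset.mem_filter] at hg
    have : (Finset.univ.filter (fun e => e ∈ (MPgraph F c r g).edgeSet \ F.edgeSet)) =
        (Finset.univ.filter (fun j => j ≠ c r)).image (MPedge g) := by
      ext e
      rw [Finset.mem_filter, MPgraph_edgeSet_sdiff hcr hg.2]
      simp
    rw [this, Finset.prod_image]
    intro i hi j hj hij
    exact hg.2.injOn (by simpa using hi) (by simpa using hj) hij

/-- Laplacian of the quotient multigraph. -/
def MPlap {V C : Type*} [Fintype V] [DecidableEq C] (c : V → C) (w : Sym2 V → ℚ) :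
    Matrix C C ℚ :=
  fun i j => ∑ p : V × V with c p.1 = i,
    w s(p.1, p.2) * ((if i = j then 1 else 0) - (if c p.2 = j then 1 else 0))

open Classical in
lemma MPlap_det {V C : Type*} [Fintype V] [Fintype C] {F : SimpleGraph V}
    (hF : F.IsAcyclic) {c : V → C} (hc : Function.Surjective c) (r : V)
    (hcr : ∀ u v, c u = c v ↔ F.Reachable u v) (w : Sym2 V → ℚ) :
    ((MPlap c w).updateRow (c r) (Pi.single (c r) 1)).det =
    ∑ T : SimpleGraph V with T.IsTree ∧ F ≤ T,
      ∏ e with e ∈ T.edgeSet \ F.edgeSet, w e := by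
  rw [← MPsum hF hc r hcr w]
  let A : C → Finset (V × V) := fun i =>
    if i = c r then {(r, r)} else Finset.univ.filter (fun p : V × V => c p.1 = i)
  let row : C → V × V → C → ℚ := fun i p j =>
    (if i = c r then 1 else w s(p.1, p.2)) *
      MPmat (c r) (fun _ => c p.2) i j
  have h1 : ((MPlap c w).updateRow (c r) (Pi.single (c r) 1)) =
      (fun i => ∑ p ∈ A i, row i p : Matrix C C ℚ) := by
    funext i j
    rw [Finset.sum_apply]
    by_cases hi : i = c r
    · subst hi
      simp [A, row, MPmat]
    · simp only [A, row, MPmat, hi, if_false, Matrix.updateRow_apply, MPlap]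
      apply Finset.sum_congr rfl
      intro p _
      simp [Pi.single_apply, eq_comm]
  have h2 : Matrix.det (fun i => ∑ p ∈ A i, row i p : Matrix C C ℚ) =
      ∑ g ∈ Fintype.piFinset A, Matrix.det (fun i => row i (g i) : Matrix C C ℚ) :=
    (Matrix.detRowAlternating (n := C) (R := ℚ)).toMultilinearMap.map_sum_finset row A
  rw [h1, h2]
  have h3 : ∀ g : C → V × V, Matrix.det (fun i => row i (g i) : Matrix C C ℚ) =
      (∏ j with j ≠ c r, w (MPedge g j)) * (MPmat (c r) (fun j => c (g j).2)).det := by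
    intro g
    rw [Finset.prod_filter, ← Matrix.det_mul_column]
    congr 1
    funext i j
    simp only [row, MPmat, Matrix.of_apply, MPedge]
    by_cases hi : i = c r <;> simp [hi]
  have hA : ∀ g, MPValid c r g ↔ (g ∈ Fintype.piFinset A ∧ MPFlow (c r) (fun j => c (g j).2)) := by
    intro g
    rw [Fintype.mem_piFinset]
    constructor
    · intro hg
      refine ⟨fun i => ?_, hg.flow⟩
      by_cases hi : i = c r
      · simp [A, hi, hg.root]
      · simp [A, hi, hg.fst i hi]
    · rintro ⟨h, hf⟩
      refine ⟨?_, fun j hj => ?_, hf⟩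
      · have := h (c r)
        simpa [A] using this
      · have := h j
        simpa [A, hj] using this
  have h4 : Finset.univ.filter (fun g : C → V × V => MPValid c r g) =
      (Fintype.piFinset A).filter (fun g => MPFlow (c r) (fun j => c (g j).2)) := by
    ext g
    rw [Finset.mem_filter, Finset.mem_filter, hA]
    simp
  rw [h4, Finset.sum_filter]
  apply Finset.sum_congr rfl
  intro g _
  rw [h3]
  split_ifs with hf
  · rw [MPmat_det_one _ _ hf, mul_one]
  · rw [MPmat_det_zero _ _ hf, mul_zero]

open Classical in
theorem MPtree {V C : Type*} [Fintype V] [Fintype C] [Nonempty V] {F : SimpleGraph V}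
    (hF : F.IsAcyclic) {c : V → C} (hc : Function.Surjective c)
    (hcr : ∀ u v, c u = c v ↔ F.Reachable u v) (w : Sym2 V → ℚ) (x y : C → ℚ) :
    (MPlap c w + Matrix.vecMulVec x y).det = (∑ i, x i) * (∑ i, y i) *
    ∑ T : SimpleGraph V with T.IsTree ∧ F ≤ T,
      ∏ e with e ∈ T.edgeSet \ F.edgeSet, w e := by
  obtain ⟨r⟩ := ‹Nonempty V›
  rw [← MPlap_det hF hc r hcr w]
  apply MPdet_pert
  · intro i
    unfold MPlap
    rw [Finset.sum_comm]
    apply Finset.sum_eq_zero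
    intro p _
    rw [← Finset.mul_sum]
    simp
  · intro j
    unfold MPlap
    have : ∀ i, ∑ p : V × V with c p.1 = i,
        w s(p.1, p.2) * ((if i = j then (1:ℚ) else 0) - (if c p.2 = j then 1 else 0)) =
        ∑ p : V × V with c p.1 = i,
        w s(p.1, p.2) * ((if c p.1 = j then 1 else 0) - (if c p.2 = j then 1 else 0)) := by
      intro i
      apply Finset.sum_congr rfl
      intro p hp
      rw [Finset.mem_filter] at hp
      rw [hp.2]
    rw [Finset.sum_congr rfl (fun i _ => this i),
      Finset.sum_fiberwise Finset.univ (fun p : V × V => c p.1)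
      (fun p => w s(p.1, p.2) * ((if c p.1 = j then (1 : ℚ) else 0) -
        (if c p.2 = j then 1 else 0)))]
    simp only [mul_sub, Finset.sum_sub_distrib]
    rw [sub_eq_zero]
    refine Fintype.sum_equiv (Equiv.prodComm V V) _ _ ?_
    rintro ⟨a, b⟩
    change w s(a, b) * _ = w s(b, a) * _
    rw [Sym2.eq_swap]
    rfl

lemma MPdetM {d : ℕ} :
    (Matrix.of (fun p q : Fin d => if p = q then (0 : ℚ) else 1)).det = (-1) ^ d * (1 - (d : ℚ)) := by
  have h : (Matrix.of (fun p q : Fin d => if p = q then (0 : ℚ) else 1)) =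
      -(1 - Matrix.replicateCol Unit (fun _ => (1:ℚ)) * Matrix.replicateRow Unit (fun _ => (1:ℚ))) := by
    ext p q
    by_cases h : p = q <;> simp [h, Matrix.mul_apply, Matrix.one_apply]
  rw [h, Matrix.det_neg, Matrix.det_one_sub_mul_comm, Matrix.det_unique]
  simp [Matrix.mul_apply]

lemma MPalgebra {d : ℕ} (hd : 2 ≤ d) {C : Type*} [Fintype C] [DecidableEq C]
    (B : Fin d → C → ℚ) (N ν : Fin d → ℚ) (α : C → ℚ) (a : Fin d → Fin d → ℚ)
    (hN : ∀ i, N i = ∑ k, ν k - ν i)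
    (hα : ∀ j, α j = ∑ i, N i * B i j) (hα0 : ∀ j, α j ≠ 0)
    (hν : ∀ i, ν i = ∑ j, B i j)
    (ha : ∀ p q, a p q = ∑ j, B p j * B q j / α j)
    (L : Matrix C C ℚ) (K : Matrix (Fin d) (Fin d) ℚ)
    (hL : ∀ i j, L i j = (if i = j then α i else 0) -
      ∑ p, ∑ q, (if p = q then 0 else 1) * B p i * B q j)
    (hK : ∀ p q, K p q = (if p = q then ((d : ℚ) - 1) * N p ^ 2 else 0) -
      N p * N q * (1 - ((d : ℚ) - 1) * a p q)) :
    (K + Matrix.vecMulVec (fun p => -((d : ℚ) - 1) * (N p * ν p)) (fun p => N p * ν p)).det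
      * ∏ j, α j
      = -((d : ℚ) - 1) ^ (d - 1) * (∏ i, N i ^ 2) * (L + Matrix.vecMulVec α α).det := by
  have hd1 : (d : ℚ) - 1 ≠ 0 := by
    have : (2 : ℚ) ≤ d := by exact_mod_cast hd
    intro h
    linarith
  let M : Matrix (Fin d) (Fin d) ℚ := Matrix.of (fun p q : Fin d => if p = q then (0 : ℚ) else 1)
  let Bm : Matrix (Fin d) C ℚ := Matrix.of B
  let am : Matrix (Fin d) (Fin d) ℚ := Matrix.of a
  let R : Matrix (Fin d) (Fin d) ℚ := M - Matrix.vecMulVec N N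
  let X : Matrix (Fin d) (Fin d) ℚ := 1 - M * am + Matrix.vecMulVec N ν
  have haN : ∀ p, ∑ q, N q * a q p = ν p := by
    intro p
    simp only [ha, Finset.mul_sum]
    rw [Finset.sum_comm, hν]
    apply Finset.sum_congr rfl
    intro j _
    have : ∑ q, N q * (B q j * B p j / α j) = (∑ q, N q * B q j) * (B p j / α j) := by
      rw [Finset.sum_mul]
      exact Finset.sum_congr rfl (fun q _ => by ring)
    rw [this, ← hα]
    field_simp [hα0 j]
  have hMsum : ∀ (f : Fin d → ℚ) p, ∑ q, (if p = q then (0:ℚ) else 1) * f q = ∑ q, f q - f p := by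
    intro f p
    have : ∀ q, (if p = q then (0:ℚ) else 1) * f q = f q - (if p = q then f q else 0) := by
      intro q; split_ifs <;> simp
    simp [this, Finset.sum_sub_distrib]
  -- first determinant
  have e1 : L + Matrix.vecMulVec α α =
      Matrix.diagonal α * (1 - (Matrix.diagonal (fun j => (α j)⁻¹) * Bm.transpose) * (R * Bm)) := by
    rw [Matrix.mul_sub, mul_one, Matrix.mul_assoc (Matrix.diagonal (fun j => (α j)⁻¹)),
      ← Matrix.mul_assoc (Matrix.diagonal α), Matrix.diagonal_mul_diagonal]
    have : (fun i => α i * (α i)⁻¹) = fun _ => 1 := by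
      funext i; exact mul_inv_cancel₀ (hα0 i)
    rw [this, Matrix.diagonal_one, Matrix.one_mul]
    ext i j
    have h2 : α i * α j = ∑ p, ∑ q, N p * N q * B p i * B q j := by
      rw [hα i, hα j, Finset.sum_mul_sum]
      exact Finset.sum_congr rfl (fun p _ => Finset.sum_congr rfl (fun q _ => by ring))
    have h3 : (Bm.transpose * (R * Bm)) i j =
        ∑ p, ∑ q, ((if p = q then 0 else 1) * B p i * B q j - N p * N q * B p i * B q j) := by
      simp only [Matrix.mul_apply, Finset.mul_sum, R, Bm, M, Matrix.transpose_apply, Matrix.of_apply,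
        Matrix.sub_apply, Matrix.vecMulVec_apply]
      exact Finset.sum_congr rfl (fun p _ => Finset.sum_congr rfl (fun q _ => by ring))
    rw [Matrix.add_apply, Matrix.sub_apply, h3, hL, Matrix.vecMulVec_apply, h2,
      Matrix.diagonal_apply]
    simp only [Finset.sum_sub_distrib]
    ring
  have e2 : (R * Bm) * (Matrix.diagonal (fun j => (α j)⁻¹) * Bm.transpose) = R * am := by
    rw [Matrix.mul_assoc]
    congr 1
    ext p q
    simp only [Matrix.mul_apply, Bm, am, Matrix.of_apply, Matrix.diagonal_apply,
      Matrix.transpose_apply, ha]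
    apply Finset.sum_congr rfl
    intro j _
    simp
    ring
  have e3 : 1 - R * am = X := by
    have : Matrix.vecMulVec N N * am = Matrix.vecMulVec N ν := by
      ext p q
      simp only [Matrix.mul_apply, Matrix.vecMulVec_apply, am, Matrix.of_apply, ← haN q,
        Finset.mul_sum]
      exact Finset.sum_congr rfl (fun q _ => by ring)
    simp only [R, X, Matrix.sub_mul, this]
    abel
  have detL : (L + Matrix.vecMulVec α α).det = (∏ j, α j) * X.det := by
    rw [e1, Matrix.det_mul, Matrix.det_diagonal, Matrix.det_one_sub_mul_comm, e2, e3]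
  -- second determinant
  let K2 : Matrix (Fin d) (Fin d) ℚ := Matrix.of fun p q =>
    (if p = q then ((d : ℚ) - 1) * N p else 0) - N q * (1 - ((d : ℚ) - 1) * a p q)
      - ((d : ℚ) - 1) * ν p * ν q * N q
  have f1 : K + Matrix.vecMulVec (fun p => -((d : ℚ) - 1) * (N p * ν p)) (fun p => N p * ν p) =
      Matrix.diagonal N * K2 := by
    ext p q
    rw [Matrix.add_apply, Matrix.diagonal_mul, hK, Matrix.vecMulVec_apply]
    simp only [K2, Matrix.of_apply]
    split_ifs <;> ring
  have hNsum : ∑ k, ν k = N ⟨0, by omega⟩ + ν ⟨0, by omega⟩ := by rw [hN]; ring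
  have f2 : M * K2 = (-((d : ℚ) - 1)) • (X * Matrix.diagonal N) := by
    ext p q
    have l1 : (M * K2) p q = ∑ k, K2 k q - K2 p q := by
      rw [Matrix.mul_apply]
      exact hMsum (fun k => K2 k q) p
    have l2 : (M * am) p q = ∑ k, a k q - a p q := by
      rw [Matrix.mul_apply]
      exact hMsum (fun k => a k q) p
    have l3 : ∑ k, K2 k q = ((d : ℚ) - 1) * N q - N q * ((d : ℚ) - ((d : ℚ) - 1) * ∑ k, a k q)
        - ((d : ℚ) - 1) * (∑ k, ν k) * ν q * N q := by
      simp only [K2, Matrix.of_apply, Finset.sum_sub_distrib, ← Finset.mul_sum, ← Finset.sum_mul]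
      simp
    rw [l1, l3, Matrix.smul_apply, Matrix.mul_diagonal]
    simp only [X, Matrix.add_apply, Matrix.sub_apply, l2, Matrix.vecMulVec_apply, Matrix.one_apply,
      K2, Matrix.of_apply, smul_eq_mul]
    have := hN p
    have hs : ∑ k, ν k = N p + ν p := by rw [hN p]; ring
    rw [hs]
    by_cases h : p = q
    · subst h
      simp only [if_true]
      ring
    · simp only [h, if_false]
      ring
  have f3 := congrArg Matrix.det f2
  rw [Matrix.det_mul, Matrix.det_smul, Matrix.det_mul, Matrix.det_diagonal, Fintype.card_fin,
    show M.det = _ from MPdetM, neg_pow ((d:ℚ) - 1)] at f3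
  have f4 : K2.det = -((d : ℚ) - 1) ^ (d - 1) * (X.det * ∏ i, N i) := by
    have hs : ((-1 : ℚ)) ^ d ≠ 0 := pow_ne_zero _ (by norm_num)
    have hp : ((d : ℚ) - 1) ^ d = ((d : ℚ) - 1) * ((d : ℚ) - 1) ^ (d - 1) := by
      rw [← pow_succ']; congr 1; omega
    rw [hp] at f3
    have : ((-1 : ℚ) ^ d * ((d : ℚ) - 1)) * K2.det =
      ((-1 : ℚ) ^ d * ((d : ℚ) - 1)) * (-((d : ℚ) - 1) ^ (d - 1) * (X.det * ∏ i, N i)) := by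
      linear_combination -f3
    exact mul_left_cancel₀ (mul_ne_zero hs hd1) this
  rw [f1, Matrix.det_mul, Matrix.det_diagonal, f4, detL, Finset.prod_pow]
  ring

open Classical in
lemma MPcount {V : Type*} [Fintype V] (F G : SimpleGraph V) (hFG : F ≤ G) :
    (Nat.card {T : SimpleGraph V // F ≤ T ∧ T ≤ G ∧ T.IsTree} : ℚ) =
    ∑ T : SimpleGraph V with T.IsTree ∧ F ≤ T,
      ∏ e with e ∈ T.edgeSet \ F.edgeSet, (if e ∈ G.edgeSet then (1 : ℚ) else 0) := by
  rw [Nat.card_eq_fintype_card, Fintype.card_subtype, Finset.card_filter, Finset.sum_filter,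
    Nat.cast_sum]
  apply Finset.sum_congr rfl
  intro T _
  rw [Finset.prod_boole]
  have key : F ≤ T → ((∀ e ∈ Finset.univ.filter (fun e => e ∈ T.edgeSet \ F.edgeSet),
      e ∈ G.edgeSet) ↔ T ≤ G) := by
    intro hFT
    constructor
    · intro h
      rw [← SimpleGraph.edgeSet_subset_edgeSet]
      intro e he
      by_cases heF : e ∈ F.edgeSet
      · exact SimpleGraph.edgeSet_mono hFG heF
      · exact h e (by rw [Finset.mem_filter]; exact ⟨Finset.mem_univ _, he, heF⟩)
    · intro h e he
      rw [Finset.mem_filter] at he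
      exact SimpleGraph.edgeSet_mono h he.2.1
  by_cases h1 : F ≤ T
  · simp only [key h1]
    by_cases h2 : T.IsTree <;> by_cases h3 : T ≤ G <;> simp [h1, h2, h3]
  · simp [h1]

def MPpairw {d : ℕ} (f : Fin d → Fin d → ℚ) (hf : ∀ p q, f p q = f q p) : Sym2 (Fin d) → ℚ :=
  Sym2.lift ⟨f, hf⟩

open Classical in
lemma MPpairs {d : ℕ} (f : Fin d → Fin d → ℚ) (hf : ∀ p q, f p q = f q p)
    (T : SimpleGraph (Fin d)) :
    ∏ pq ∈ Finset.univ.filter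
        (fun pq : Fin d × Fin d => pq.1 < pq.2 ∧ T.Adj pq.1 pq.2), f pq.1 pq.2 =
    ∏ e with e ∈ T.edgeSet \ (⊥ : SimpleGraph (Fin d)).edgeSet, MPpairw f hf e := by
  refine Finset.prod_bij (fun pq _ => s(pq.1, pq.2)) ?_ ?_ ?_ ?_
  · intro pq h
    rw [Finset.mem_filter] at h ⊢
    refine ⟨Finset.mem_univ _, h.2.2, ?_⟩
    simp
  · rintro ⟨a, b⟩ h ⟨a', b'⟩ h' he
    rw [Finset.mem_filter] at h h'
    simp only [Sym2.eq_iff] at he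
    rcases he with ⟨rfl, rfl⟩ | ⟨rfl, rfl⟩
    · rfl
    · exact absurd h.2.1 (not_lt_of_gt h'.2.1)
  · intro e he
    rw [Finset.mem_filter] at he
    obtain ⟨-, he, -⟩ := he
    induction e with
    | h a b =>
      have hab : T.Adj a b := he
      rcases lt_trichotomy a b with h | h | h
      · exact ⟨(a, b), by simp [h, hab], rfl⟩
      · exact absurd h hab.ne
      · exact ⟨(b, a), by simp [h, hab.symm], Sym2.eq_swap⟩
  · intro pq _
    rfl

open Classical in
lemma MPlap_id {d : ℕ} (f : Fin d → Fin d → ℚ) (hf : ∀ p q, f p q = f q p) (p q : Fin d) :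
    MPlap (id : Fin d → Fin d) (MPpairw f hf) p q =
      (if p = q then ∑ k, f p k else 0) - f p q := by
  unfold MPlap
  rw [Finset.sum_filter, Fintype.sum_prod_type]
  have : ∀ x y : Fin d, (if id (x, y).1 = p then MPpairw f hf s((x, y).1, (x, y).2) *
      ((if p = q then 1 else 0) - if id (x, y).2 = q then 1 else 0) else 0) =
      if x = p then ((if p = q then f x y else 0) - (if y = q then f x y else 0)) else 0 := by
    intro x y
    simp only [id, MPpairw, Sym2.lift_mk]
    split_ifs <;> simp
  simp only [this]
  rw [Finset.sum_comm]
  simp only [Finset.sum_ite_eq', Finset.mem_univ, if_true, Finset.sum_sub_distrib]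
  split_ifs <;> simp

lemma MPsum_sigma {d : ℕ} (nn : Fin d → ℕ) (f : Fin d → ℚ) :
    ∑ v : (Σ i : Fin d, Fin (nn i)), f v.1 = ∑ i, nn i * f i := by
  rw [Fintype.sum_sigma]
  simp

open Classical in
lemma MPNij {d : ℕ} (nn : Fin d → ℕ)
    (F : SimpleGraph (Σ i : Fin d, Fin (nn i))) (i : Fin d) (j : F.ConnectedComponent) :
    (multipartiteNij nn F i j : ℚ) = ∑ v, if F.connectedComponentMk v = j then
      (if v.1 = i then 1 else 0) else 0 := by
  unfold multipartiteNij
  rw [Nat.card_eq_fintype_card, Fintype.card_subtype, Finset.card_filter, Nat.cast_sum]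
  apply Finset.sum_congr rfl
  intro v _
  by_cases h1 : v.1 = i <;> by_cases h2 : F.connectedComponentMk v = j <;> simp [h1, h2]

open Classical in
lemma MPfib {d : ℕ} (nn : Fin d → ℕ)
    (F : SimpleGraph (Σ i : Fin d, Fin (nn i))) (f : Fin d → ℚ) (j : F.ConnectedComponent) :
    ∑ i, f i * (multipartiteNij nn F i j : ℚ) =
      ∑ v, if F.connectedComponentMk v = j then f v.1 else 0 := by
  simp only [MPNij, Finset.mul_sum]
  rw [Finset.sum_comm]
  apply Finset.sum_congr rfl
  intro v _
  split_ifs <;> simp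

open Classical in
lemma MPlap_F {d : ℕ} (nn : Fin d → ℕ)
    (F : SimpleGraph (Σ i : Fin d, Fin (nn i))) (i j : F.ConnectedComponent) :
    MPlap F.connectedComponentMk (fun e => if e ∈ (SimpleGraph.completeMultipartiteGraph
      (fun i => Fin (nn i))).edgeSet then (1 : ℚ) else 0) i j =
    (if i = j then multipartiteAlpha nn F i else 0) -
      ∑ p, ∑ q, (if p = q then 0 else 1) * (multipartiteNij nn F p i : ℚ)
        * (multipartiteNij nn F q j : ℚ) := by
  have hw : ∀ u v : (Σ i : Fin d, Fin (nn i)),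
      (if s(u, v) ∈ (SimpleGraph.completeMultipartiteGraph
      (fun i => Fin (nn i))).edgeSet then (1 : ℚ) else 0) = if u.1 = v.1 then 0 else 1 := by
    intro u v
    simp only [SimpleGraph.mem_edgeSet]
    by_cases h : u.1 = v.1 <;> simp [SimpleGraph.completeMultipartiteGraph, h]
  unfold MPlap
  rw [Finset.sum_filter, Fintype.sum_prod_type]
  have h1 : ∀ u v : (Σ i : Fin d, Fin (nn i)), (if F.connectedComponentMk (u, v).1 = i then
      (if s((u, v).1, (u, v).2) ∈ (SimpleGraph.completeMultipartiteGraph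
      (fun i => Fin (nn i))).edgeSet then (1 : ℚ) else 0) *
      ((if i = j then 1 else 0) - if F.connectedComponentMk (u, v).2 = j then 1 else 0) else 0) =
      (if i = j then (if F.connectedComponentMk u = i then
        (if u.1 = v.1 then 0 else 1) else 0) else 0) -
      (if F.connectedComponentMk u = i then (if F.connectedComponentMk v = j then
        (if u.1 = v.1 then 0 else 1) else 0) else 0) := by
    intro u v
    simp only [hw]
    split_ifs <;> simp
  simp only [h1, Finset.sum_sub_distrib]
  congr 1
  · split_ifs with hij
    · unfold multipartiteAlpha
      rw [MPfib nn F (fun k => ((∑ i', nn i' : ℕ) - (nn k : ℚ))) i]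
      apply Finset.sum_congr rfl
      intro u _
      split_ifs with hu
      · rw [MPsum_sigma nn (fun k => if u.1 = k then 0 else 1)]
        have : ∀ k, (nn k : ℚ) * (if u.1 = k then 0 else 1) =
            nn k - if u.1 = k then (nn k : ℚ) else 0 := by
          intro k; split_ifs <;> simp
        simp [this, Finset.sum_sub_distrib]
      · simp
    · simp
  · have : ∀ p, ∑ q, (if p = q then 0 else 1) * (multipartiteNij nn F p i : ℚ)
        * (multipartiteNij nn F q j : ℚ) =
        (∑ v, if F.connectedComponentMk v = j then (if p = v.1 then 0 else 1) else 0) *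
          (multipartiteNij nn F p i : ℚ) := by
      intro p
      rw [← MPfib nn F (fun q => if p = q then 0 else 1) j, Finset.sum_mul]
      exact Finset.sum_congr rfl (fun q _ => by ring)
    simp only [this]
    rw [MPfib nn F (fun p => ∑ v, if F.connectedComponentMk v = j then
      (if p = v.1 then 0 else 1) else 0) i]
    apply Finset.sum_congr rfl
    intro u _
    split_ifs <;> simp

end

open Classical in
/-- Let `K_{n₁,…,n_d}` (`d ≥ 2`) be the complete multipartite graph
with parts of sizes `n₁, …, n_d`, `n = n₁ + ⋯ + n_d`, and let `F` be a spanning forest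
of it with components `T₁, …, T_k`, where `n_{ij}` is the number of vertices of `T_j`
in the `i`-th part.  With `α_j = Σ_i (n − n_i) n_{ij}` and
`a_{pq} = Σ_j n_{pj} n_{qj} / α_j`, the number of spanning trees of `K_{n₁,…,n_d}`
containing `F` equals
`(∏_j α_j) / ((d−1)^(d−2) ∏_i (n − n_i)²)` times the sum over all spanning trees `T` of
the complete graph `K_d` of the product over the edges `v_p v_q` of `T` of
`(n − n_p)(n − n_q)(1 − (d−1) a_{pq})`. -/
theorem multipartite_forest_extension_count (d : ℕ) (hd : 2 ≤ d)
    (nn : Fin d → ℕ) (hnn : ∀ i, 1 ≤ nn i)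
    (F : SimpleGraph (Σ i : Fin d, Fin (nn i)))
    (hFsub : F ≤ SimpleGraph.completeMultipartiteGraph (fun i => Fin (nn i)))
    (hFacyclic : F.IsAcyclic) :
    (Nat.card {T : SimpleGraph (Σ i : Fin d, Fin (nn i)) //
        F ≤ T ∧ T ≤ SimpleGraph.completeMultipartiteGraph (fun i => Fin (nn i)) ∧
          T.IsTree} : ℚ) =
      (∏ᶠ j : F.ConnectedComponent, multipartiteAlpha nn F j) /
          (((d : ℚ) - 1) ^ (d - 2) *
            ∏ i : Fin d, ((∑ i', nn i' : ℕ) - (nn i : ℚ)) ^ 2) *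
        ∑ᶠ T : {T : SimpleGraph (Fin d) // T.IsTree},
          ∏ pq ∈ Finset.univ.filter
              (fun pq : Fin d × Fin d => pq.1 < pq.2 ∧ (T : SimpleGraph (Fin d)).Adj pq.1 pq.2),
            ((∑ i', nn i' : ℕ) - (nn pq.1 : ℚ)) * ((∑ i', nn i' : ℕ) - (nn pq.2 : ℚ)) *
              (1 - ((d : ℚ) - 1) * multipartiteA nn F pq.1 pq.2) := by
  classical
  haveI : Fintype F.ConnectedComponent := Fintype.ofFinite _
  have hNpos : ∀ i, 0 < ((∑ i', nn i' : ℕ) - (nn i : ℚ)) := by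
    intro i
    obtain ⟨k, hk⟩ : ∃ k : Fin d, k ≠ i := by
      haveI : Nontrivial (Fin d) := Fin.nontrivial_iff_two_le.2 hd
      exact exists_ne i
    have h1 : nn i + nn k ≤ ∑ i', nn i' := by
      rw [← Finset.sum_pair hk.symm]
      exact Finset.sum_le_sum_of_subset (Finset.subset_univ _)
    have h2 := hnn k
    have h3 : nn i < ∑ i', nn i' := by omega
    have h4 : (nn i : ℚ) < ((∑ i', nn i' : ℕ) : ℚ) := by exact_mod_cast h3
    linarith
  have hαpos : ∀ j, 0 < multipartiteAlpha nn F j := by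
    intro j
    unfold multipartiteAlpha
    rw [MPfib nn F (fun k => ((∑ i', nn i' : ℕ) - (nn k : ℚ))) j]
    obtain ⟨u, hu⟩ := Quot.exists_rep j
    refine Finset.sum_pos' (fun v _ => ?_) ⟨u, Finset.mem_univ _, ?_⟩
    · split_ifs
      · exact (hNpos _).le
      · exact le_refl _
    · have hu' : F.connectedComponentMk u = j := hu
      rw [if_pos hu']
      exact hNpos _
  have hν : ∀ i, (nn i : ℚ) = ∑ j, (multipartiteNij nn F i j : ℚ) := by
    intro i
    simp only [MPNij]
    rw [Finset.sum_comm]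
    simp only [Finset.sum_ite_eq, Finset.mem_univ, if_true]
    rw [MPsum_sigma nn (fun k => if k = i then 1 else 0)]
    simp
  haveI : Nonempty (Σ i : Fin d, Fin (nn i)) :=
    ⟨⟨⟨0, by omega⟩, ⟨0, hnn _⟩⟩⟩
  haveI : Nonempty (Fin d) := ⟨⟨0, by omega⟩⟩
  set N : Fin d → ℚ := fun i => ((∑ i', nn i' : ℕ) - (nn i : ℚ)) with hNdef
  set α := multipartiteAlpha nn F with hαdef
  set a := multipartiteA nn F with hadef
  have hα : ∀ j, α j = ∑ i, N i * (multipartiteNij nn F i j : ℚ) := fun j => rfl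
  have ha : ∀ p q, a p q = ∑ j, (multipartiteNij nn F p j : ℚ) * (multipartiteNij nn F q j : ℚ)
      / α j := by
    intro p q
    rw [hadef]
    unfold multipartiteA
    rw [finsum_eq_sum_of_fintype]
  have hasymm : ∀ p q, a p q = a q p := by
    intro p q
    rw [ha, ha]
    exact Finset.sum_congr rfl (fun j _ => by ring)
  let f : Fin d → Fin d → ℚ := fun p q => N p * N q * (1 - ((d : ℚ) - 1) * a p q)
  have hf : ∀ p q, f p q = f q p := by
    intro p q
    simp only [f, hasymm p q]
    ring
  have hNs : ∑ q, N q = ((d : ℚ) - 1) * ∑ i', (nn i' : ℚ) := by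
    simp only [hNdef, Finset.sum_sub_distrib]
    simp
    ring
  have haN : ∀ p, ∑ q, N q * a p q = nn p := by
    intro p
    simp only [ha, Finset.mul_sum]
    rw [Finset.sum_comm, hν]
    apply Finset.sum_congr rfl
    intro j _
    have : ∑ q, N q * ((multipartiteNij nn F p j : ℚ) * (multipartiteNij nn F q j : ℚ) / α j)
        = (∑ q, N q * (multipartiteNij nn F q j : ℚ)) * ((multipartiteNij nn F p j : ℚ) / α j) := by
      rw [Finset.sum_mul]
      exact Finset.sum_congr rfl (fun q _ => by ring)
    rw [this, ← hα]
    field_simp [(hαpos j).ne']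
  have hfs : ∀ p, ∑ q, f p q = ((d : ℚ) - 1) * N p ^ 2 := by
    intro p
    have h1 : ∑ q, f p q = N p * (∑ q, N q - ((d : ℚ) - 1) * ∑ q, N q * a p q) := by
      rw [Finset.mul_sum, ← Finset.sum_sub_distrib, Finset.mul_sum]
      exact Finset.sum_congr rfl (fun q _ => by simp only [f]; ring)
    rw [h1, hNs, haN]
    simp only [hNdef]
    push_cast
    ring
  have hS : ∑ j, α j = ∑ i, N i * (nn i : ℚ) := by
    simp only [hα]
    rw [Finset.sum_comm]
    apply Finset.sum_congr rfl
    intro i _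
    rw [hν i, Finset.mul_sum]
  have hSpos : 0 < ∑ i, N i * (nn i : ℚ) := by
    apply Finset.sum_pos
    · intro i _
      have h1 : (0 : ℚ) < nn i := by exact_mod_cast hnn i
      exact mul_pos (hNpos i) h1
    · exact Finset.univ_nonempty
  have key := MPalgebra hd (fun i j => (multipartiteNij nn F i j : ℚ)) N (fun i => (nn i : ℚ)) α a
    (fun i => by simp [hNdef]) hα (fun j => (hαpos j).ne') hν ha
    (MPlap F.connectedComponentMk (fun e => if e ∈ (SimpleGraph.completeMultipartiteGraph
      (fun i => Fin (nn i))).edgeSet then (1 : ℚ) else 0))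
    (MPlap (id : Fin d → Fin d) (MPpairw f hf))
    (fun i j => by convert MPlap_F nn F i j)
    (fun p q => by
      rw [← hfs p]
      convert MPlap_id f hf p q)
  have t1 : (MPlap F.connectedComponentMk (fun e => if e ∈ (SimpleGraph.completeMultipartiteGraph
      (fun i => Fin (nn i))).edgeSet then (1 : ℚ) else 0) + Matrix.vecMulVec α α).det =
      (∑ i, α i) * (∑ i, α i) * (Nat.card {T : SimpleGraph (Σ i : Fin d, Fin (nn i)) //
        F ≤ T ∧ T ≤ SimpleGraph.completeMultipartiteGraph (fun i => Fin (nn i)) ∧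
          T.IsTree} : ℚ) := by
    rw [MPcount F _ hFsub]
    convert MPtree hFacyclic (c := F.connectedComponentMk) Quot.mk_surjective
      (fun u v => SimpleGraph.ConnectedComponent.eq)
      (fun e => if e ∈ (SimpleGraph.completeMultipartiteGraph
        (fun i => Fin (nn i))).edgeSet then (1 : ℚ) else 0) α α
  have t3 : ∑ T : SimpleGraph (Fin d) with T.IsTree ∧ ⊥ ≤ T,
      ∏ e with e ∈ T.edgeSet \ (⊥ : SimpleGraph (Fin d)).edgeSet, MPpairw f hf e =
      ∑ᶠ T : {T : SimpleGraph (Fin d) // T.IsTree},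
          ∏ pq ∈ Finset.univ.filter
              (fun pq : Fin d × Fin d => pq.1 < pq.2 ∧ (T : SimpleGraph (Fin d)).Adj pq.1 pq.2),
            f pq.1 pq.2 := by
    rw [finsum_eq_sum_of_fintype]
    simp only [MPpairs f hf]
    apply Finset.sum_subtype _ (fun T => by simp)
      (fun T : SimpleGraph (Fin d) => ∏ e with e ∈ T.edgeSet \ (⊥ : SimpleGraph (Fin d)).edgeSet,
        MPpairw f hf e)
  have t2 : (MPlap (id : Fin d → Fin d) (MPpairw f hf) + Matrix.vecMulVec
      (fun p => -((d : ℚ) - 1) * (N p * nn p)) (fun p => N p * nn p)).det =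
      (∑ p, -((d : ℚ) - 1) * (N p * nn p)) * (∑ p, N p * nn p) *
      ∑ᶠ T : {T : SimpleGraph (Fin d) // T.IsTree},
          ∏ pq ∈ Finset.univ.filter
              (fun pq : Fin d × Fin d => pq.1 < pq.2 ∧ (T : SimpleGraph (Fin d)).Adj pq.1 pq.2),
            f pq.1 pq.2 := by
    rw [← t3]
    convert MPtree (SimpleGraph.isAcyclic_bot (V := Fin d)) (c := id) Function.surjective_id
      (fun u v => by simp) (MPpairw f hf)
      (fun p => -((d : ℚ) - 1) * (N p * nn p)) (fun p => N p * nn p)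
  rw [hS] at t1
  rw [← Finset.mul_sum] at t2
  set S := ∑ i, N i * (nn i : ℚ) with hSdef
  set τ := ∑ᶠ T : {T : SimpleGraph (Fin d) // T.IsTree},
          ∏ pq ∈ Finset.univ.filter
              (fun pq : Fin d × Fin d => pq.1 < pq.2 ∧ (T : SimpleGraph (Fin d)).Adj pq.1 pq.2),
            f pq.1 pq.2 with hτ
  have key2 : -((d : ℚ) - 1) * S * S * τ * ∏ j, α j = -((d : ℚ) - 1) ^ (d - 1) *
      (∏ i, N i ^ 2) * (S * S * (Nat.card {T : SimpleGraph (Σ i : Fin d, Fin (nn i)) //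
        F ≤ T ∧ T ≤ SimpleGraph.completeMultipartiteGraph (fun i => Fin (nn i)) ∧
          T.IsTree} : ℚ)) := by
    rw [← t1]
    refine Eq.trans (congrArg (· * ∏ j, α j) ?_) key
    rw [← t2]
  rw [finprod_eq_prod_of_fintype]
  change _ = (∏ j, α j) / (((d : ℚ) - 1) ^ (d - 2) * ∏ i, N i ^ 2) * τ
  have hd1 : (d : ℚ) - 1 ≠ 0 := by
    have : (2 : ℚ) ≤ d := by exact_mod_cast hd
    intro h
    linarith
  have hP : ∏ i, N i ^ 2 ≠ 0 :=
    Finset.prod_ne_zero_iff.2 (fun i _ => pow_ne_zero _ (hNpos i).ne')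
  have hp : ((d : ℚ) - 1) ^ (d - 1) = ((d : ℚ) - 1) * ((d : ℚ) - 1) ^ (d - 2) := by
    rw [← pow_succ']; congr 1; omega
  rw [hp] at key2
  rw [div_mul_eq_mul_div, eq_div_iff (mul_ne_zero (pow_ne_zero _ hd1) hP)]
  apply mul_left_cancel₀ (mul_ne_zero hd1 (mul_ne_zero hSpos.ne' hSpos.ne'))
  linear_combination key2
end

section
/- Fix d ≥ 2 and positive reals c_1,…,c_d with c_1 + ⋯ + c_d = 1. Consider complete multipartite graphs K_{n_1,…,n_d} with part sizes n_1,…,n_d depending on n = n_1 + ⋯ + n_d such that n_i/n → c_i for each i as n → ∞. Let X be the number of common edges of two spanning trees of K_{n_1,…,n_d} chosen independently and uniformly at random. Then for every fixed nonnegative integer m, P(X = m) → e^{−λ} λ^m / m! as n → ∞, where λ = Σ_{1 ≤ i < j ≤ d} c_i c_j (2 − c_i − c_j)² / ((1−c_i)² (1−c_j)²); that is, X converges in distribution to a Poisson distribution with expected value λ. -/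
/-- `P(X = m)` for the complete multipartite graph with parts `Fin (nn i)`: the number
of ordered pairs `(T₁, T₂)` of spanning trees with exactly `m` common edges, divided by
the square of the total number of spanning trees. -/
noncomputable def multipartiteProbCommonEdgesEq {d : ℕ} (nn : Fin d → ℕ) (m : ℕ) : ℝ :=
  (Nat.card {q : SimpleGraph (Σ i : Fin d, Fin (nn i)) ×
      SimpleGraph (Σ i : Fin d, Fin (nn i)) //
        q.1 ≤ SimpleGraph.completeMultipartiteGraph (fun i => Fin (nn i)) ∧
        q.2 ≤ SimpleGraph.completeMultipartiteGraph (fun i => Fin (nn i)) ∧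
        q.1.IsTree ∧ q.2.IsTree ∧ Nat.card (q.1 ⊓ q.2).edgeSet = m} : ℝ) /
    (Nat.card {T : SimpleGraph (Σ i : Fin d, Fin (nn i)) //
        T ≤ SimpleGraph.completeMultipartiteGraph (fun i => Fin (nn i)) ∧
          T.IsTree} : ℝ) ^ 2



open Finset in
lemma cbAux {V E R : Type*} [Fintype V] [DecidableEq V] [Fintype E] [CommRing R]
    (w : E → R) (b : E → V → R) :
    Matrix.det (Matrix.of fun u v => ∑ e, w e * b e u * b e v) =
      ∑ f : V → E, (∏ v, w (f v)) * (∏ v, b (f v) v) *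
        Matrix.det (Matrix.of fun u v => b (f u) v) := by
  classical
  have h1 : (Matrix.of fun u v => ∑ e, w e * b e u * b e v) =
      (fun u => ∑ e, (w e * b e u) • b e) := by
    ext u v
    simp [Finset.sum_apply]
  have h2 := (Matrix.detRowAlternating (n := V) (R := R)).toMultilinearMap.map_sum
    (fun (u : V) (e : E) => (w e * b e u) • b e)
  rw [h1]
  change (Matrix.detRowAlternating (n := V) (R := R)).toMultilinearMap _ = _
  rw [h2]
  refine Finset.sum_congr rfl fun f _ => ?_
  rw [MultilinearMap.map_smul_univ, Finset.prod_mul_distrib]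
  rfl

open Finset in
lemma cauchyBinetFun {V E R : Type*} [Fintype V] [DecidableEq V] [Fintype E] [CommRing R]
    (w : E → R) (b : E → V → R) :
    ((Fintype.card V).factorial : R) * Matrix.det (Matrix.of fun u v => ∑ e, w e * b e u * b e v) =
      ∑ f : V → E, (∏ v, w (f v)) * Matrix.det (Matrix.of fun u v => b (f u) v) ^ 2 := by
  classical
  have key : ∀ σ : Equiv.Perm V, ∑ f : V → E, (∏ v, w (f v)) *
      ((Equiv.Perm.sign σ : ℤ) : R) * (∏ v, b (f (σ v)) v) *
        Matrix.det (Matrix.of fun u v => b (f u) v) =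
      Matrix.det (Matrix.of fun u v => ∑ e, w e * b e u * b e v) := by
    intro σ
    rw [cbAux]
    refine Fintype.sum_equiv (Equiv.arrowCongr σ.symm (Equiv.refl E)) _ _ fun f => ?_
    have e1 : ∀ v, (Equiv.arrowCongr σ.symm (Equiv.refl E)) f v = f (σ v) := by
      intro v; simp [Equiv.arrowCongr]
    simp only [e1]
    rw [Equiv.prod_comp σ (fun v => w (f v))]
    have := Matrix.det_permute σ (Matrix.of fun u v => b (f u) v)
    have e2 : (Matrix.of fun u v => b (f (σ u)) v) =
        (Matrix.of fun u v => b (f u) v).submatrix σ id := by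
      ext u v; simp
    rw [e2, this]
    ring
  have : ∑ σ : Equiv.Perm V, Matrix.det (Matrix.of fun u v => ∑ e, w e * b e u * b e v) =
    ((Fintype.card V).factorial : R) * Matrix.det (Matrix.of fun u v => ∑ e, w e * b e u * b e v) := by
    simp [Fintype.card_perm]
  rw [← this, ← Finset.sum_congr rfl (fun σ _ => key σ), Finset.sum_comm]
  refine Finset.sum_congr rfl fun f _ => ?_
  rw [← Finset.sum_mul, sq, ← mul_assoc]
  congr 1
  rw [Matrix.det_apply', Finset.mul_sum]
  refine Finset.sum_congr rfl fun σ _ => ?_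
  simp only [Matrix.of_apply, mul_assoc]


/-- The graph spanned by a set of abstract edges with endpoints `p e`, `q e`. -/
def edgeGraph {V E : Type*} (p q : E → V) (S : Set E) : SimpleGraph V :=
  SimpleGraph.fromEdgeSet ((fun e => s(p e, q e)) '' S)

/-- Rooted incidence vectors. -/
def bvec {V E : Type*} [DecidableEq V] (p q : E → V) (r : V) : Option E → V → ℤ
  | none => Pi.single r 1
  | some e => Pi.single (p e) 1 - Pi.single (q e) 1

lemma edgeGraph_adj {V E : Type*} (p q : E → V) (S : Set E) (u v : V) :
    (edgeGraph p q S).Adj u v ↔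
      (∃ e ∈ S, (p e = u ∧ q e = v) ∨ (p e = v ∧ q e = u)) ∧ u ≠ v := by
  simp [edgeGraph, SimpleGraph.fromEdgeSet_adj]

lemma single_sub_mem {V E : Type*} [DecidableEq V] (p q : E → V) (S : Set E)
    (A : Submodule ℤ (V → ℤ))
    (hA : ∀ e ∈ S, (Pi.single (p e) 1 - Pi.single (q e) 1 : V → ℤ) ∈ A) {u v : V}
    (h : (edgeGraph p q S).Reachable u v) :
    (Pi.single u 1 - Pi.single v 1 : V → ℤ) ∈ A := by
  obtain ⟨w⟩ := h
  induction w with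
  | nil => simp
  | @cons a b c hab _ ih =>
    rw [edgeGraph_adj] at hab
    obtain ⟨⟨e, he, h⟩, -⟩ := hab
    have h1 : (Pi.single a 1 - Pi.single b 1 : V → ℤ) ∈ A := by
      rcases h with ⟨rfl, rfl⟩ | ⟨rfl, rfl⟩
      · exact hA e he
      · have := A.neg_mem (hA e he)
        simpa using this
    have := A.add_mem h1 ih
    simpa using this

lemma det_bvec_sq {V E : Type*} [Fintype V] [DecidableEq V] (p q : E → V) (r : V)
    (f : V → Option E)
    (h0 : none ∈ Set.range f) (hc : (edgeGraph p q {e | some e ∈ Set.range f}).Connected) :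
    (Matrix.det (Matrix.of fun u v => bvec p q r (f u) v)) ^ 2 = 1 := by
  set M : Matrix V V ℤ := Matrix.of fun u v => bvec p q r (f u) v with hM
  have hmem : ∀ v, (Pi.single v 1 : V → ℤ) ∈ Submodule.span ℤ (Set.range fun u => bvec p q r (f u)) := by
    intro v
    have hr : (Pi.single r 1 : V → ℤ) ∈ Submodule.span ℤ (Set.range fun u => bvec p q r (f u)) := by
      obtain ⟨u, hu⟩ := h0
      apply Submodule.subset_span
      exact ⟨u, by simp [hu, bvec]⟩
    have := single_sub_mem p q {e | some e ∈ Set.range f}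
      (Submodule.span ℤ (Set.range fun u => bvec p q r (f u))) (by
        rintro e ⟨u, hu⟩
        apply Submodule.subset_span
        exact ⟨u, by simp [hu, bvec]⟩) (hc.preconnected v r)
    have := Submodule.add_mem _ this hr
    simpa using this
  have : ∀ v, ∃ c : V → ℤ, ∑ u, c u • bvec p q r (f u) = Pi.single v 1 := fun v =>
    (Submodule.mem_span_range_iff_exists_fun ℤ).1 (hmem v)
  choose P hP using this
  have hPM : (Matrix.of P) * M = 1 := by
    ext v w
    rw [Matrix.mul_apply]
    have := congrFun (hP v) w
    simp only [Finset.sum_apply, Pi.smul_apply, smul_eq_mul] at this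
    simp only [hM, Matrix.of_apply, this, Matrix.one_apply, Pi.single_apply, eq_comm]
  have hd : (Matrix.of P).det * M.det = 1 := by rw [← Matrix.det_mul, hPM, Matrix.det_one]
  have hu : IsUnit M.det := IsUnit.of_mul_eq_one_right _ hd
  rcases Int.isUnit_iff.1 hu with h | h <;> simp [h]

lemma det_bvec_zero {V E : Type*} [Fintype V] [DecidableEq V] (p q : E → V) (r : V)
    (f : V → Option E)
    (h : ¬ (none ∈ Set.range f ∧ (edgeGraph p q {e | some e ∈ Set.range f}).Connected)) :
    Matrix.det (Matrix.of fun u v => bvec p q r (f u) v) = 0 := by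
  classical
  rw [← Matrix.exists_mulVec_eq_zero_iff]
  by_cases h0 : none ∈ Set.range f
  · have hc : ¬ (edgeGraph p q {e | some e ∈ Set.range f}).Connected := fun hc => h ⟨h0, hc⟩
    set G := edgeGraph p q {e | some e ∈ Set.range f} with hG
    have hex : ∃ u, ¬ G.Reachable r u := by
      by_contra hcon
      push Not at hcon
      apply hc
      have : Nonempty V := ⟨r⟩
      exact ⟨fun a b => (hcon a).symm.trans (hcon b)⟩
    obtain ⟨u0, hu0⟩ := hex
    refine ⟨fun v => if G.Reachable r v then 0 else 1, ?_, ?_⟩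
    · intro hz
      have := congrFun hz u0
      simp [hu0] at this
    · ext u
      simp only [Matrix.mulVec, dotProduct, Matrix.of_apply, Pi.zero_apply]
      cases hfu : f u with
      | none =>
        simp only [bvec, Pi.single_apply, ite_mul, one_mul, zero_mul, eq_comm]
        simp
      | some e =>
        simp only [bvec, Pi.sub_apply, sub_mul, Finset.sum_sub_distrib, Pi.single_apply, ite_mul,
          one_mul, zero_mul, Finset.sum_ite_eq', Finset.mem_univ, if_true, eq_comm]
        have hr : G.Reachable (p e) (q e) := by
          by_cases hpq : p e = q e
          · rw [hpq]
          · apply SimpleGraph.Adj.reachable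
            rw [hG, edgeGraph_adj]
            exact ⟨⟨e, ⟨u, hfu⟩, Or.inl ⟨rfl, rfl⟩⟩, hpq⟩
        have : G.Reachable r (p e) ↔ G.Reachable r (q e) :=
          ⟨fun h => h.trans hr, fun h => h.trans hr.symm⟩
        simp [this]
  · refine ⟨fun _ => 1, ?_, ?_⟩
    · intro hz
      have := congrFun hz r
      simp at this
    · ext u
      simp only [Matrix.mulVec, dotProduct, Matrix.of_apply, Pi.zero_apply]
      cases hfu : f u with
      | none => exact absurd ⟨u, hfu⟩ h0
      | some e => simp [bvec, Finset.sum_sub_distrib, Pi.single_apply]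

lemma card_edgeGraph {V E : Type*} (p q : E → V)
    (hinj : Function.Injective fun e => s(p e, q e)) (hne : ∀ e, p e ≠ q e) (S : Finset E) :
    Nat.card (edgeGraph p q (S : Set E)).edgeSet = S.card := by
  have : (edgeGraph p q (S : Set E)).edgeSet = (fun e => s(p e, q e)) '' (S : Set E) := by
    rw [edgeGraph, SimpleGraph.edgeSet_fromEdgeSet]
    rw [sdiff_eq_left, Set.disjoint_left]
    rintro _ ⟨e, _, rfl⟩ h
    exact hne e (by simpa using h)
  rw [this, Nat.card_coe_set_eq, Set.ncard_image_of_injective _ hinj, Set.ncard_coe_finset]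

open Classical in
/-- Sets of edges forming spanning trees. -/
noncomputable def treeSets {V E : Type*} [Fintype E] (p q : E → V) : Finset (Finset E) :=
  Finset.univ.filter fun S => (edgeGraph p q (S : Set E)).IsTree

open Classical in
lemma matrixTree {V E : Type*} [Fintype V] [DecidableEq V] [Fintype E] (p q : E → V) (r : V)
    (hinj : Function.Injective fun e => s(p e, q e)) (hne : ∀ e, p e ≠ q e)
    (w : E → ℝ) :
    Matrix.det (Matrix.of fun u v => ∑ e : Option E, (e.elim 1 w) * (bvec p q r e u : ℝ) *
      (bvec p q r e v : ℝ)) =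
      ∑ S ∈ treeSets p q, ∏ e ∈ S, w e := by
  have hfac : ((Fintype.card V).factorial : ℝ) ≠ 0 := by positivity
  apply mul_left_cancel₀ hfac
  rw [cauchyBinetFun (fun e : Option E => e.elim 1 w) (fun e u => (bvec p q r e u : ℝ))]
  have hdet : ∀ f : V → Option E, Matrix.det (Matrix.of fun u v => (bvec p q r (f u) v : ℝ)) ^ 2
      = if (none ∈ Set.range f ∧ (edgeGraph p q {e | some e ∈ Set.range f}).Connected)
        then 1 else 0 := by
    intro f
    have : (Matrix.of fun u v => (bvec p q r (f u) v : ℝ)) =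
        (Matrix.of fun u v => bvec p q r (f u) v).map (Int.castRingHom ℝ) := by
      ext u v; simp
    rw [this, ← RingHom.mapMatrix_apply, ← RingHom.map_det]
    split_ifs with h
    · have := det_bvec_sq p q r f h.1 h.2
      rw [← map_pow, this]; simp
    · rw [det_bvec_zero p q r f h]; simp
  simp only [hdet, mul_ite, mul_one, mul_zero]
  rw [← Finset.sum_filter]
  -- facts about good f
  have hgood : ∀ f : V → Option E, (none ∈ Set.range f ∧
      (edgeGraph p q {e | some e ∈ Set.range f}).Connected) →
      ∀ S : Finset E, S = Finset.univ.filter (fun e => some e ∈ Set.range f) →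
      S ∈ treeSets p q ∧ Function.Injective f ∧ Finset.univ.image f = Finset.insertNone S := by
    rintro f ⟨h0, hc⟩ S hS
    have hSs : (S : Set E) = {e | some e ∈ Set.range f} := by rw [hS]; ext; simp
    have him : Finset.univ.image f = Finset.insertNone S := by
      ext x
      cases x with
      | none => simpa using h0
      | some e => simp [hS]
    rw [← hSs] at hc
    have h1 := hc.card_vert_le_card_edgeSet_add_one
    rw [card_edgeGraph p q hinj hne, Nat.card_eq_fintype_card] at h1
    have h2 : (Finset.univ.image f).card = S.card + 1 := by
      rw [him, Finset.card_insertNone]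
    have h3 : (Finset.univ.image f).card ≤ Fintype.card V := Finset.card_image_le
    refine ⟨?_, ?_, him⟩
    · simp only [treeSets, Finset.mem_filter, Finset.mem_univ, true_and]
      rw [SimpleGraph.isTree_iff_connected_and_card]
      refine ⟨hc, ?_⟩
      rw [card_edgeGraph p q hinj hne, Nat.card_eq_fintype_card]
      omega
    · rw [← Set.injOn_univ, ← Finset.coe_univ]
      apply Finset.card_image_iff.1
      rw [Finset.card_univ]; omega
  rw [← Finset.sum_fiberwise_of_maps_to (t := treeSets p q)
    (g := fun f : V → Option E => Finset.univ.filter (fun e => some e ∈ Set.range f))]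
  swap
  · intro f hf
    simp only [Finset.mem_filter, Finset.mem_univ, true_and] at hf
    exact (hgood f hf _ rfl).1
  rw [Finset.mul_sum]
  refine Finset.sum_congr rfl fun S hS => ?_
  have hST : (edgeGraph p q (S : Set E)).IsTree := by
    simpa [treeSets] using hS
  have hval : ∀ f ∈ Finset.filter (fun f : V → Option E =>
      Finset.univ.filter (fun e => some e ∈ Set.range f) = S)
      (Finset.univ.filter fun f => (none ∈ Set.range f ∧
      (edgeGraph p q {e | some e ∈ Set.range f}).Connected)),
      ∏ v, (f v).elim 1 w = ∏ e ∈ S, w e := by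
    intro f hf
    simp only [Finset.mem_filter, Finset.mem_univ, true_and] at hf
    obtain ⟨-, hinjf, him⟩ := hgood f hf.1 S hf.2.symm
    rw [← Finset.prod_image (s := Finset.univ) (g := f) (f := fun x : Option E => x.elim 1 w)
      (fun a _ b _ h => hinjf h), him]
    simp [Finset.insertNone]
  rw [Finset.sum_congr rfl hval, Finset.sum_const, nsmul_eq_mul]
  congr 1
  norm_cast
  have hcard : Fintype.card V = Fintype.card (Finset.insertNone S) := by
    rw [Fintype.card_coe, Finset.card_insertNone, ← card_edgeGraph p q hinj hne,
      ← Nat.card_eq_fintype_card]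
    exact (SimpleGraph.isTree_iff_connected_and_card.1 hST).2.symm
  rw [← Fintype.card_equiv (Fintype.equivOfCardEq hcard), ← Finset.card_univ]
  symm
  refine Finset.card_bij (fun σ _ => fun v => (σ v : Option E)) ?_ ?_ ?_
  · intro σ _
    have hr : Set.range (fun v => (σ v : Option E)) = (Finset.insertNone S : Set (Option E)) := by
      ext x
      constructor
      · rintro ⟨v, rfl⟩; exact (σ v).2
      · intro hx; exact ⟨σ.symm ⟨x, hx⟩, by simp⟩
    have hs : {e | some e ∈ Set.range (fun v => (σ v : Option E))} = (S : Set E) := by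
      rw [hr]; ext; simp
    simp only [Finset.mem_filter, Finset.mem_univ, true_and]
    refine ⟨⟨?_, ?_⟩, ?_⟩
    · rw [hr]; simp
    · rw [hs]; exact hST.connected
    · ext e
      have := Set.ext_iff.1 hs e
      simpa only [Finset.mem_filter, Finset.mem_univ, true_and, Finset.mem_coe,
        Set.mem_ofPred_eq] using this
  · intro σ _ τ _ h
    ext v
    have := congrFun h v
    simp at this
    rw [this]
  · intro f hf
    simp only [Finset.mem_filter, Finset.mem_univ, true_and] at hf
    obtain ⟨-, hinjf, him⟩ := hgood f hf.1 S hf.2.symm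
    have hm : ∀ v, f v ∈ Finset.insertNone S := by
      intro v; rw [← him]; simp
    refine ⟨Equiv.ofBijective (fun v => ⟨f v, hm v⟩) ?_, Finset.mem_univ _, ?_⟩
    · rw [Fintype.bijective_iff_injective_and_card]
      refine ⟨fun a b h => hinjf (by simpa using h), hcard⟩
    · ext v; simp


open Classical in
lemma treeSets_card_eq {V E : Type*} [Fintype V] [DecidableEq V] [Fintype E] (p q : E → V) (r : V)
    (hinj : Function.Injective fun e => s(p e, q e)) (hne : ∀ e, p e ≠ q e)
    (φ : E → V → ℝ)
    (hφ : ∀ e u, ∑ e', (bvec p q r (some e') u : ℝ) * (φ e (p e') - φ e (q e')) =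
      (bvec p q r (some e) u : ℝ))
    {k : ℕ} (g : Fin k → E) (hg : Function.Injective g) :
    (((treeSets p q).filter (fun S => ∀ a, g a ∈ S)).card : ℝ) =
      ((treeSets p q).card : ℝ) *
        Matrix.det (Matrix.of fun a b => φ (g b) (p (g a)) - φ (g b) (q (g a))) := by
  set K : Matrix (Fin k) (Fin k) ℝ :=
    Matrix.of fun a b => φ (g b) (p (g a)) - φ (g b) (q (g a)) with hK
  set L : Matrix V V ℝ := Matrix.of fun u v => ∑ e : Option E, (bvec p q r e u : ℝ) *
      (bvec p q r e v : ℝ) with hL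
  set F : Finset E := Finset.univ.image g with hF
  have hFc : F.card = k := by
    rw [hF, Finset.card_image_of_injective _ hg, Finset.card_univ, Fintype.card_fin]
  have hdL : ((treeSets p q).card : ℝ) = L.det := by
    have := matrixTree p q r hinj hne (fun _ => 1)
    simp only [Finset.prod_const_one, Finset.sum_const, nsmul_eq_mul, mul_one] at this
    rw [← this, hL]
    congr 1
    ext u v
    simp only [Matrix.of_apply]
    refine Finset.sum_congr rfl fun e _ => ?_
    cases e <;> simp
  set B : Matrix V (Fin k) ℝ := Matrix.of fun v a => (bvec p q r (some (g a)) v : ℝ) with hB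
  set Φ : Matrix V (Fin k) ℝ := Matrix.of fun v a => φ (g a) v - φ (g a) r with hΦ
  have hsub : ∀ (e : E) (x : V → ℝ), ∑ v, (bvec p q r (some e) v : ℝ) * x v = x (p e) - x (q e) := by
    intro e x
    simp [bvec, Pi.single_apply, sub_mul, Finset.sum_sub_distrib]
  have hLΦ : L * Φ = B := by
    ext u a
    rw [Matrix.mul_apply]
    simp only [hL, hΦ, hB, Matrix.of_apply, Finset.sum_mul]
    rw [Finset.sum_comm, Fintype.sum_option]
    have h1 : ∑ v, (bvec p q r none u : ℝ) * (bvec p q r none v : ℝ) * (φ (g a) v - φ (g a) r) = 0 := by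
      refine Finset.sum_eq_zero fun v _ => ?_
      by_cases hv : v = r
      · simp [hv]
      · simp [bvec, Pi.single_apply, hv]
    rw [h1, zero_add, ← hφ (g a) u]
    refine Finset.sum_congr rfl fun e _ => ?_
    simp only [mul_assoc]
    rw [← Finset.mul_sum, hsub]
    ring
  have hBΦ : B.transpose * Φ = K := by
    ext a b
    rw [Matrix.mul_apply]
    simp only [hB, hΦ, hK, Matrix.transpose_apply, Matrix.of_apply]
    rw [hsub]
    ring
  have hev : ∀ t : ℝ, ∑ S ∈ treeSets p q, (1 + t) ^ (S ∩ F).card =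
      L.det * (t • K + 1).det := by
    intro t
    have h1 := matrixTree p q r hinj hne (fun e => if e ∈ F then 1 + t else 1)
    have h2 : ∀ S : Finset E, ∏ e ∈ S, (if e ∈ F then 1 + t else 1) = (1 + t) ^ (S ∩ F).card := by
      intro S
      rw [Finset.prod_ite, Finset.prod_const_one, mul_one, Finset.prod_const,
        Finset.filter_mem_eq_inter]
    simp only [h2] at h1
    rw [← h1]
    have h3 : (Matrix.of fun u v => ∑ e : Option E,
        (e.elim 1 fun e => if e ∈ F then 1 + t else 1) * (bvec p q r e u : ℝ) *
        (bvec p q r e v : ℝ)) = L * (1 + Φ * (t • B.transpose)) := by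
      rw [Matrix.mul_add, mul_one, ← Matrix.mul_assoc, hLΦ]
      ext u v
      simp only [Matrix.add_apply, Matrix.mul_apply, hL, hB, Matrix.of_apply, Matrix.smul_apply,
        Matrix.transpose_apply, smul_eq_mul]
      rw [Fintype.sum_option, Fintype.sum_option]
      have : ∑ a, (bvec p q r (some (g a)) u : ℝ) * (t * (bvec p q r (some (g a)) v : ℝ)) =
          ∑ e ∈ F, (bvec p q r (some e) u : ℝ) * (t * (bvec p q r (some e) v : ℝ)) := by
        rw [hF, Finset.sum_image (fun a _ b _ h => hg h)]
      rw [this, ← Finset.univ_inter F, ← Finset.filter_mem_eq_inter, Finset.sum_filter, add_assoc,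
        ← Finset.sum_add_distrib]
      simp only [Option.elim, one_mul, Finset.filter_mem_eq_inter, Finset.univ_inter]
      congr 1
      refine Finset.sum_congr rfl fun e _ => ?_
      split_ifs <;> ring
    rw [h3, Matrix.det_mul, Matrix.det_one_add_mul_comm, Matrix.smul_mul, hBΦ, add_comm]
  have hpoly : ∑ S ∈ treeSets p q, (1 + Polynomial.X : Polynomial ℝ) ^ (S ∩ F).card =
      Polynomial.C L.det * ((Polynomial.X : Polynomial ℝ) • K.map Polynomial.C +
        (1 : Matrix (Fin k) (Fin k) ℝ).map Polynomial.C).det := by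
    apply Polynomial.funext
    intro t
    rw [Polynomial.eval_finsetSum, Polynomial.eval_mul, Polynomial.eval_C]
    simp only [Polynomial.eval_pow, Polynomial.eval_add, Polynomial.eval_one, Polynomial.eval_X]
    rw [hev t]
    congr 1
    rw [← Polynomial.coe_evalRingHom, RingHom.map_det]
    congr 1
    ext a b
    by_cases hab : a = b
    · simp [hab]; ring
    · simp [hab]; ring
  have hco := congrArg (fun P => Polynomial.coeff P k) hpoly
  simp only [Polynomial.finsetSum_coeff, Polynomial.coeff_C_mul,
    Polynomial.coeff_one_add_X_pow] at hco
  have hc2 := Polynomial.coeff_det_X_add_C_card K 1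
  rw [Fintype.card_fin] at hc2
  rw [hc2] at hco
  rw [hdL, ← hco, Finset.card_filter]
  push_cast
  refine Finset.sum_congr rfl fun S _ => ?_
  have hiff : (∀ a, g a ∈ S) ↔ F ⊆ S := by
    rw [hF, Finset.image_subset_iff]; simp
  by_cases h : F ⊆ S
  · rw [if_pos (hiff.2 h), Finset.inter_eq_right.2 h, hFc]; simp
  · rw [if_neg (fun h' => h (hiff.1 h'))]
    have : (S ∩ F).card < k := by
      rw [← hFc]
      apply Finset.card_lt_card
      refine ⟨Finset.inter_subset_right, fun h' => h (fun x hx => (Finset.mem_inter.1 (h' hx)).1)⟩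
    rw [Nat.choose_eq_zero_of_lt this]; simp

open Classical in
lemma descFactorial_card_eq {E : Type*} [Fintype E] (A : Finset E) (k : ℕ) :
    A.card.descFactorial k =
      (Finset.univ.filter fun g : Fin k → E => Function.Injective g ∧ ∀ a, g a ∈ A).card := by
  have h := Fintype.card_embedding_eq (α := Fin k) (β := A)
  rw [Fintype.card_coe, Fintype.card_fin] at h
  rw [← h, ← Finset.card_univ]
  refine Finset.card_bij (fun σ _ => fun a => (σ a : E)) ?_ ?_ ?_
  · intro σ _
    simp only [Finset.mem_filter, Finset.mem_univ, true_and]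
    exact ⟨fun a b h => σ.injective (Subtype.ext h), fun a => (σ a).2⟩
  · intro σ _ τ _ h
    ext a
    exact congrFun h a
  · intro g hg
    simp only [Finset.mem_filter, Finset.mem_univ, true_and] at hg
    exact ⟨⟨fun a => ⟨g a, hg.2 a⟩, fun a b h => hg.1 (by simpa using h)⟩, Finset.mem_univ _, rfl⟩

open Classical in
lemma sum_descFactorial {V E : Type*} [Fintype V] [DecidableEq V] [Fintype E] (p q : E → V) (r : V)
    (hinj : Function.Injective fun e => s(p e, q e)) (hne : ∀ e, p e ≠ q e)
    (φ : E → V → ℝ)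
    (hφ : ∀ e u, ∑ e', (bvec p q r (some e') u : ℝ) * (φ e (p e') - φ e (q e')) =
      (bvec p q r (some e) u : ℝ)) (k : ℕ) :
    ∑ S ∈ treeSets p q, ∑ S' ∈ treeSets p q, ((S ∩ S').card.descFactorial k : ℝ) =
      ((treeSets p q).card : ℝ) ^ 2 * ∑ g : Fin k → E,
        Matrix.det (Matrix.of fun a b => φ (g b) (p (g a)) - φ (g b) (q (g a))) ^ 2 := by
  have h1 : ∀ S S' : Finset E, ((S ∩ S').card.descFactorial k : ℝ) =
      ∑ g : Fin k → E, if Function.Injective g then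
        (if ∀ a, g a ∈ S then (1 : ℝ) else 0) * (if ∀ a, g a ∈ S' then (1 : ℝ) else 0) else 0 := by
    intro S S'
    rw [descFactorial_card_eq, Finset.card_filter]
    push_cast
    refine Finset.sum_congr rfl fun g _ => ?_
    have : (∀ a, g a ∈ S ∩ S') ↔ (∀ a, g a ∈ S) ∧ ∀ a, g a ∈ S' := by
      simp only [Finset.mem_inter, forall_and]
    simp only [this]
    by_cases a1 : Function.Injective g <;> by_cases a2 : ∀ a, g a ∈ S <;>
      by_cases a3 : ∀ a, g a ∈ S' <;> simp [a1, a2, a3]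
  simp only [h1]
  have h2 : ∀ S ∈ treeSets p q, ∑ S' ∈ treeSets p q, ∑ g : Fin k → E, (if Function.Injective g then
        (if ∀ a, g a ∈ S then (1 : ℝ) else 0) * (if ∀ a, g a ∈ S' then (1 : ℝ) else 0) else 0) =
      ∑ g : Fin k → E, ∑ S' ∈ treeSets p q, (if Function.Injective g then
        (if ∀ a, g a ∈ S then (1 : ℝ) else 0) * (if ∀ a, g a ∈ S' then (1 : ℝ) else 0) else 0) :=
    fun S _ => Finset.sum_comm
  rw [Finset.sum_congr rfl h2, Finset.sum_comm, Finset.mul_sum]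
  refine Finset.sum_congr rfl fun g _ => ?_
  by_cases hg : Function.Injective g
  · simp only [hg, if_true]
    simp only [← Finset.mul_sum, ← Finset.sum_mul]
    have := treeSets_card_eq p q r hinj hne φ hφ g hg
    rw [Finset.card_filter] at this
    push_cast at this
    rw [this]
    ring
  · simp only [hg, if_false, Finset.sum_const_zero]
    have : ∃ a b, g a = g b ∧ a ≠ b := by
      simpa [Function.Injective] using hg
    obtain ⟨a, b, hab, hne'⟩ := this
    rw [Matrix.det_zero_of_row_eq hne']
    · simp
    · ext c; simp [hab]


lemma bonferroni_aux (x m r : ℕ) :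
    |(if x = m then (1 : ℝ) else 0) - ∑ j ∈ Finset.range r,
      (-1) ^ j * (x.descFactorial (m + j) : ℝ) / (m.factorial * j.factorial)| ≤
      (x.descFactorial (m + r) : ℝ) / (m.factorial * r.factorial) := by
  have hterm : ∀ j y : ℕ, (((m + y).descFactorial (m + j) : ℕ) : ℝ) / (m.factorial * j.factorial) =
      ((m + y).choose m : ℝ) * (y.choose j : ℝ) := by
    intro j y
    have h1 : (((m + y).descFactorial (m + j) : ℕ) : ℝ) =
        (m.factorial : ℝ) * ((m + y).choose m) * ((j.factorial : ℝ) * (y.choose j)) := by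
      have h2 : (m + y).descFactorial (m + j) =
          (m + y).descFactorial m * y.descFactorial j := by
        rw [← Nat.descFactorial_mul_descFactorial (Nat.le_add_right m j)]
        rw [Nat.add_sub_cancel_left, Nat.add_sub_cancel_left, mul_comm]
      rw [h2, Nat.descFactorial_eq_factorial_mul_choose, Nat.descFactorial_eq_factorial_mul_choose]
      push_cast; ring
    rw [h1]
    have : (m.factorial : ℝ) ≠ 0 := by positivity
    have : (j.factorial : ℝ) ≠ 0 := by positivity
    field_simp
  rcases lt_or_ge x m with hx | hx
  · have h0 : ∀ j, x.descFactorial (m + j) = 0 := fun j =>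
      Nat.descFactorial_eq_zero_iff_lt.2 (by omega)
    simp [h0, hx.ne]
  · obtain ⟨y, rfl⟩ := Nat.exists_eq_add_of_le hx
    simp only [mul_div_assoc, hterm]
    have hs : ∑ j ∈ Finset.range r, (-1 : ℝ) ^ j * (((m + y).choose m : ℝ) * (y.choose j : ℝ)) =
        ((m + y).choose m : ℝ) * (((∑ j ∈ Finset.range r, (-1 : ℤ) ^ j * (y.choose j : ℤ) : ℤ)) : ℝ) := by
      push_cast
      rw [Finset.mul_sum]
      exact Finset.sum_congr rfl fun j _ => by ring
    rw [hs]
    cases r with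
    | zero =>
      rcases Nat.eq_zero_or_pos y with rfl | hy
      · simp
      · have : m + y ≠ m := by omega
        rw [if_neg this]; simp
    | succ r' =>
      cases y with
      | zero =>
        have : ∑ j ∈ Finset.range (r' + 1), (-1 : ℤ) ^ j * (Nat.choose 0 j : ℤ) = 1 := by
          rw [Finset.sum_range_succ']
          simp
        rw [this]; simp
      | succ y' =>
        have h1 := Int.alternating_sum_range_choose_eq_choose (n := y') (m := r')
        rw [h1]
        have : m + (y' + 1) ≠ m := by omega
        rw [if_neg this, zero_sub, abs_neg, abs_mul]
        push_cast
        rw [abs_mul, abs_pow, abs_neg, abs_one, one_pow, one_mul, Nat.abs_cast, Nat.abs_cast]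
        gcongr
        rw [Nat.choose_succ_succ]
        omega

open Filter Topology in
lemma poisson_of_moments (P : ℕ → ℝ) (M : ℕ → ℕ → ℝ) (lam : ℝ) (m : ℕ)
    (hM : ∀ k, Tendsto (fun n => M n k) atTop (𝓝 (lam ^ k)))
    (hb : ∀ᶠ n in atTop, ∀ r, |P n - ∑ j ∈ Finset.range r,
      (-1) ^ j * M n (m + j) / (m.factorial * j.factorial)| ≤
        M n (m + r) / (m.factorial * r.factorial)) :
    Tendsto P atTop (𝓝 (Real.exp (-lam) * lam ^ m / m.factorial)) := by
  have hS : ∀ r, Tendsto (fun n => ∑ j ∈ Finset.range r,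
      (-1) ^ j * M n (m + j) / (m.factorial * j.factorial)) atTop
      (𝓝 (∑ j ∈ Finset.range r, (-1) ^ j * lam ^ (m + j) / (m.factorial * j.factorial))) := by
    intro r
    apply tendsto_finsetSum
    intro j _
    exact ((hM (m + j)).const_mul _).div_const _
  have hE : ∀ r, Tendsto (fun n => M n (m + r) / (m.factorial * r.factorial)) atTop
      (𝓝 (lam ^ (m + r) / (m.factorial * r.factorial))) := fun r => (hM _).div_const _
  have hlim : Tendsto (fun r : ℕ => ∑ j ∈ Finset.range r,
      (-1) ^ j * lam ^ (m + j) / (m.factorial * j.factorial)) atTop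
      (𝓝 (Real.exp (-lam) * lam ^ m / m.factorial)) := by
    have h1 : HasSum (fun j : ℕ => (-lam) ^ j / j.factorial) (Real.exp (-lam)) := by
      rw [Real.exp_eq_exp_ℝ]
      exact NormedSpace.expSeries_div_hasSum_exp (-lam)
    have h2 := (h1.tendsto_sum_nat).mul_const (lam ^ m / m.factorial)
    rw [← mul_div_assoc] at h2
    refine h2.congr fun r => ?_
    rw [Finset.sum_mul]
    refine Finset.sum_congr rfl fun j _ => ?_
    rw [neg_pow, pow_add]
    field_simp
  have herr : Tendsto (fun r : ℕ => lam ^ (m + r) / (m.factorial * r.factorial)) atTop (𝓝 0) := by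
    have h1 := (FloorSemiring.tendsto_pow_div_factorial_atTop lam).const_mul (lam ^ m / m.factorial)
    rw [mul_zero] at h1
    refine h1.congr fun r => ?_
    rw [pow_add]; field_simp
  rw [Metric.tendsto_atTop]
  intro ε hε
  obtain ⟨r, hr1, hr2⟩ := (((Metric.tendsto_nhds.1 hlim) (ε / 4) (by positivity)).and
    ((Metric.tendsto_nhds.1 herr) (ε / 4) (by positivity))).exists
  have hn := (((Metric.tendsto_nhds.1 (hS r)) (ε / 4) (by positivity)).and
    ((Metric.tendsto_nhds.1 (hE r)) (ε / 4) (by positivity))).and hb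
  rw [eventually_atTop] at hn
  obtain ⟨n0, hn0⟩ := hn
  refine ⟨n0, fun n hn => ?_⟩
  obtain ⟨⟨h1, h2⟩, h3⟩ := hn0 n hn
  have h3 := h3 r
  rw [Real.dist_eq] at *
  rw [abs_lt] at *
  rw [abs_le] at h3
  constructor <;> linarith [h1.1, h1.2, h2.1, h2.2, h3.1, h3.2, hr1.1, hr1.2, hr2.1, hr2.2]

lemma sum_two_coord {E : Type*} [Fintype E] {k : ℕ} (h : E → E → ℝ) (a b : Fin k) (hab : a ≠ b) :
    ∑ g : Fin k → E, h (g a) (g b) =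
      (Fintype.card E : ℝ) ^ (k - 2) * ∑ e, ∑ f, h e f := by
  classical
  have hprod : ∀ (α β γ : ℝ) , ∏ i : Fin k, (if i = a then α else if i = b then β else γ) =
      α * β * γ ^ (k - 2) := by
    intro α β γ
    rw [← Finset.mul_prod_erase Finset.univ _ (Finset.mem_univ a),
      ← Finset.mul_prod_erase (Finset.univ.erase a) _
        (Finset.mem_erase.2 ⟨hab.symm, Finset.mem_univ b⟩)]
    rw [if_pos rfl, if_neg hab.symm, if_pos rfl, ← mul_assoc]
    congr 1
    have : ∀ x ∈ (Finset.univ.erase a).erase b,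
        (if x = a then α else if x = b then β else γ) = γ := by
      intro x hx
      simp only [Finset.mem_erase] at hx
      rw [if_neg hx.2.1, if_neg hx.1]
    rw [Finset.prod_congr rfl this, Finset.prod_const]
    congr 1
    rw [Finset.card_erase_of_mem (Finset.mem_erase.2 ⟨hab.symm, Finset.mem_univ b⟩),
      Finset.card_erase_of_mem (Finset.mem_univ a), Finset.card_univ, Fintype.card_fin]
    omega
  have h1 : ∀ g : Fin k → E, h (g a) (g b) = ∑ e, ∏ i : Fin k,
      (if i = a then (if g i = e then 1 else 0) else if i = b then h e (g i) else 1) := by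
    intro g
    have : ∀ e, ∏ i : Fin k,
      (if i = a then (if g i = e then 1 else 0) else if i = b then h e (g i) else 1) =
      (if g a = e then 1 else 0) * h e (g b) * 1 ^ (k - 2) := by
      intro e
      rw [← hprod]
      refine Finset.prod_congr rfl fun i _ => ?_
      by_cases hi : i = a
      · subst hi; simp
      · by_cases hi' : i = b
        · subst hi'; simp [hi]
        · simp [hi, hi']
    simp [this]
  simp only [h1]
  rw [Finset.sum_comm, Finset.mul_sum]
  refine Finset.sum_congr rfl fun e _ => ?_
  have h2 := Finset.prod_univ_sum (fun _ : Fin k => (Finset.univ : Finset E))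
    (fun i x => (if i = a then (if x = e then (1 : ℝ) else 0) else if i = b then h e x else 1))
  rw [Fintype.piFinset_univ] at h2
  rw [← h2]
  have h3 : ∀ i : Fin k, ∑ x : E, (if i = a then (if x = e then (1 : ℝ) else 0)
      else if i = b then h e x else 1) =
      (if i = a then 1 else if i = b then ∑ f, h e f else (Fintype.card E : ℝ)) := by
    intro i
    by_cases hi : i = a
    · simp [hi]
    · by_cases hi' : i = b
      · simp only [hi', if_true]
        rw [if_neg hab.symm]; simp [hab.symm]
      · simp [hi, hi']
  simp only [h3]
  rw [hprod]; ring

lemma perm_term_bound {E : Type*} [Fintype E] {k : ℕ} (K : E → E → ℝ) (C N : ℝ) (hN : 1 ≤ N)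
    (hC : 0 ≤ C) (hK : ∀ e f, |K e f| ≤ C / N) (hKs : ∑ e, ∑ f, |K e f| ≤ C * N ^ 2)
    (hE : (Fintype.card E : ℝ) ≤ N ^ 2) (σ τ : Equiv.Perm (Fin k)) (hσ : σ ≠ 1) :
    ∑ g : Fin k → E, |(∏ a, K (g a) (g (σ a))) * ∏ a, K (g a) (g (τ a))| ≤ C ^ (2 * k) / N := by
  classical
  have hN0 : 0 < N := by linarith
  have hex : ∃ a, σ a ≠ a := by
    by_contra hcon
    push Not at hcon
    exact hσ (Equiv.ext hcon)
  obtain ⟨a, ha⟩ := hex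
  have hk : 2 ≤ k := by
    have h1 := a.2
    have h2 := (σ a).2
    have h3 : (σ a : ℕ) ≠ a := fun h => ha (Fin.ext h)
    omega
  obtain ⟨j, rfl⟩ := Nat.exists_eq_add_of_le' hk
  have hcn : 0 ≤ C / N := by positivity
  have hb : ∀ g : Fin (j + 2) → E, |(∏ a, K (g a) (g (σ a))) * ∏ a, K (g a) (g (τ a))| ≤
      (C / N) ^ (j + 1) * (C / N) ^ (j + 2) * |K (g a) (g (σ a))| := by
    intro g
    rw [abs_mul, Finset.abs_prod, Finset.abs_prod]
    have h1 : ∏ x, |K (g x) (g (τ x))| ≤ (C / N) ^ (j + 2) := by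
      calc _ ≤ ∏ _x : Fin (j + 2), (C / N) :=
            Finset.prod_le_prod (fun _ _ => abs_nonneg _) (fun _ _ => hK _ _)
        _ = _ := by rw [Finset.prod_const, Finset.card_univ, Fintype.card_fin]
    have h2 : ∏ x, |K (g x) (g (σ x))| ≤ |K (g a) (g (σ a))| * (C / N) ^ (j + 1) := by
      rw [← Finset.mul_prod_erase Finset.univ _ (Finset.mem_univ a)]
      gcongr
      calc _ ≤ ∏ _x ∈ Finset.univ.erase a, (C / N) :=
            Finset.prod_le_prod (fun _ _ => abs_nonneg _) (fun _ _ => hK _ _)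
        _ = _ := by
            rw [Finset.prod_const, Finset.card_erase_of_mem (Finset.mem_univ a),
              Finset.card_univ, Fintype.card_fin]
            congr 1
    calc _ ≤ (|K (g a) (g (σ a))| * (C / N) ^ (j + 1)) * (C / N) ^ (j + 2) := by
          apply mul_le_mul h2 h1 (Finset.prod_nonneg fun _ _ => abs_nonneg _) (by positivity)
      _ = _ := by ring
  calc _ ≤ ∑ g : Fin (j + 2) → E,
        (C / N) ^ (j + 1) * (C / N) ^ (j + 2) * |K (g a) (g (σ a))| :=
        Finset.sum_le_sum fun g _ => hb g
    _ = (C / N) ^ (j + 1) * (C / N) ^ (j + 2) *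
        ((Fintype.card E : ℝ) ^ j * ∑ e, ∑ f, |K e f|) := by
        rw [← Finset.mul_sum, sum_two_coord (fun e f => |K e f|) a (σ a) ha.symm]
        simp
    _ ≤ (C / N) ^ (j + 1) * (C / N) ^ (j + 2) * ((N ^ 2) ^ j * (C * N ^ 2)) := by
        gcongr
    _ = C ^ (2 * (j + 2)) / N := by
        rw [div_pow, div_pow]
        field_simp
        ring

lemma det_sq_sum_bound {E : Type*} [Fintype E] (k : ℕ) (K : E → E → ℝ) (C N : ℝ) (hN : 1 ≤ N)
    (hC : 0 ≤ C) (hK : ∀ e f, |K e f| ≤ C / N) (hKs : ∑ e, ∑ f, |K e f| ≤ C * N ^ 2)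
    (hE : (Fintype.card E : ℝ) ≤ N ^ 2) :
    |∑ g : Fin k → E, Matrix.det (Matrix.of fun a b => K (g b) (g a)) ^ 2 - (∑ e, K e e ^ 2) ^ k| ≤
      (k.factorial : ℝ) ^ 2 * (C ^ (2 * k) / N) := by
  classical
  have hN0 : 0 < N := by linarith
  set T : Equiv.Perm (Fin k) → Equiv.Perm (Fin k) → ℝ := fun σ τ =>
    ∑ g : Fin k → E, (((Equiv.Perm.sign σ : ℤ) : ℝ) * ∏ a, K (g a) (g (σ a))) *
      (((Equiv.Perm.sign τ : ℤ) : ℝ) * ∏ a, K (g a) (g (τ a))) with hT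
  have hdet : ∑ g : Fin k → E, Matrix.det (Matrix.of fun a b => K (g b) (g a)) ^ 2 =
      ∑ x : Equiv.Perm (Fin k) × Equiv.Perm (Fin k), T x.1 x.2 := by
    rw [Fintype.sum_prod_type]
    simp only [hT]
    have : ∀ σ : Equiv.Perm (Fin k), ∑ τ : Equiv.Perm (Fin k), ∑ g : Fin k → E,
        (((Equiv.Perm.sign σ : ℤ) : ℝ) * ∏ a, K (g a) (g (σ a))) *
        (((Equiv.Perm.sign τ : ℤ) : ℝ) * ∏ a, K (g a) (g (τ a))) =
        ∑ g : Fin k → E, ∑ τ : Equiv.Perm (Fin k),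
        (((Equiv.Perm.sign σ : ℤ) : ℝ) * ∏ a, K (g a) (g (σ a))) *
        (((Equiv.Perm.sign τ : ℤ) : ℝ) * ∏ a, K (g a) (g (τ a))) := fun σ => Finset.sum_comm
    simp only [this]
    rw [Finset.sum_comm]
    refine Finset.sum_congr rfl fun g _ => ?_
    rw [Matrix.det_apply', sq, Finset.sum_mul_sum]
    simp only [Matrix.of_apply]
  have h11 : T 1 1 = (∑ e, K e e ^ 2) ^ k := by
    have h2 := Finset.prod_univ_sum (fun _ : Fin k => (Finset.univ : Finset E))
      (fun _ x => K x x ^ 2)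
    rw [Fintype.piFinset_univ] at h2
    rw [Finset.prod_const, Finset.card_univ, Fintype.card_fin] at h2
    rw [h2, hT]
    refine Finset.sum_congr rfl fun g _ => ?_
    simp [sq, Finset.prod_mul_distrib]
  have hsgn : ∀ σ : Equiv.Perm (Fin k), |((Equiv.Perm.sign σ : ℤ) : ℝ)| = 1 := by
    intro σ
    rcases Int.units_eq_one_or (Equiv.Perm.sign σ) with h | h <;> simp [h]
  have hTabs : ∀ σ τ, |T σ τ| ≤
      ∑ g : Fin k → E, |(∏ a, K (g a) (g (σ a))) * ∏ a, K (g a) (g (τ a))| := by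
    intro σ τ
    refine (Finset.abs_sum_le_sum_abs _ _).trans (le_of_eq ?_)
    refine Finset.sum_congr rfl fun g _ => ?_
    rw [abs_mul, abs_mul, abs_mul, abs_mul, hsgn, hsgn, one_mul, one_mul]
  have hbd : ∀ x : Equiv.Perm (Fin k) × Equiv.Perm (Fin k), x ≠ (1, 1) →
      |T x.1 x.2| ≤ C ^ (2 * k) / N := by
    rintro ⟨σ, τ⟩ hx
    by_cases hσ : σ = 1
    · have hτ : τ ≠ 1 := fun h => hx (by rw [hσ, h])
      refine (hTabs _ _).trans ?_
      have := perm_term_bound K C N hN hC hK hKs hE τ σ hτ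
      simpa only [mul_comm] using this
    · exact (hTabs _ _).trans (perm_term_bound K C N hN hC hK hKs hE σ τ hσ)
  rw [hdet, ← Finset.add_sum_erase Finset.univ _ (Finset.mem_univ (1, 1)), h11, add_sub_cancel_left]
  refine (Finset.abs_sum_le_sum_abs _ _).trans ?_
  calc _ ≤ ∑ _x ∈ Finset.univ.erase ((1, 1) : Equiv.Perm (Fin k) × Equiv.Perm (Fin k)),
        C ^ (2 * k) / N := Finset.sum_le_sum fun x hx => hbd x (Finset.ne_of_mem_erase hx)
    _ ≤ ∑ _x : Equiv.Perm (Fin k) × Equiv.Perm (Fin k), C ^ (2 * k) / N :=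
        Finset.sum_le_sum_of_subset_of_nonneg (Finset.erase_subset _ _)
          (fun _ _ _ => by positivity)
    _ = _ := by
        rw [Finset.sum_const, Finset.card_univ, Fintype.card_prod, Fintype.card_perm,
          Fintype.card_fin, nsmul_eq_mul]
        push_cast; ring





/-- Vertices of the complete multipartite graph. -/
abbrev MV {d : ℕ} (nn : Fin d → ℕ) := Σ i : Fin d, Fin (nn i)

/-- Edges of the complete multipartite graph, oriented from the lower to the higher part. -/
abbrev ME {d : ℕ} (nn : Fin d → ℕ) := {x : MV nn × MV nn // x.1.1 < x.2.1}

/-- Tail of an edge. -/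
def mp {d : ℕ} (nn : Fin d → ℕ) (e : ME nn) : MV nn := e.1.1

/-- Head of an edge. -/
def mq {d : ℕ} (nn : Fin d → ℕ) (e : ME nn) : MV nn := e.1.2

/-- Potential of the unit current flow through an edge. -/
noncomputable def mphi {d : ℕ} (nn : Fin d → ℕ) (N : ℝ) (e : ME nn) (w : MV nn) : ℝ :=
  ((if w = mp nn e then 1 else 0) - (if w = mq nn e then 1 else 0)
    - (if w.1 = (mp nn e).1 then 1 else 0) / N + (if w.1 = (mq nn e).1 then 1 else 0) / N) /
      (N - nn w.1)

lemma mp_inj {d : ℕ} (nn : Fin d → ℕ) :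
    Function.Injective fun e : ME nn => s(mp nn e, mq nn e) := by
  rintro ⟨⟨a, b⟩, h⟩ ⟨⟨a', b'⟩, h'⟩ heq
  simp only [mp, mq, Sym2.eq_iff] at heq
  rcases heq with ⟨rfl, rfl⟩ | ⟨rfl, rfl⟩
  · rfl
  · exact absurd h (lt_asymm h')

lemma mp_ne {d : ℕ} (nn : Fin d → ℕ) (e : ME nn) : mp nn e ≠ mq nn e := by
  intro h
  have := e.2
  change (mp nn e).1 < (mq nn e).1 at this
  rw [h] at this
  exact lt_irrefl _ this

lemma mp_ne1 {d : ℕ} (nn : Fin d → ℕ) (e : ME nn) : (mp nn e).1 ≠ (mq nn e).1 := by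
  have := e.2
  change (mp nn e).1 < (mq nn e).1 at this
  exact this.ne

lemma sum_ME {d : ℕ} (nn : Fin d → ℕ) (F : MV nn → MV nn → ℝ) :
    ∑ e : ME nn, F (mp nn e) (mq nn e) = ∑ a, ∑ b, if a.1 < b.1 then F a b else 0 := by
  have h1 := Finset.sum_subtype (p := fun x : MV nn × MV nn => x.1.1 < x.2.1)
    (F := inferInstanceAs (Fintype (ME nn))) (Finset.univ.filter fun x : MV nn × MV nn => x.1.1 < x.2.1) (by simp) (fun x => F x.1 x.2)
  change ∑ e : ME nn, F e.1.1 e.1.2 = _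
  rw [← h1, Finset.sum_filter, Fintype.sum_prod_type]

lemma laplacian_ME {d : ℕ} (nn : Fin d → ℕ) (r u : MV nn) (x : MV nn → ℝ) :
    ∑ e : ME nn, (bvec (mp nn) (mq nn) r (some e) u : ℝ) * (x (mp nn e) - x (mq nn e)) =
      ∑ v : MV nn, if v.1 = u.1 then 0 else (x u - x v) := by
  have h1 := sum_ME nn (fun a b => ((if u = a then (1 : ℝ) else 0) - (if u = b then 1 else 0)) *
    (x a - x b))
  have h2 : ∑ e : ME nn, (bvec (mp nn) (mq nn) r (some e) u : ℝ) * (x (mp nn e) - x (mq nn e)) =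
      ∑ e : ME nn, ((if u = mp nn e then (1 : ℝ) else 0) - (if u = mq nn e then 1 else 0)) *
    (x (mp nn e) - x (mq nn e)) := by
    refine Finset.sum_congr rfl fun e _ => ?_
    simp [bvec, Pi.single_apply]
  rw [h2, h1]
  have h3 : ∀ a b : MV nn, (if a.1 < b.1 then
      ((if u = a then (1 : ℝ) else 0) - (if u = b then 1 else 0)) * (x a - x b) else 0) =
      (if u = a then (if u.1 < b.1 then x u - x b else 0) else 0) +
      (if u = b then (if a.1 < u.1 then x u - x a else 0) else 0) := by
    intro a b
    by_cases ha : u = a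
    · subst ha
      by_cases hb : u = b
      · subst hb; simp
      · simp [hb]
    · by_cases hb : u = b
      · subst hb; simp [ha]
      · simp [ha, hb]
  simp only [h3, Finset.sum_add_distrib]
  rw [Finset.sum_comm]
  simp only [Finset.sum_ite_eq, Finset.mem_univ, if_true]
  rw [← Finset.sum_add_distrib]
  refine Finset.sum_congr rfl fun v _ => ?_
  rcases lt_trichotomy v.1 u.1 with h | h | h
  · simp [h, h.ne, h.not_gt]
  · simp [h]
  · simp [h, h.ne', h.not_gt]

lemma sum_part_single {d : ℕ} (nn : Fin d → ℕ) (i : Fin d) (P : MV nn) :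
    ∑ j : Fin (nn i), (if (⟨i, j⟩ : MV nn) = P then (1 : ℝ) else 0) = if i = P.1 then 1 else 0 := by
  obtain ⟨i', j'⟩ := P
  by_cases h : i = i'
  · subst h; simp
  · simp [h]

lemma mphi_part {d : ℕ} (nn : Fin d → ℕ) (N : ℝ) (hN : N ≠ 0) (hne : ∀ i, N - nn i ≠ 0)
    (e : ME nn) (i : Fin d) :
    ∑ j : Fin (nn i), mphi nn N e ⟨i, j⟩ =
      ((if i = (mp nn e).1 then 1 else 0) - (if i = (mq nn e).1 then 1 else 0)) / N := by
  simp only [mphi]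
  rw [← Finset.sum_div, Finset.sum_add_distrib, Finset.sum_sub_distrib, Finset.sum_sub_distrib,
    sum_part_single, sum_part_single]
  have hs : ∀ x : ℝ, ∑ _j : Fin (nn i), x = nn i * x := by
    intro x; simp
  have e1 : ∀ P : MV nn, ∑ j : Fin (nn i), (if (⟨i, j⟩ : MV nn).1 = P.1 then (1 : ℝ) else 0) / N =
      nn i * ((if i = P.1 then 1 else 0) / N) := by
    intro P
    rw [← hs]
  have := hne i
  refine (congrArg₂ (fun x y => (((if i = (mp nn e).1 then (1 : ℝ) else 0) -
    (if i = (mq nn e).1 then 1 else 0)) - x + y) / (N - nn i)) (e1 (mp nn e)) (e1 (mq nn e))).trans ?_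
  field_simp
  ring

lemma mphi_harm {d : ℕ} (nn : Fin d → ℕ) (N : ℝ) (hN : N ≠ 0) (hne : ∀ i, N - nn i ≠ 0)
    (hsum : ∑ i, (nn i : ℝ) = N) (r : MV nn) (e : ME nn) (u : MV nn) :
    ∑ e', (bvec (mp nn) (mq nn) r (some e') u : ℝ) *
      (mphi nn N e (mp nn e') - mphi nn N e (mq nn e')) =
      (bvec (mp nn) (mq nn) r (some e) u : ℝ) := by
  rw [laplacian_ME]
  have h1 : ∑ v : MV nn, (if v.1 = u.1 then 0 else (mphi nn N e u - mphi nn N e v)) =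
      (∑ i, (nn i : ℝ) - nn u.1) * mphi nn N e u - ∑ i, ∑ j : Fin (nn i), mphi nn N e ⟨i, j⟩
        + ∑ j : Fin (nn u.1), mphi nn N e ⟨u.1, j⟩ := by
    rw [Fintype.sum_sigma]
    have : ∀ i, (∑ j : Fin (nn i), if (⟨i, j⟩ : MV nn).1 = u.1 then 0 else
        (mphi nn N e u - mphi nn N e ⟨i, j⟩)) =
        (nn i * mphi nn N e u - ∑ j : Fin (nn i), mphi nn N e ⟨i, j⟩) -
        if i = u.1 then (nn i * mphi nn N e u - ∑ j : Fin (nn i), mphi nn N e ⟨i, j⟩) else 0 := by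
      intro i
      by_cases h : i = u.1
      · simp [h]
      · simp [h, Finset.sum_sub_distrib]
    rw [Finset.sum_congr rfl fun i _ => this i, Finset.sum_sub_distrib, Finset.sum_sub_distrib,
      ← Finset.sum_mul]
    simp only [Finset.sum_ite_eq', Finset.mem_univ, if_true]
    ring
  rw [h1, hsum]
  simp only [mphi_part nn N hN hne]
  have h2 : ∑ i : Fin d, ((if i = (mp nn e).1 then (1 : ℝ) else 0) -
      (if i = (mq nn e).1 then 1 else 0)) / N = 0 := by
    rw [← Finset.sum_div, Finset.sum_sub_distrib]; simp
  rw [h2, mphi, mul_div_cancel₀ _ (hne u.1)]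
  simp only [bvec, Pi.sub_apply, Pi.single_apply]
  push_cast
  ring

lemma mphi_bound {d : ℕ} (nn : Fin d → ℕ) (N D : ℝ) (hN : 1 ≤ N)
    (hpos : ∀ i, 0 < N - nn i) (hD : ∀ i, N ≤ D * (N - nn i))
    (e : ME nn) (w : MV nn) :
    |mphi nn N e w| ≤ D / N * ((if w = mp nn e then 1 else 0) + (if w = mq nn e then 1 else 0)
      + 2 / N) := by
  have hN0 : 0 < N := by linarith
  have h := hpos w.1
  have h1 : 1 / (N - nn w.1) ≤ D / N := by
    rw [div_le_div_iff₀ h hN0]; linarith [hD w.1]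
  rw [mphi, abs_div, abs_of_pos h, div_eq_mul_one_div, mul_comm]
  refine mul_le_mul h1 ?_ (abs_nonneg _) (le_trans (by positivity) h1)
  have h2 : (0 : ℝ) ≤ 1 / N := by positivity
  have h3 : 2 / N = 1 / N + 1 / N := by ring
  rw [h3, abs_le]
  constructor <;> split_ifs <;> (try simp only [zero_div]) <;> linarith

lemma mphi_sum_bound {d : ℕ} (nn : Fin d → ℕ) (N D : ℝ) (hN : 1 ≤ N)
    (hpos : ∀ i, 0 < N - nn i) (hD : ∀ i, N ≤ D * (N - nn i))
    (hsum : ∑ i, (nn i : ℝ) = N) (e : ME nn) :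
    ∑ w, |mphi nn N e w| ≤ 4 * D / N := by
  have hN0 : 0 < N := by linarith
  refine (Finset.sum_le_sum fun w _ => mphi_bound nn N D hN hpos hD e w).trans ?_
  rw [← Finset.mul_sum, Finset.sum_add_distrib, Finset.sum_add_distrib]
  simp only [Finset.sum_ite_eq', Finset.mem_univ, if_true, Finset.sum_const, Finset.card_univ,
    Fintype.card_sigma, Fintype.card_fin, nsmul_eq_mul]
  push_cast
  rw [hsum]
  apply le_of_eq
  field_simp
  ring

lemma card_ME_le {d : ℕ} (nn : Fin d → ℕ) (N : ℝ) (hsum : ∑ i, (nn i : ℝ) = N) :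
    (Fintype.card (ME nn) : ℝ) ≤ N ^ 2 := by
  have h1 : Fintype.card (ME nn) ≤ Fintype.card (MV nn × MV nn) :=
    Fintype.card_subtype_le _
  rw [Fintype.card_prod, Fintype.card_sigma] at h1
  simp only [Fintype.card_fin] at h1
  have h2 : (Fintype.card (ME nn) : ℝ) ≤ ((∑ i, nn i) * (∑ i, nn i) : ℕ) := by exact_mod_cast h1
  push_cast at h2
  rw [hsum] at h2
  rw [sq]; exact h2

lemma mK_bound {d : ℕ} (nn : Fin d → ℕ) (N D : ℝ) (hN : 1 ≤ N)
    (hpos : ∀ i, 0 < N - nn i) (hD0 : 0 ≤ D) (hD : ∀ i, N ≤ D * (N - nn i))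
    (e f : ME nn) :
    |mphi nn N e (mp nn f) - mphi nn N e (mq nn f)| ≤ 8 * D / N := by
  have hN0 : 0 < N := by linarith
  have h : ∀ w, |mphi nn N e w| ≤ 4 * D / N := by
    intro w
    refine (mphi_bound nn N D hN hpos hD e w).trans ?_
    have h2 : 2 / N ≤ 2 := by rw [div_le_iff₀ hN0]; linarith
    have : 4 * D / N = D / N * 4 := by ring
    rw [this]
    gcongr
    split_ifs <;> linarith
  have h1 := h (mp nn f)
  have h2 := h (mq nn f)
  have h3 := abs_sub (mphi nn N e (mp nn f)) (mphi nn N e (mq nn f))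
  have h4 : 8 * D / N = 4 * D / N + 4 * D / N := by ring
  rw [h4]
  linarith

lemma mK_sum_bound {d : ℕ} (nn : Fin d → ℕ) (N D : ℝ) (hN : 1 ≤ N)
    (hpos : ∀ i, 0 < N - nn i) (hD0 : 0 ≤ D) (hD : ∀ i, N ≤ D * (N - nn i))
    (hsum : ∑ i, (nn i : ℝ) = N) :
    ∑ e : ME nn, ∑ f : ME nn, |mphi nn N e (mp nn f) - mphi nn N e (mq nn f)| ≤
      (8 * D) * N ^ 2 := by
  have hN0 : 0 < N := by linarith
  have h1 : ∀ e : ME nn, ∑ f : ME nn, |mphi nn N e (mp nn f) - mphi nn N e (mq nn f)| ≤ 8 * D := by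
    intro e
    rw [sum_ME nn (fun a b => |mphi nn N e a - mphi nn N e b|)]
    have hc : (Fintype.card (MV nn) : ℝ) = N := by
      rw [Fintype.card_sigma]; simp only [Fintype.card_fin]; push_cast; exact hsum
    calc _ ≤ ∑ a : MV nn, ∑ b : MV nn, (|mphi nn N e a| + |mphi nn N e b|) := by
          refine Finset.sum_le_sum fun a _ => Finset.sum_le_sum fun b _ => ?_
          split_ifs
          · exact abs_sub _ _
          · positivity
      _ = 2 * N * ∑ a : MV nn, |mphi nn N e a| := by
          simp only [Finset.sum_add_distrib, Finset.sum_const, Finset.card_univ, nsmul_eq_mul, hc]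
          rw [← Finset.mul_sum]; ring
      _ ≤ 2 * N * (4 * D / N) := by
          gcongr
          exact mphi_sum_bound nn N D hN hpos hD hsum e
      _ = 8 * D := by field_simp; ring
  refine (Finset.sum_le_sum fun e _ => h1 e).trans ?_
  rw [Finset.sum_const, Finset.card_univ, nsmul_eq_mul, mul_comm]
  gcongr
  exact card_ME_le nn N hsum

lemma mK_diag {d : ℕ} (nn : Fin d → ℕ) (N : ℝ) (e : ME nn) :
    mphi nn N e (mp nn e) - mphi nn N e (mq nn e) =
      (1 - 1 / N) * (1 / (N - nn (mp nn e).1) + 1 / (N - nn (mq nn e).1)) := by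
  have h1 := mp_ne nn e
  have h2 := mp_ne1 nn e
  simp only [mphi, h1, h1.symm, h2, h2.symm, if_true, if_false]
  ring

lemma mK_diag_sum {d : ℕ} (nn : Fin d → ℕ) (N : ℝ) :
    ∑ e : ME nn, (mphi nn N e (mp nn e) - mphi nn N e (mq nn e)) ^ 2 =
      ∑ pq ∈ Finset.univ.filter (fun pq : Fin d × Fin d => pq.1 < pq.2),
        (nn pq.1 : ℝ) * nn pq.2 *
          ((1 - 1 / N) * (1 / (N - nn pq.1) + 1 / (N - nn pq.2))) ^ 2 := by
  simp only [mK_diag]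
  rw [sum_ME nn (fun a b => ((1 - 1 / N) * (1 / (N - nn a.1) + 1 / (N - nn b.1))) ^ 2)]
  rw [Finset.sum_filter, Fintype.sum_prod_type, Fintype.sum_sigma]
  refine Finset.sum_congr rfl fun i _ => ?_
  simp only [Fintype.sum_sigma, Finset.sum_const, Finset.card_univ, Fintype.card_fin, nsmul_eq_mul]
  rw [Finset.mul_sum]
  refine Finset.sum_congr rfl fun j _ => ?_
  split_ifs <;> ring

lemma edgeGraph_le {d : ℕ} (nn : Fin d → ℕ) (S : Set (ME nn)) :
    edgeGraph (mp nn) (mq nn) S ≤ SimpleGraph.completeMultipartiteGraph (fun i => Fin (nn i)) := by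
  intro u v h
  rw [edgeGraph_adj] at h
  obtain ⟨⟨e, -, he⟩, -⟩ := h
  change u.1 ≠ v.1
  have := mp_ne1 nn e
  rcases he with ⟨rfl, rfl⟩ | ⟨rfl, rfl⟩
  · exact this
  · exact this.symm

lemma edgeGraph_adj_iff {d : ℕ} (nn : Fin d → ℕ) (S : Set (ME nn)) (e : ME nn) :
    (edgeGraph (mp nn) (mq nn) S).Adj (mp nn e) (mq nn e) ↔ e ∈ S := by
  rw [edgeGraph_adj]
  constructor
  · rintro ⟨⟨e', he', h⟩, -⟩
    have : e' = e := mp_inj nn (by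
      change s(mp nn e', mq nn e') = s(mp nn e, mq nn e)
      rw [Sym2.eq_iff]; exact h)
    rwa [← this]
  · intro h
    exact ⟨⟨e, h, Or.inl ⟨rfl, rfl⟩⟩, mp_ne nn e⟩

lemma edgeGraph_inj {d : ℕ} (nn : Fin d → ℕ) {S S' : Finset (ME nn)}
    (h : edgeGraph (mp nn) (mq nn) (S : Set (ME nn)) = edgeGraph (mp nn) (mq nn) (S' : Set (ME nn))) :
    S = S' := by
  ext e
  have h1 := edgeGraph_adj_iff nn (S : Set (ME nn)) e
  have h2 := edgeGraph_adj_iff nn (S' : Set (ME nn)) e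
  rw [h] at h1
  simpa using h1.symm.trans h2

lemma edgeGraph_inf {d : ℕ} (nn : Fin d → ℕ) (S S' : Finset (ME nn)) :
    edgeGraph (mp nn) (mq nn) (S : Set (ME nn)) ⊓ edgeGraph (mp nn) (mq nn) (S' : Set (ME nn)) =
      edgeGraph (mp nn) (mq nn) ((S ∩ S' : Finset (ME nn)) : Set (ME nn)) := by
  rw [edgeGraph, edgeGraph, edgeGraph, Finset.coe_inter,
    Set.image_inter (mp_inj nn), SimpleGraph.fromEdgeSet_inter]

open Classical in
lemma edgeGraph_surj {d : ℕ} (nn : Fin d → ℕ) (T : SimpleGraph (MV nn))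
    (hT : T ≤ SimpleGraph.completeMultipartiteGraph (fun i => Fin (nn i))) :
    ∃ S : Finset (ME nn), edgeGraph (mp nn) (mq nn) (S : Set (ME nn)) = T := by
  refine ⟨Finset.univ.filter fun e => T.Adj (mp nn e) (mq nn e), ?_⟩
  ext u v
  rw [edgeGraph_adj]
  constructor
  · rintro ⟨⟨e, he, h⟩, -⟩
    simp only [Finset.coe_filter, Finset.mem_univ, true_and] at he
    rcases h with ⟨rfl, rfl⟩ | ⟨rfl, rfl⟩
    · exact he
    · exact he.symm
  · intro h
    have h1 : u.1 ≠ v.1 := hT h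
    refine ⟨?_, h.ne⟩
    rcases lt_or_gt_of_ne h1 with h2 | h2
    · refine ⟨⟨(u, v), h2⟩, ?_, Or.inl ⟨rfl, rfl⟩⟩
      simp only [Finset.coe_filter, Finset.mem_univ, true_and]
      exact h
    · refine ⟨⟨(v, u), h2⟩, ?_, Or.inr ⟨rfl, rfl⟩⟩
      simp only [Finset.coe_filter, Finset.mem_univ, true_and]
      exact h.symm

open Classical in
lemma prob_eq {d : ℕ} (nn : Fin d → ℕ) (m : ℕ) :
    multipartiteProbCommonEdgesEq nn m =
      (∑ S ∈ treeSets (mp nn) (mq nn), ∑ S' ∈ treeSets (mp nn) (mq nn),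
        if (S ∩ S').card = m then (1 : ℝ) else 0) / ((treeSets (mp nn) (mq nn)).card : ℝ) ^ 2 := by
  have hmem : ∀ S, S ∈ treeSets (mp nn) (mq nn) ↔
      (edgeGraph (mp nn) (mq nn) (S : Set (ME nn))).IsTree := by
    intro S; simp [treeSets]
  rw [multipartiteProbCommonEdgesEq]
  congr 1
  · rw [← Finset.sum_product', ← Finset.sum_filter, Finset.sum_const, nsmul_eq_mul, mul_one]
    norm_cast
    rw [← Fintype.card_coe, ← Nat.card_eq_fintype_card]
    symm
    refine Nat.card_eq_of_bijective (fun x => ⟨(edgeGraph (mp nn) (mq nn) (x.1.1 : Set (ME nn)),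
      edgeGraph (mp nn) (mq nn) (x.1.2 : Set (ME nn))), ?_⟩) ⟨?_, ?_⟩
    · have hx := x.2
      simp only [Finset.mem_filter, Finset.mem_product, hmem] at hx
      refine ⟨edgeGraph_le nn _, edgeGraph_le nn _, hx.1.1, hx.1.2, ?_⟩
      simp only [edgeGraph_inf]
      rw [card_edgeGraph _ _ (mp_inj nn) (mp_ne nn)]
      exact hx.2
    · rintro ⟨⟨a, b⟩, h⟩ ⟨⟨a', b'⟩, h'⟩ heq
      simp only [Subtype.mk.injEq, Prod.mk.injEq] at heq
      have h1 := edgeGraph_inj nn heq.1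
      have h2 := edgeGraph_inj nn heq.2
      subst h1 h2
      rfl
    · rintro ⟨⟨T, T'⟩, h1, h2, h3, h4, h5⟩
      obtain ⟨S, rfl⟩ := edgeGraph_surj nn T h1
      obtain ⟨S', rfl⟩ := edgeGraph_surj nn T' h2
      refine ⟨⟨(S, S'), ?_⟩, rfl⟩
      simp only [Finset.mem_filter, Finset.mem_product, hmem]
      refine ⟨⟨h3, h4⟩, ?_⟩
      simp only [edgeGraph_inf] at h5
      rwa [card_edgeGraph _ _ (mp_inj nn) (mp_ne nn)] at h5
  · congr 2
    rw [← Fintype.card_coe, ← Nat.card_eq_fintype_card]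
    symm
    refine Nat.card_eq_of_bijective (fun x => ⟨edgeGraph (mp nn) (mq nn) (x.1 : Set (ME nn)),
      edgeGraph_le nn _, (hmem _).1 x.2⟩) ⟨?_, ?_⟩
    · rintro ⟨a, h⟩ ⟨a', h'⟩ heq
      simp only [Subtype.mk.injEq] at heq
      have h1 := edgeGraph_inj nn heq
      subst h1
      rfl
    · rintro ⟨T, h1, h2⟩
      obtain ⟨S, rfl⟩ := edgeGraph_surj nn T h1
      exact ⟨⟨S, (hmem _).2 h2⟩, rfl⟩

lemma treeSets_pos {d : ℕ} (hd : 2 ≤ d) (nn : Fin d → ℕ) (hpos : ∀ i, 1 ≤ nn i) :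
    0 < (treeSets (mp nn) (mq nn)).card := by
  classical
  have hc : (SimpleGraph.completeMultipartiteGraph (fun i => Fin (nn i))).Connected := by
    have hex : ∀ i : Fin d, Nonempty (Fin (nn i)) := fun i => ⟨⟨0, hpos i⟩⟩
    set G := SimpleGraph.completeMultipartiteGraph (fun i => Fin (nn i)) with hG
    have hadj : ∀ u v : MV nn, u.1 ≠ v.1 → G.Adj u v := fun u v h => h
    have i0 : Fin d := ⟨0, by omega⟩
    have hne : Nonempty (MV nn) := ⟨⟨i0, (hex i0).some⟩⟩
    refine ⟨fun u v => ?_⟩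
    by_cases h : u.1 = v.1
    · have : ∃ j : Fin d, j ≠ u.1 := by
        have : Nontrivial (Fin d) := Fin.nontrivial_iff_two_le.2 hd
        exact exists_ne u.1
      obtain ⟨j, hj⟩ := this
      let w : MV nn := ⟨j, (hex j).some⟩
      have h1 : G.Adj u w := hadj _ _ hj.symm
      have h2 : G.Adj w v := hadj _ _ (by rw [← h]; exact hj)
      exact h1.reachable.trans h2.reachable
    · exact (hadj u v h).reachable
  obtain ⟨T, hT, hT'⟩ := hc.exists_isTree_le
  obtain ⟨S, rfl⟩ := edgeGraph_surj nn T hT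
  exact Finset.card_pos.2 ⟨S, by simpa [treeSets] using hT'⟩


open Classical in
/-- The `k`-th factorial moment of the number of common edges of two random spanning trees. -/
noncomputable def mMoment {d : ℕ} (nn : Fin d → ℕ) (k : ℕ) : ℝ :=
  (∑ S ∈ treeSets (mp nn) (mq nn), ∑ S' ∈ treeSets (mp nn) (mq nn),
    ((S ∩ S').card.descFactorial k : ℝ)) / ((treeSets (mp nn) (mq nn)).card : ℝ) ^ 2

lemma prob_bonferroni {d : ℕ} (hd : 2 ≤ d) (nn : Fin d → ℕ) (hpos : ∀ i, 1 ≤ nn i) (m r : ℕ) :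
    |multipartiteProbCommonEdgesEq nn m - ∑ j ∈ Finset.range r,
      (-1) ^ j * mMoment nn (m + j) / (m.factorial * j.factorial)| ≤
        mMoment nn (m + r) / (m.factorial * r.factorial) := by
  classical
  have ht := treeSets_pos hd nn hpos
  have ht2 : (0 : ℝ) < ((treeSets (mp nn) (mq nn)).card : ℝ) ^ 2 := by positivity
  set A := treeSets (mp nn) (mq nn) with hA
  set t : ℝ := ((A.card : ℝ)) ^ 2 with htd
  have h1 : multipartiteProbCommonEdgesEq nn m - ∑ j ∈ Finset.range r,
      (-1) ^ j * mMoment nn (m + j) / (m.factorial * j.factorial) =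
      (∑ S ∈ A, ∑ S' ∈ A, ((if (S ∩ S').card = m then (1 : ℝ) else 0) - ∑ j ∈ Finset.range r,
        (-1) ^ j * ((S ∩ S').card.descFactorial (m + j) : ℝ) / (m.factorial * j.factorial))) / t := by
    rw [prob_eq]
    simp only [Finset.sum_sub_distrib, sub_div]
    congr 1
    · have : ∀ S ∈ A, ∑ S' ∈ A, ∑ j ∈ Finset.range r,
          (-1) ^ j * ((S ∩ S').card.descFactorial (m + j) : ℝ) / (m.factorial * j.factorial) =
          ∑ j ∈ Finset.range r, ∑ S' ∈ A,
          (-1) ^ j * ((S ∩ S').card.descFactorial (m + j) : ℝ) / (m.factorial * j.factorial) :=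
        fun S _ => Finset.sum_comm
      rw [Finset.sum_congr rfl this, Finset.sum_comm, Finset.sum_div]
      refine Finset.sum_congr rfl fun j _ => ?_
      simp only [← Finset.sum_div, ← Finset.mul_sum, mMoment]
      rw [mul_div_assoc', div_right_comm]
  have h2 : mMoment nn (m + r) / (m.factorial * r.factorial) =
      (∑ S ∈ A, ∑ S' ∈ A, ((S ∩ S').card.descFactorial (m + r) : ℝ) /
        (m.factorial * r.factorial)) / t := by
    simp only [← Finset.sum_div, mMoment]
    rw [div_right_comm]
  rw [h1, h2, abs_div, abs_of_pos ht2]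
  refine div_le_div_of_nonneg_right ?_ ht2.le
  refine (Finset.abs_sum_le_sum_abs _ _).trans (Finset.sum_le_sum fun S _ => ?_)
  refine (Finset.abs_sum_le_sum_abs _ _).trans (Finset.sum_le_sum fun S' _ => ?_)
  exact bonferroni_aux _ _ _

lemma mMoment_bound {d : ℕ} (hd : 2 ≤ d) (nn : Fin d → ℕ) (hp : ∀ i, 1 ≤ nn i) (N D : ℝ)
    (hN : 1 ≤ N) (hpos : ∀ i, 0 < N - nn i) (hD0 : 0 ≤ D) (hD : ∀ i, N ≤ D * (N - nn i))
    (hsum : ∑ i, (nn i : ℝ) = N) (k : ℕ) :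
    |mMoment nn k - (∑ pq ∈ Finset.univ.filter (fun pq : Fin d × Fin d => pq.1 < pq.2),
        (nn pq.1 : ℝ) * nn pq.2 *
          ((1 - 1 / N) * (1 / (N - nn pq.1) + 1 / (N - nn pq.2))) ^ 2) ^ k| ≤
      (k.factorial : ℝ) ^ 2 * ((8 * D) ^ (2 * k) / N) := by
  classical
  have hN0 : N ≠ 0 := by linarith
  have ht := treeSets_pos hd nn hp
  have ht2 : (0 : ℝ) < ((treeSets (mp nn) (mq nn)).card : ℝ) ^ 2 := by positivity
  have r : MV nn := ⟨⟨0, by omega⟩, ⟨0, hp _⟩⟩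
  have h1 : mMoment nn k = ∑ g : Fin k → ME nn, Matrix.det (Matrix.of fun a b =>
      mphi nn N (g b) (mp nn (g a)) - mphi nn N (g b) (mq nn (g a))) ^ 2 := by
    have := sum_descFactorial (mp nn) (mq nn) r (mp_inj nn) (mp_ne nn) (mphi nn N)
      (fun e u => mphi_harm nn N hN0 (fun i => (hpos i).ne') hsum r e u) k
    rw [mMoment, div_eq_iff ht2.ne', mul_comm]
    convert this
  rw [h1, ← mK_diag_sum]
  exact det_sq_sum_bound k (fun e f => mphi nn N e (mp nn f) - mphi nn N e (mq nn f)) (8 * D) N hN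
    (by positivity) (mK_bound nn N D hN hpos hD0 hD) (mK_sum_bound nn N D hN hpos hD0 hD hsum)
    (card_ME_le nn N hsum)

/-- Fix `d ≥ 2` and positive reals `c₁, …, c_d` summing to `1`.
For complete multipartite graphs `K_{n₁,…,n_d}` with `n = n₁ + ⋯ + n_d` and
`n_i/n → c_i`, the number `X` of common edges of two independent uniformly random
spanning trees satisfies `P(X = m) → e^(−λ) λ^m / m!` for every fixed `m`, where
`λ = Σ_{i<j} c_i c_j (2 − c_i − c_j)² / ((1−c_i)² (1−c_j)²)`; that is, `X` converges in
distribution to a Poisson distribution with expected value `λ`. -/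
theorem multipartite_poisson_limit (d : ℕ) (hd : 2 ≤ d) (c : Fin d → ℝ)
    (hc : ∀ i, 0 < c i) (hsum : ∑ i, c i = 1)
    (nn : ℕ → Fin d → ℕ)
    (hpos : ∀ n, d ≤ n → ∀ i, 1 ≤ nn n i)
    (htot : ∀ n, d ≤ n → ∑ i, nn n i = n)
    (hconv : ∀ i, Filter.Tendsto (fun n => (nn n i : ℝ) / n) Filter.atTop (nhds (c i)))
    (m : ℕ) :
    Filter.Tendsto (fun n => multipartiteProbCommonEdgesEq (nn n) m) Filter.atTop
      (nhds (Real.exp (-(∑ pq ∈ Finset.univ.filter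
              (fun pq : Fin d × Fin d => pq.1 < pq.2),
            c pq.1 * c pq.2 * (2 - c pq.1 - c pq.2) ^ 2 /
              ((1 - c pq.1) ^ 2 * (1 - c pq.2) ^ 2))) *
          (∑ pq ∈ Finset.univ.filter (fun pq : Fin d × Fin d => pq.1 < pq.2),
            c pq.1 * c pq.2 * (2 - c pq.1 - c pq.2) ^ 2 /
              ((1 - c pq.1) ^ 2 * (1 - c pq.2) ^ 2)) ^ m / m.factorial)) := by
  classical
  have hc1 : ∀ i, 0 < 1 - c i := by
    intro i
    have : Nontrivial (Fin d) := Fin.nontrivial_iff_two_le.2 hd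
    obtain ⟨j, hj⟩ := exists_ne i
    have h := Finset.add_le_sum (f := c) (s := Finset.univ) (fun i _ => (hc i).le)
      (Finset.mem_univ i) (Finset.mem_univ j) hj.symm
    have := hc j
    linarith
  set D : ℝ := ∑ i, 2 / (1 - c i) with hDdef
  have hterm : ∀ i, 0 ≤ 2 / (1 - c i) := fun i => (div_pos two_pos (hc1 i)).le
  have hD0 : 0 ≤ D := Finset.sum_nonneg fun i _ => hterm i
  have hDi : ∀ i, 2 / (1 - c i) ≤ D := fun i =>
    Finset.single_le_sum (fun i _ => hterm i) (Finset.mem_univ i)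
  have hev : ∀ᶠ n : ℕ in Filter.atTop, ∀ i, (nn n i : ℝ) / n < (1 + c i) / 2 := by
    rw [Filter.eventually_all]
    intro i
    exact (hconv i).eventually_lt_const (by linarith [hc1 i])
  have hgood : ∀ᶠ n : ℕ in Filter.atTop, d ≤ n ∧ (1 : ℝ) ≤ n ∧ (∀ i, 0 < (n : ℝ) - nn n i) ∧
      (∀ i, (n : ℝ) ≤ D * (n - nn n i)) := by
    filter_upwards [hev, Filter.eventually_ge_atTop d] with n h hn
    have hn1 : (1 : ℝ) ≤ n := by exact_mod_cast (by omega : 1 ≤ n)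
    have hn0 : (0 : ℝ) < n := by linarith
    have key : ∀ i, (1 - c i) / 2 * n ≤ (n : ℝ) - nn n i := by
      intro i
      have := (div_lt_iff₀ hn0).1 (h i)
      nlinarith
    have hpp : ∀ i, 0 < (n : ℝ) - nn n i := fun i =>
      lt_of_lt_of_le (mul_pos (half_pos (hc1 i)) hn0) (key i)
    refine ⟨hn, hn1, hpp, fun i => ?_⟩
    calc (n : ℝ) = 2 / (1 - c i) * ((1 - c i) / 2 * n) := by
          have := (hc1 i).ne'
          field_simp
      _ ≤ 2 / (1 - c i) * (n - nn n i) := mul_le_mul_of_nonneg_left (key i) (hterm i)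
      _ ≤ D * (n - nn n i) := mul_le_mul_of_nonneg_right (hDi i) (hpp i).le
  have hinv : Filter.Tendsto (fun n : ℕ => 1 / (n : ℝ)) Filter.atTop (nhds 0) :=
    tendsto_one_div_atTop_nhds_zero_nat
  refine poisson_of_moments _ (fun n k => mMoment (nn n) k) _ m ?_ ?_
  · intro k
    have hL : Filter.Tendsto (fun n : ℕ => (∑ pq ∈ Finset.univ.filter
        (fun pq : Fin d × Fin d => pq.1 < pq.2), (nn n pq.1 : ℝ) * nn n pq.2 *
          ((1 - 1 / (n : ℝ)) * (1 / ((n : ℝ) - nn n pq.1) + 1 / ((n : ℝ) - nn n pq.2))) ^ 2))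
        Filter.atTop (nhds (∑ pq ∈ Finset.univ.filter (fun pq : Fin d × Fin d => pq.1 < pq.2),
            c pq.1 * c pq.2 * (2 - c pq.1 - c pq.2) ^ 2 /
              ((1 - c pq.1) ^ 2 * (1 - c pq.2) ^ 2))) := by
      refine tendsto_finsetSum _ fun pq _ => ?_
      have h1 := hconv pq.1
      have h2 := hconv pq.2
      have hone : Filter.Tendsto (fun _ : ℕ => (1 : ℝ)) Filter.atTop (nhds 1) := tendsto_const_nhds
      have h3 := hone.div (hone.sub h1) (hc1 pq.1).ne'
      have h4 := hone.div (hone.sub h2) (hc1 pq.2).ne'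
      have h5 := (h1.mul h2).mul (((hone.sub hinv).mul (h3.add h4)).pow 2)
      have e1 := (hc1 pq.1).ne'
      have e2 := (hc1 pq.2).ne'
      have hlim : c pq.1 * c pq.2 * ((1 - 0) * (1 / (1 - c pq.1) + 1 / (1 - c pq.2))) ^ 2 =
          c pq.1 * c pq.2 * (2 - c pq.1 - c pq.2) ^ 2 /
              ((1 - c pq.1) ^ 2 * (1 - c pq.2) ^ 2) := by
        field_simp
        ring
      rw [hlim] at h5
      refine h5.congr' ?_
      filter_upwards [hgood] with n hn
      obtain ⟨-, hn1, hpp, -⟩ := hn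
      have hn0 : (n : ℝ) ≠ 0 := by linarith
      have f1 := (hpp pq.1).ne'
      have f2 := (hpp pq.2).ne'
      have g : ∀ x : ℝ, (1 : ℝ) / (1 - x / n) = n * (1 / (n - x)) := by
        intro x
        rw [one_sub_div hn0, one_div_div, mul_one_div]
      simp only [Pi.div_apply, g]
      field_simp
    have hk := hL.pow k
    have herr : Filter.Tendsto (fun n : ℕ => (k.factorial : ℝ) ^ 2 * ((8 * D) ^ (2 * k) / (n : ℝ)))
        Filter.atTop (nhds 0) := by
      have := hinv.const_mul ((k.factorial : ℝ) ^ 2 * (8 * D) ^ (2 * k))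
      rw [mul_zero] at this
      refine this.congr fun n => ?_
      ring
    have hdiff := squeeze_zero_norm' (f := fun n : ℕ => mMoment (nn n) k -
        (∑ pq ∈ Finset.univ.filter (fun pq : Fin d × Fin d => pq.1 < pq.2),
          (nn n pq.1 : ℝ) * nn n pq.2 * ((1 - 1 / (n : ℝ)) *
            (1 / ((n : ℝ) - nn n pq.1) + 1 / ((n : ℝ) - nn n pq.2))) ^ 2) ^ k) (by
      filter_upwards [hgood] with n hn
      obtain ⟨hdn, hn1, hpp, hDn⟩ := hn
      rw [Real.norm_eq_abs]
      exact mMoment_bound hd (nn n) (hpos n hdn) n D hn1 hpp hD0 hDn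
        (by exact_mod_cast htot n hdn) k) herr
    have hfin := hdiff.add hk
    rw [zero_add] at hfin
    refine hfin.congr fun n => ?_
    ring
  · filter_upwards [Filter.eventually_ge_atTop d] with n hn r
    exact prob_bonferroni hd (nn n) (hpos n hn) m r
end

section
/- Fix positive reals c_1, c_2 with c_1 + c_2 = 1. Consider complete bipartite graphs K_{n_1,n_2} with n_1/n → c_1 and n_2/n → c_2 as n = n_1 + n_2 → ∞. Let X be the number of common edges of two spanning trees of K_{n_1,n_2} chosen independently and uniformly at random. Then for every fixed nonnegative integer m, P(X = m) → e^{−1/(c_1 c_2)} (1/(c_1 c_2))^m / m!; that is, X converges in distribution to a Poisson distribution with expected value 1/(c_1 c_2). -/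
set_option linter.unusedSectionVars false

namespace BipPoisson

open Finset SimpleGraph

section Alg

theorem alg_identity {ι : Type*} [DecidableEq ι] (I : Finset ι) (a b d : ι → ℝ) (p q P S : ℝ)
    (hd : ∀ i ∈ I, d i ≠ 0) (hdef : ∀ i ∈ I, d i = p * b i + q * a i)
    (hp : p ≠ 0) (hq : q ≠ 0)
    (ha : ∑ i ∈ I, a i = p) (hb : ∑ i ∈ I, b i = q) (hS : S = ∑ i ∈ I, a i * b i / d i) :
    ∑ i ∈ I, ∑ j ∈ I, (if i ≠ j then a i * b j * (P / (d i * d j) *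
      ((d i + d j) * (1 - (S - a i * b i / d i - a j * b j / d j)) - (a i + a j) * (b i + b j)))
      else 0) = (#I - 1) * (P * (1 - S)) := by
  set N : ι → ι → ℝ := fun i j => (1 - S) * (a i / d i * b j) + (1 - S) * (a i * (b j / d j))
    + (a i * (a i * b i) / d i ^ 2) * b j + a i * (b j * (a j * b j) / d j ^ 2)
    - (a i ^ 2 / d i) * (b j ^ 2 / d j) - (a i * b i / d i) * (a j * b j / d j) with hN
  have h1 : ∀ i ∈ I, ∀ j ∈ I, (if i ≠ j then a i * b j * (P / (d i * d j) *
      ((d i + d j) * (1 - (S - a i * b i / d i - a j * b j / d j)) - (a i + a j) * (b i + b j)))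
      else 0) = P * N i j - (if i = j then P * (2 * (1 - S) * (a i * b i / d i)) else 0) := by
    intro i hi j hj
    have h1 := hd i hi
    have h2 := hd j hj
    by_cases hij : i = j
    · subst hij
      simp only [ne_eq, not_true_eq_false, if_false, if_true, hN]
      field_simp
      ring
    · simp only [ne_eq, hij, not_false_eq_true, if_true, if_false, hN]
      field_simp
      ring
  rw [Finset.sum_congr rfl (fun i hi => Finset.sum_congr rfl (h1 i hi))]
  simp only [Finset.sum_sub_distrib]
  have h2 : ∑ i ∈ I, ∑ j ∈ I, (if i = j then P * (2 * (1 - S) * (a i * b i / d i)) else 0)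
      = P * (2 * (1 - S) * S) := by
    rw [hS, Finset.mul_sum, Finset.mul_sum]
    refine Finset.sum_congr rfl fun i hi => ?_
    simp [hi]
  rw [h2]
  simp only [← Finset.mul_sum]
  have h3 : ∑ i ∈ I, ∑ j ∈ I, N i j = (1 - S) * ((∑ i ∈ I, a i / d i) * q)
      + (1 - S) * (p * ∑ i ∈ I, b i / d i) + (∑ i ∈ I, a i * (a i * b i) / d i ^ 2) * q
      + p * (∑ i ∈ I, b i * (a i * b i) / d i ^ 2)
      - (∑ i ∈ I, a i ^ 2 / d i) * (∑ i ∈ I, b i ^ 2 / d i) - S * S := by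
    simp only [hN, Finset.sum_sub_distrib, Finset.sum_add_distrib, ← Finset.mul_sum,
      ← Finset.sum_mul, ha, hb, ← hS]
  rw [h3]
  have e1 : (∑ i ∈ I, a i / d i) * q + p * ∑ i ∈ I, b i / d i = #I := by
    rw [Finset.sum_mul, Finset.mul_sum, ← Finset.sum_add_distrib, Finset.card_eq_sum_ones]
    push_cast
    refine Finset.sum_congr rfl fun i hi => ?_
    have h1 := hd i hi
    have h2 := hdef i hi
    field_simp
    linarith
  have e2 : (∑ i ∈ I, a i * (a i * b i) / d i ^ 2) * q
      + p * (∑ i ∈ I, b i * (a i * b i) / d i ^ 2) = S := by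
    rw [hS, Finset.sum_mul, Finset.mul_sum, ← Finset.sum_add_distrib]
    refine Finset.sum_congr rfl fun i hi => ?_
    have h1 := hd i hi
    have h2 := hdef i hi
    field_simp
    rw [h2]; ring
  have e3 : q * (∑ i ∈ I, a i ^ 2 / d i) = p * (1 - S) := by
    have : p * S + q * (∑ i ∈ I, a i ^ 2 / d i) = p := by
      conv_rhs => rw [← ha]
      rw [hS, Finset.mul_sum, Finset.mul_sum, ← Finset.sum_add_distrib]
      refine Finset.sum_congr rfl fun i hi => ?_
      have h1 := hd i hi
      have h2 := hdef i hi
      field_simp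
      rw [h2]; ring
    linarith
  have e4 : p * (∑ i ∈ I, b i ^ 2 / d i) = q * (1 - S) := by
    have : q * S + p * (∑ i ∈ I, b i ^ 2 / d i) = q := by
      conv_rhs => rw [← hb]
      rw [hS, Finset.mul_sum, Finset.mul_sum, ← Finset.sum_add_distrib]
      refine Finset.sum_congr rfl fun i hi => ?_
      have h1 := hd i hi
      have h2 := hdef i hi
      field_simp
      rw [h2]; ring
    linarith
  have e5 : (∑ i ∈ I, a i ^ 2 / d i) * (∑ i ∈ I, b i ^ 2 / d i) = (1 - S) ^ 2 := by
    have : (p * q) * ((∑ i ∈ I, a i ^ 2 / d i) * (∑ i ∈ I, b i ^ 2 / d i))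
        = (p * q) * (1 - S) ^ 2 := by
      calc _ = (q * (∑ i ∈ I, a i ^ 2 / d i)) * (p * (∑ i ∈ I, b i ^ 2 / d i)) := by ring
        _ = _ := by rw [e3, e4]; ring
    exact mul_left_cancel₀ (mul_ne_zero hp hq) this
  linear_combination P * (1 - S) * e1 + P * e2 - P * e5

end Alg

section Graph

variable {α β : Type*}

/-- Edge of the bipartite graph as an unordered pair. -/
def ee (e : α × β) : Sym2 (α ⊕ β) := s(Sum.inl e.1, Sum.inr e.2)

theorem ee_inj : Function.Injective (ee : α × β → Sym2 (α ⊕ β)) := by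
  rintro ⟨a, b⟩ ⟨c, d⟩ h
  simpa [ee] using h

/-- Bipartite graph with given edge set. -/
def bg (F : Finset (α × β)) : SimpleGraph (α ⊕ β) := SimpleGraph.fromEdgeSet (ee '' (F : Set (α × β)))

theorem bg_edgeSet (F : Finset (α × β)) : (bg F).edgeSet = ee '' (F : Set (α × β)) := by
  rw [bg, edgeSet_fromEdgeSet]
  rw [sdiff_eq_left, Set.disjoint_left]
  rintro _ ⟨e, _, rfl⟩
  simp [ee]

theorem bg_card (F : Finset (α × β)) : Nat.card (bg F).edgeSet = #F := by
  rw [bg_edgeSet, Nat.card_image_of_injective ee_inj]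
  simp

theorem bg_adj (F : Finset (α × β)) (u : α) (v : β) :
    (bg F).Adj (Sum.inl u) (Sum.inr v) ↔ (u, v) ∈ F := by
  rw [← mem_edgeSet, bg_edgeSet]
  constructor
  · rintro ⟨e, he, h⟩
    have : e = (u, v) := ee_inj h
    rwa [this] at he
  · intro h
    exact ⟨(u, v), h, rfl⟩

theorem bg_mono {F G : Finset (α × β)} (h : F ⊆ G) : bg F ≤ bg G :=
  SimpleGraph.fromEdgeSet_mono (Set.image_mono (by exact_mod_cast h))

theorem bg_inter [DecidableEq α] [DecidableEq β] (F G : Finset (α × β)) :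
    bg F ⊓ bg G = bg (F ∩ G) := by
  rw [← edgeSet_inj, edgeSet_inf, bg_edgeSet, bg_edgeSet, bg_edgeSet, Finset.coe_inter,
    Set.image_inter ee_inj]

theorem bg_inj : Function.Injective (bg : Finset (α × β) → SimpleGraph (α ⊕ β)) := by
  intro F G h
  ext ⟨u, v⟩
  rw [← bg_adj, h, bg_adj]

theorem bg_le (F : Finset (α × β)) : bg F ≤ completeBipartiteGraph α β := by
  rw [← edgeSet_subset_edgeSet, bg_edgeSet]
  rintro _ ⟨e, _, rfl⟩
  simp [ee]

theorem bg_surj [Fintype α] [Fintype β] (G : SimpleGraph (α ⊕ β))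
    (hG : G ≤ completeBipartiteGraph α β) : ∃ F, bg F = G := by
  classical
  refine ⟨univ.filter fun e => G.Adj (Sum.inl e.1) (Sum.inr e.2), ?_⟩
  ext x y
  rcases x with x | x <;> rcases y with y | y
  · constructor
    · intro h; have := bg_le _ h; simp at this
    · intro h; have := hG h; simp at this
  · rw [bg_adj]; simp
  · rw [SimpleGraph.adj_comm, bg_adj, SimpleGraph.adj_comm G]; simp
  · constructor
    · intro h; have := bg_le _ h; simp at this
    · intro h; have := hG h; simp at this

variable [Fintype α] [Fintype β] [DecidableEq α] [DecidableEq β]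

open Classical in
/-- Edge sets of spanning trees. -/
noncomputable def trees (α β : Type*) [Fintype α] [Fintype β] [DecidableEq α] [DecidableEq β] :
    Finset (Finset (α × β)) := univ.filter fun F => (bg F).IsTree

theorem mem_trees {F : Finset (α × β)} : F ∈ trees α β ↔ (bg F).IsTree := by
  simp [trees]

/-- Number of spanning trees containing `F`. -/
noncomputable def tau (F : Finset (α × β)) : ℕ := #((trees α β).filter (F ⊆ ·))

theorem trees_card {T : Finset (α × β)} (hT : T ∈ trees α β) :
    #T + 1 = Fintype.card α + Fintype.card β := by
  have := (isTree_iff_connected_and_card.1 (mem_trees.1 hT)).2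
  rw [bg_card] at this
  simpa using this

theorem trees_not_reach {T F : Finset (α × β)} (hT : T ∈ trees α β) (hF : F ⊆ T) {e : α × β}
    (he : e ∈ T) (heF : e ∉ F) : ¬ (bg F).Reachable (Sum.inl e.1) (Sum.inr e.2) := by
  have h1 := isAcyclic_iff_forall_adj_isBridge.1 (mem_trees.1 hT).isAcyclic ((bg_adj T e.1 e.2).2 he)
  rw [isBridge_iff] at h1
  intro h
  refine h1 (h.mono ?_)
  rw [← edgeSet_subset_edgeSet, edgeSet_deleteEdges, bg_edgeSet, bg_edgeSet]
  rintro _ ⟨f, hf, rfl⟩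
  refine ⟨⟨f, hF hf, rfl⟩, ?_⟩
  intro h
  have : f = e := ee_inj h
  exact heF (this ▸ hf)

/-- `π` records the components of the forest `F`. -/
structure Rec (F : Finset (α × β)) (π : α ⊕ β → α ⊕ β) : Prop where
  const : ∀ e ∈ F, π (Sum.inl e.1) = π (Sum.inr e.2)
  reach : ∀ u v, π u = π v → (bg F).Reachable u v
  card : #F + #(univ.image π) = Fintype.card α + Fintype.card β

theorem rec_empty : Rec (∅ : Finset (α × β)) id where
  const := by simp
  reach := by rintro u v rfl; exact Reachable.refl _
  card := by simp

/-- Merge class `j` into class `i`. -/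
def mg (π : α ⊕ β → α ⊕ β) (i j : α ⊕ β) : α ⊕ β → α ⊕ β := fun v => if π v = j then i else π v

theorem mg_image (π : α ⊕ β → α ⊕ β) (i j : α ⊕ β) (hij : i ≠ j) (hi : i ∈ univ.image π) :
    univ.image (mg π i j) = (univ.image π).erase j := by
  ext k
  simp only [mem_image, mem_univ, true_and, mem_erase, mg] at *
  constructor
  · rintro ⟨v, rfl⟩
    split_ifs with h
    · exact ⟨hij, hi⟩
    · exact ⟨h, v, rfl⟩
  · rintro ⟨h, v, rfl⟩
    exact ⟨v, by simp [h]⟩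

theorem rec_insert {F : Finset (α × β)} {π : α ⊕ β → α ⊕ β} (h : Rec F π) (e : α × β)
    (he : π (Sum.inl e.1) ≠ π (Sum.inr e.2)) :
    Rec (insert e F) (mg π (π (Sum.inl e.1)) (π (Sum.inr e.2))) where
  const := by
    intro f hf
    rcases Finset.mem_insert.1 hf with rfl | hf
    · simp [mg]
    · simp [mg, h.const f hf]
  reach := by
    have hm : bg F ≤ bg (insert e F) := bg_mono (Finset.subset_insert _ _)
    have ha : (bg (insert e F)).Reachable (Sum.inl e.1) (Sum.inr e.2) :=
      ((bg_adj _ e.1 e.2).2 (Finset.mem_insert_self _ _)).reachable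
    intro u v huv
    simp only [mg] at huv
    split_ifs at huv with h1 h2 h2
    · exact (h.reach _ _ (h1.trans h2.symm)).mono hm
    · exact (((h.reach _ _ h1).mono hm).trans ha.symm).trans ((h.reach _ _ huv).mono hm)
    · exact (((h.reach _ _ huv).mono hm).trans ha).trans ((h.reach _ _ h2.symm).mono hm)
    · exact (h.reach _ _ huv).mono hm
  card := by
    have h1 : e ∉ F := fun hh => he (h.const e hh)
    rw [mg_image _ _ _ he (Finset.mem_image_of_mem _ (mem_univ _)), Finset.card_insert_of_notMem h1,
      Finset.card_erase_of_mem (Finset.mem_image_of_mem _ (mem_univ _)), ← h.card]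
    have : 0 < #(univ.image π) := Finset.card_pos.2 ⟨_, Finset.mem_image_of_mem π (mem_univ (Sum.inl e.1))⟩
    omega

theorem double_count {F : Finset (α × β)} {π : α ⊕ β → α ⊕ β} (h : Rec F π) :
    ∑ e : α × β, (if π (Sum.inl e.1) ≠ π (Sum.inr e.2) then (tau (insert e F) : ℝ) else 0)
      = (#(univ.image π) - 1) * tau F := by
  have key : ∀ T ∈ (trees α β).filter (F ⊆ ·),
      ((#(univ.filter fun e : α × β => π (Sum.inl e.1) ≠ π (Sum.inr e.2) ∧ insert e F ⊆ T) : ℕ) : ℝ)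
        = #(univ.image π) - 1 := by
    intro T hT
    obtain ⟨hT, hF⟩ := Finset.mem_filter.1 hT
    have : (univ.filter fun e : α × β => π (Sum.inl e.1) ≠ π (Sum.inr e.2) ∧ insert e F ⊆ T)
        = T \ F := by
      ext e
      simp only [mem_filter, mem_univ, true_and, mem_sdiff]
      constructor
      · rintro ⟨h1, h2⟩
        exact ⟨h2 (Finset.mem_insert_self _ _), fun h3 => h1 (h.const e h3)⟩
      · rintro ⟨h1, h2⟩
        refine ⟨fun h3 => trees_not_reach hT hF h1 h2 (h.reach _ _ h3), ?_⟩
        exact Finset.insert_subset h1 hF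
    rw [this, Finset.cast_card_sdiff hF]
    have h1 := trees_card hT
    have h2 := h.card
    rw [← h1] at h2
    have h3 : (#F : ℝ) + #(univ.image π) = #T + 1 := by exact_mod_cast h2
    linarith
  have : ((#(univ.image π) : ℝ) - 1) * tau F = ∑ T ∈ (trees α β).filter (F ⊆ ·),
      ((#(univ.filter fun e : α × β => π (Sum.inl e.1) ≠ π (Sum.inr e.2) ∧ insert e F ⊆ T) : ℕ) : ℝ) := by
    rw [Finset.sum_congr rfl key, Finset.sum_const, nsmul_eq_mul, mul_comm, tau]
  rw [this]
  simp only [Finset.card_filter, tau, Nat.cast_sum]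
  rw [Finset.sum_comm]
  refine Finset.sum_congr rfl fun e _ => ?_
  split_ifs with h1
  · rw [Finset.sum_filter]
    refine Finset.sum_congr rfl fun T _ => ?_
    by_cases h2 : insert e F ⊆ T
    · have : F ⊆ T := (Finset.subset_insert _ _).trans h2
      simp [h1, h2, this]
    · simp [h2]
  · simp [h1]


/-- Number of left vertices in a class. -/
def ca (π : α ⊕ β → α ⊕ β) (i : α ⊕ β) : ℝ := #(univ.filter fun u : α => π (Sum.inl u) = i)

/-- Number of right vertices in a class. -/
def cb (π : α ⊕ β → α ⊕ β) (i : α ⊕ β) : ℝ := #(univ.filter fun u : β => π (Sum.inr u) = i)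

/-- Weighted degree of a class. -/
def dd (π : α ⊕ β → α ⊕ β) (i : α ⊕ β) : ℝ :=
  (Fintype.card α : ℝ) * cb π i + (Fintype.card β : ℝ) * ca π i

/-- Product of the weighted degrees. -/
def Pr (π : α ⊕ β → α ⊕ β) : ℝ := ∏ i ∈ univ.image π, dd π i

/-- The correction sum. -/
noncomputable def Ss (π : α ⊕ β → α ⊕ β) : ℝ := ∑ i ∈ univ.image π, ca π i * cb π i / dd π i

theorem ca_nonneg (π : α ⊕ β → α ⊕ β) (i : α ⊕ β) : 0 ≤ ca π i := Nat.cast_nonneg _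
theorem cb_nonneg (π : α ⊕ β → α ⊕ β) (i : α ⊕ β) : 0 ≤ cb π i := Nat.cast_nonneg _
theorem dd_nonneg (π : α ⊕ β → α ⊕ β) (i : α ⊕ β) : 0 ≤ dd π i :=
  add_nonneg (mul_nonneg (Nat.cast_nonneg _) (cb_nonneg _ _))
    (mul_nonneg (Nat.cast_nonneg _) (ca_nonneg _ _))

theorem dd_ge (π : α ⊕ β → α ⊕ β) (i : α ⊕ β) (hi : i ∈ univ.image π) :
    min (Fintype.card α : ℝ) (Fintype.card β) ≤ dd π i := by
  have h0 := ca_nonneg π i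
  have h0' := cb_nonneg π i
  have p0 : (0 : ℝ) ≤ Fintype.card α := Nat.cast_nonneg _
  have q0 : (0 : ℝ) ≤ Fintype.card β := Nat.cast_nonneg _
  obtain ⟨v, _, rfl⟩ := Finset.mem_image.1 hi
  rcases v with u | u
  · have : 1 ≤ ca π (π (Sum.inl u)) := by
      unfold ca
      exact_mod_cast Finset.card_pos.2 ⟨u, by simp⟩
    refine (min_le_right _ _).trans ?_
    unfold dd
    nlinarith [mul_nonneg p0 h0']
  · have : 1 ≤ cb π (π (Sum.inr u)) := by
      unfold cb
      exact_mod_cast Finset.card_pos.2 ⟨u, by simp⟩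
    refine (min_le_left _ _).trans ?_
    unfold dd
    nlinarith [mul_nonneg q0 h0]

theorem dd_pos [Nonempty α] [Nonempty β] (π : α ⊕ β → α ⊕ β) (i : α ⊕ β) (hi : i ∈ univ.image π) :
    0 < dd π i := by
  refine lt_of_lt_of_le ?_ (dd_ge π i hi)
  exact lt_min (by exact_mod_cast Fintype.card_pos) (by exact_mod_cast Fintype.card_pos)

theorem ca_mg_ne (π : α ⊕ β → α ⊕ β) {i j k : α ⊕ β} (hi : k ≠ i) (hj : k ≠ j) :
    ca (mg π i j) k = ca π k := by
  unfold ca mg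
  congr 2
  ext u
  simp only [mem_filter, mem_univ, true_and]
  split_ifs with h
  · simp [h, hi.symm, hj.symm]
  · rfl

theorem cb_mg_ne (π : α ⊕ β → α ⊕ β) {i j k : α ⊕ β} (hi : k ≠ i) (hj : k ≠ j) :
    cb (mg π i j) k = cb π k := by
  unfold cb mg
  congr 2
  ext u
  simp only [mem_filter, mem_univ, true_and]
  split_ifs with h
  · simp [h, hi.symm, hj.symm]
  · rfl

theorem ca_mg_eq (π : α ⊕ β → α ⊕ β) {i j : α ⊕ β} (hij : i ≠ j) :
    ca (mg π i j) i = ca π i + ca π j := by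
  unfold ca mg
  rw [← Nat.cast_add, ← Finset.card_union_of_disjoint]
  · congr 2
    ext u
    simp only [mem_filter, mem_univ, true_and, mem_union]
    split_ifs with h
    · simp [h]
    · simp [h]
  · rw [Finset.disjoint_left]
    intro u h1 h2
    simp only [mem_filter, mem_univ, true_and] at h1 h2
    exact hij (h1.symm.trans h2)

theorem cb_mg_eq (π : α ⊕ β → α ⊕ β) {i j : α ⊕ β} (hij : i ≠ j) :
    cb (mg π i j) i = cb π i + cb π j := by
  unfold cb mg
  rw [← Nat.cast_add, ← Finset.card_union_of_disjoint]
  · congr 2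
    ext u
    simp only [mem_filter, mem_univ, true_and, mem_union]
    split_ifs with h
    · simp [h]
    · simp [h]
  · rw [Finset.disjoint_left]
    intro u h1 h2
    simp only [mem_filter, mem_univ, true_and] at h1 h2
    exact hij (h1.symm.trans h2)

theorem dd_mg_ne (π : α ⊕ β → α ⊕ β) {i j k : α ⊕ β} (hi : k ≠ i) (hj : k ≠ j) :
    dd (mg π i j) k = dd π k := by
  rw [dd, ca_mg_ne π hi hj, cb_mg_ne π hi hj, dd]

theorem dd_mg_eq (π : α ⊕ β → α ⊕ β) {i j : α ⊕ β} (hij : i ≠ j) :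
    dd (mg π i j) i = dd π i + dd π j := by
  rw [dd, ca_mg_eq π hij, cb_mg_eq π hij, dd, dd]; ring

theorem Pr_mg (π : α ⊕ β → α ⊕ β) {i j : α ⊕ β} (hij : i ≠ j) (hi : i ∈ univ.image π)
    (hj : j ∈ univ.image π) :
    Pr (mg π i j) * (dd π i * dd π j) = Pr π * (dd π i + dd π j) := by
  unfold Pr
  have hi' : i ∈ (univ.image π).erase j := Finset.mem_erase.2 ⟨hij, hi⟩
  rw [mg_image π i j hij hi, ← Finset.mul_prod_erase _ _ hi', ← Finset.mul_prod_erase _ _ hj,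
    ← Finset.mul_prod_erase _ (dd π) hi', dd_mg_eq π hij]
  have : ∏ k ∈ ((univ.image π).erase j).erase i, dd (mg π i j) k
      = ∏ k ∈ ((univ.image π).erase j).erase i, dd π k := by
    refine Finset.prod_congr rfl fun k hk => ?_
    simp only [mem_erase] at hk
    exact dd_mg_ne π hk.1 hk.2.1
  rw [this]
  ring

theorem Ss_mg (π : α ⊕ β → α ⊕ β) {i j : α ⊕ β} (hij : i ≠ j) (hi : i ∈ univ.image π)
    (hj : j ∈ univ.image π) :
    Ss (mg π i j) = Ss π - ca π i * cb π i / dd π i - ca π j * cb π j / dd π j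
      + (ca π i + ca π j) * (cb π i + cb π j) / (dd π i + dd π j) := by
  unfold Ss
  have hi' : i ∈ (univ.image π).erase j := Finset.mem_erase.2 ⟨hij, hi⟩
  rw [mg_image π i j hij hi, ← Finset.add_sum_erase _ _ hi', ← Finset.add_sum_erase _ _ hj,
    ← Finset.add_sum_erase _ (fun k => ca π k * cb π k / dd π k) hi', dd_mg_eq π hij,
    ca_mg_eq π hij, cb_mg_eq π hij]
  have : ∑ k ∈ ((univ.image π).erase j).erase i,
        ca (mg π i j) k * cb (mg π i j) k / dd (mg π i j) k
      = ∑ k ∈ ((univ.image π).erase j).erase i, ca π k * cb π k / dd π k := by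
    refine Finset.sum_congr rfl fun k hk => ?_
    simp only [mem_erase] at hk
    rw [dd_mg_ne π hk.1 hk.2.1, ca_mg_ne π hk.1 hk.2.1, cb_mg_ne π hk.1 hk.2.1]
  rw [this]
  ring

theorem sum_ca (π : α ⊕ β → α ⊕ β) (f : α ⊕ β → ℝ) :
    ∑ u : α, f (π (Sum.inl u)) = ∑ i ∈ univ.image π, ca π i * f i := by
  rw [← Finset.sum_fiberwise_of_maps_to (s := univ) (t := univ.image π)
    (g := fun u : α => π (Sum.inl u)) (fun u _ => Finset.mem_image_of_mem _ (mem_univ _))]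
  refine Finset.sum_congr rfl fun i _ => ?_
  rw [ca, ← nsmul_eq_mul, ← Finset.sum_const]
  refine Finset.sum_congr rfl fun u hu => ?_
  rw [(Finset.mem_filter.1 hu).2]

theorem sum_cb (π : α ⊕ β → α ⊕ β) (f : α ⊕ β → ℝ) :
    ∑ u : β, f (π (Sum.inr u)) = ∑ i ∈ univ.image π, cb π i * f i := by
  rw [← Finset.sum_fiberwise_of_maps_to (s := univ) (t := univ.image π)
    (g := fun u : β => π (Sum.inr u)) (fun u _ => Finset.mem_image_of_mem _ (mem_univ _))]
  refine Finset.sum_congr rfl fun i _ => ?_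
  rw [cb, ← nsmul_eq_mul, ← Finset.sum_const]
  refine Finset.sum_congr rfl fun u hu => ?_
  rw [(Finset.mem_filter.1 hu).2]

theorem sum_edges (π : α ⊕ β → α ⊕ β) (G : α ⊕ β → α ⊕ β → ℝ) :
    ∑ e : α × β, G (π (Sum.inl e.1)) (π (Sum.inr e.2)) =
      ∑ i ∈ univ.image π, ca π i * ∑ j ∈ univ.image π, cb π j * G i j := by
  rw [Fintype.sum_prod_type, ← sum_ca π (fun i => ∑ j ∈ univ.image π, cb π j * G i j)]
  exact Finset.sum_congr rfl fun u _ => sum_cb π (G (π (Sum.inl u)))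

theorem tau_formula [Nonempty α] [Nonempty β] (n : ℕ) : ∀ (F : Finset (α × β))
    (π : α ⊕ β → α ⊕ β), Rec F π → #(univ.image π) = n + 1 →
    (Fintype.card α : ℝ) * Fintype.card β * tau F = Pr π * (1 - Ss π) := by
  have hp : (0 : ℝ) < Fintype.card α := by exact_mod_cast Fintype.card_pos
  have hq : (0 : ℝ) < Fintype.card β := by exact_mod_cast Fintype.card_pos
  induction n with
  | zero =>
    intro F π h hn
    obtain ⟨i, hi⟩ := Finset.card_eq_one.1 (by simpa using hn)
    have hall : ∀ v, π v = i := by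
      intro v
      have : π v ∈ univ.image π := Finset.mem_image_of_mem _ (mem_univ _)
      rw [hi] at this
      simpa using this
    have hcard := h.card
    rw [hn] at hcard
    have hFT : F ∈ trees α β := by
      rw [mem_trees, isTree_iff_connected_and_card]
      refine ⟨?_, ?_⟩
      · rw [connected_iff]
        exact ⟨fun u v => h.reach u v ((hall u).trans (hall v).symm), inferInstance⟩
      · rw [bg_card]; simpa using hcard
    have ht : tau F = 1 := by
      unfold tau
      rw [Finset.card_eq_one]
      refine ⟨F, ?_⟩
      ext T
      simp only [mem_filter, mem_singleton]
      constructor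
      · rintro ⟨h1, h2⟩
        have := trees_card h1
        exact (Finset.eq_of_subset_of_card_le h2 (by omega)).symm
      · rintro rfl
        exact ⟨hFT, subset_rfl⟩
    have e1 : ca π i = Fintype.card α := by simp [ca, hall]
    have e2 : cb π i = Fintype.card β := by simp [cb, hall]
    rw [ht, Pr, Ss, hi, Finset.prod_singleton, Finset.sum_singleton, dd, e1, e2]
    field_simp
    push_cast
    ring
  | succ n ih =>
    intro F π h hn
    have hdc := double_count h
    set I := univ.image π with hI
    have hmem : ∀ v, π v ∈ I := fun v => Finset.mem_image_of_mem _ (mem_univ _)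
    obtain ⟨Q, hQ⟩ : ∃ Q : α ⊕ β → α ⊕ β → ℝ, ∀ i j, Q i j = if i ≠ j then (Pr π / (dd π i * dd π j) *
      ((dd π i + dd π j) * (1 - (Ss π - ca π i * cb π i / dd π i - ca π j * cb π j / dd π j))
        - (ca π i + ca π j) * (cb π i + cb π j)))
      else 0 :=
      ⟨_, fun _ _ => rfl⟩
    have step : ∀ e : α × β, (Fintype.card α : ℝ) * Fintype.card β *
        (if π (Sum.inl e.1) ≠ π (Sum.inr e.2) then (tau (insert e F) : ℝ) else 0)
        = Q (π (Sum.inl e.1)) (π (Sum.inr e.2)) := by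
      intro e
      rw [hQ]
      split_ifs with he
      · have hr := rec_insert h e he
        have hc : #(univ.image (mg π (π (Sum.inl e.1)) (π (Sum.inr e.2)))) = n + 1 := by
          rw [mg_image _ _ _ he (hmem _), Finset.card_erase_of_mem (hmem _), hn]
          rfl
        rw [ih _ _ hr hc, Ss_mg π he (hmem _) (hmem _)]
        have h1 := dd_pos π _ (hmem (Sum.inl e.1))
        have h2 := dd_pos π _ (hmem (Sum.inr e.2))
        have h3 := Pr_mg π he (hmem _) (hmem _)
        have h4 : Pr (mg π (π (Sum.inl e.1)) (π (Sum.inr e.2))) =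
          Pr π * (dd π (π (Sum.inl e.1)) + dd π (π (Sum.inr e.2))) /
            (dd π (π (Sum.inl e.1)) * dd π (π (Sum.inr e.2))) := by
          rw [← h3]; field_simp
        rw [h4]
        field_simp
        ring
      · simp
    have hsum : (Fintype.card α : ℝ) * Fintype.card β * (∑ e : α × β,
        (if π (Sum.inl e.1) ≠ π (Sum.inr e.2) then (tau (insert e F) : ℝ) else 0)) =
        (Fintype.card α : ℝ) * Fintype.card β * ((#I - 1) * tau F) := by rw [hdc]
    rw [Finset.mul_sum, Finset.sum_congr rfl (fun e _ => step e), sum_edges π Q] at hsum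
    simp only [hQ] at hsum
    have hsa : ∑ i ∈ I, ca π i = Fintype.card α := by
      have := sum_ca π (fun _ => 1)
      simpa using this.symm
    have hsb : ∑ i ∈ I, cb π i = Fintype.card β := by
      have := sum_cb π (fun _ => 1)
      simpa using this.symm
    have halg := alg_identity I (ca π) (cb π) (dd π) (Fintype.card α) (Fintype.card β) (Pr π) (Ss π)
      (fun i hi => (dd_pos π i hi).ne') (fun i _ => rfl) hp.ne' hq.ne' hsa hsb rfl
    have heq : ∑ i ∈ I, ca π i * (∑ j ∈ univ.image π, cb π j * (if i ≠ j then
      (Pr π / (dd π i * dd π j) *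
      ((dd π i + dd π j) * (1 - (Ss π - ca π i * cb π i / dd π i - ca π j * cb π j / dd π j))
        - (ca π i + ca π j) * (cb π i + cb π j))) else 0)) = (#I - 1) * (Pr π * (1 - Ss π)) := by
      rw [← halg]
      refine Finset.sum_congr rfl fun i _ => ?_
      rw [Finset.mul_sum]
      refine Finset.sum_congr rfl fun j _ => ?_
      split_ifs
      · ring
      · ring
    rw [heq, hn] at hsum
    have hn0 : ((n + 1 + 1 : ℕ) : ℝ) - 1 ≠ 0 := by
      push_cast
      have : (0 : ℝ) ≤ n := Nat.cast_nonneg n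
      linarith
    refine mul_left_cancel₀ hn0 ?_
    rw [hsum]; ring

theorem tau_eq [Nonempty α] [Nonempty β] {F : Finset (α × β)} {π : α ⊕ β → α ⊕ β} (h : Rec F π) :
    (Fintype.card α : ℝ) * Fintype.card β * tau F = Pr π * (1 - Ss π) := by
  have : 0 < #(univ.image π) := Finset.card_pos.2 (Finset.univ_nonempty.image π)
  exact tau_formula (#(univ.image π) - 1) F π h (by omega)

theorem Ss_nonneg (π : α ⊕ β → α ⊕ β) : 0 ≤ Ss π :=
  Finset.sum_nonneg fun _ _ => div_nonneg (mul_nonneg (ca_nonneg _ _) (cb_nonneg _ _)) (dd_nonneg _ _)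

theorem Pr_nonneg (π : α ⊕ β → α ⊕ β) : 0 ≤ Pr π := Finset.prod_nonneg fun _ _ => dd_nonneg _ _

theorem Ss_id : Ss (id : α ⊕ β → α ⊕ β) = 0 := by
  refine Finset.sum_eq_zero fun i _ => ?_
  rcases i with u | u
  · simp [cb]
  · simp [ca]

theorem tau_empty [Nonempty α] [Nonempty β] :
    (Fintype.card α : ℝ) * Fintype.card β * tau (∅ : Finset (α × β)) = Pr (id : α ⊕ β → α ⊕ β) := by
  rw [tau_eq rec_empty, Ss_id]; ring

theorem Pr_id_pos [Nonempty α] [Nonempty β] : 0 < Pr (id : α ⊕ β → α ⊕ β) :=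
  Finset.prod_pos fun i hi => dd_pos _ i hi

theorem tau_anti {F G : Finset (α × β)} (h : F ⊆ G) : tau G ≤ tau F :=
  Finset.card_le_card (Finset.monotone_filter_right _ fun _ _ hT => h.trans hT)

theorem upper_aux [Nonempty α] [Nonempty β] (F : Finset (α × β)) : tau F ≠ 0 → ∃ π, Rec F π ∧
    Pr π ≤ Pr (id : α ⊕ β → α ⊕ β) * (2 / min (Fintype.card α : ℝ) (Fintype.card β)) ^ #F := by
  have hm : 0 < min (Fintype.card α : ℝ) (Fintype.card β) :=
    lt_min (by exact_mod_cast Fintype.card_pos) (by exact_mod_cast Fintype.card_pos)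
  induction F using Finset.induction_on with
  | empty => intro _; exact ⟨id, rec_empty, by simp⟩
  | insert e F he ih =>
    intro h
    obtain ⟨π, hr, hP⟩ := ih (fun h0 => h (by have := tau_anti (Finset.subset_insert e F); omega))
    obtain ⟨T, hT⟩ := Finset.card_pos.1 (Nat.pos_of_ne_zero h)
    obtain ⟨hT, hFT⟩ := Finset.mem_filter.1 hT
    have hne : π (Sum.inl e.1) ≠ π (Sum.inr e.2) := fun h3 =>
      trees_not_reach hT ((Finset.subset_insert e F).trans hFT) (hFT (Finset.mem_insert_self _ _)) he
        (hr.reach _ _ h3)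
    refine ⟨_, rec_insert hr e hne, ?_⟩
    have hmem : ∀ v, π v ∈ univ.image π := fun v => Finset.mem_image_of_mem _ (mem_univ _)
    have h3 := Pr_mg π hne (hmem _) (hmem _)
    have h1 := dd_pos π _ (hmem (Sum.inl e.1))
    have h2 := dd_pos π _ (hmem (Sum.inr e.2))
    have g1 := dd_ge π _ (hmem (Sum.inl e.1))
    have g2 := dd_ge π _ (hmem (Sum.inr e.2))
    have h4 : Pr (mg π (π (Sum.inl e.1)) (π (Sum.inr e.2))) =
          Pr π * (1 / dd π (π (Sum.inl e.1)) + 1 / dd π (π (Sum.inr e.2))) := by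
      have : Pr (mg π (π (Sum.inl e.1)) (π (Sum.inr e.2))) =
          Pr π * (dd π (π (Sum.inl e.1)) + dd π (π (Sum.inr e.2))) /
            (dd π (π (Sum.inl e.1)) * dd π (π (Sum.inr e.2))) := by
        rw [← h3]; field_simp
      rw [this]; field_simp; ring
    rw [h4, Finset.card_insert_of_notMem he, pow_succ, ← mul_assoc]
    refine mul_le_mul hP ?_ (by positivity) (mul_nonneg (Pr_nonneg _) (by positivity))
    have k1 := one_div_le_one_div_of_le hm g1
    have k2 := one_div_le_one_div_of_le hm g2
    calc _ ≤ _ := add_le_add k1 k2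
      _ = _ := by ring

theorem upper [Nonempty α] [Nonempty β] (F : Finset (α × β)) : (tau F : ℝ) ≤
    tau (∅ : Finset (α × β)) * (2 / min (Fintype.card α : ℝ) (Fintype.card β)) ^ #F := by
  have hp : (0 : ℝ) < Fintype.card α := by exact_mod_cast Fintype.card_pos
  have hq : (0 : ℝ) < Fintype.card β := by exact_mod_cast Fintype.card_pos
  by_cases h : tau F = 0
  · rw [h]; push_cast; positivity
  · obtain ⟨π, hr, hP⟩ := upper_aux F h
    refine le_of_mul_le_mul_left ?_ (mul_pos hp hq)
    rw [← mul_assoc, tau_empty, tau_eq hr]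
    refine le_trans ?_ hP
    nlinarith [Pr_nonneg π, Ss_nonneg π, mul_nonneg (Pr_nonneg π) (Ss_nonneg π)]

/-- `F` is a matching. -/
def Mat (F : Finset (α × β)) : Prop :=
  (∀ e ∈ F, ∀ f ∈ F, e.1 = f.1 → e = f) ∧ (∀ e ∈ F, ∀ f ∈ F, e.2 = f.2 → e = f)

theorem mat_aux [Nonempty α] [Nonempty β] (F : Finset (α × β)) : Mat F → ∃ π, Rec F π ∧
    Pr π = Pr (id : α ⊕ β → α ⊕ β) *
      (((Fintype.card α : ℝ) + Fintype.card β) / (Fintype.card α * Fintype.card β)) ^ #F ∧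
    Ss π = #F / ((Fintype.card α : ℝ) + Fintype.card β) ∧
    (∀ u : α, (∀ e ∈ F, e.1 ≠ u) → ∀ w, π w = π (Sum.inl u) → w = Sum.inl u) ∧
    (∀ u : β, (∀ e ∈ F, e.2 ≠ u) → ∀ w, π w = π (Sum.inr u) → w = Sum.inr u) := by
  have hp : (0 : ℝ) < Fintype.card α := by exact_mod_cast Fintype.card_pos
  have hq : (0 : ℝ) < Fintype.card β := by exact_mod_cast Fintype.card_pos
  induction F using Finset.induction_on with
  | empty => intro _; exact ⟨id, rec_empty, by simp, by simp [Ss_id], by simp, by simp⟩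
  | insert e F he ih =>
    intro h
    obtain ⟨π, hr, hP, hS, hA, hB⟩ := ih
      ⟨fun x hx y hy => h.1 x (mem_insert_of_mem hx) y (mem_insert_of_mem hy),
        fun x hx y hy => h.2 x (mem_insert_of_mem hx) y (mem_insert_of_mem hy)⟩
    have hu : ∀ f ∈ F, f.1 ≠ e.1 := fun f hf h1 => he
      (h.1 f (mem_insert_of_mem hf) e (mem_insert_self _ _) h1 ▸ hf)
    have hv : ∀ f ∈ F, f.2 ≠ e.2 := fun f hf h1 => he
      (h.2 f (mem_insert_of_mem hf) e (mem_insert_self _ _) h1 ▸ hf)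
    have hA' := hA e.1 hu
    have hB' := hB e.2 hv
    have hne : π (Sum.inl e.1) ≠ π (Sum.inr e.2) := fun h3 => by
      have := hB' _ h3
      simp at this
    have hmem : ∀ v, π v ∈ univ.image π := fun v => Finset.mem_image_of_mem _ (mem_univ _)
    have a1 : ca π (π (Sum.inl e.1)) = 1 := by
      unfold ca
      have : (univ.filter fun u : α => π (Sum.inl u) = π (Sum.inl e.1)) = {e.1} := by
        ext u
        simp only [mem_filter, mem_univ, true_and, mem_singleton]
        exact ⟨fun h => Sum.inl_injective (hA' _ h), fun h => by rw [h]⟩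
      rw [this]; simp
    have b1 : cb π (π (Sum.inl e.1)) = 0 := by
      unfold cb
      have : (univ.filter fun u : β => π (Sum.inr u) = π (Sum.inl e.1)) = ∅ := by
        ext u
        simp only [mem_filter, mem_univ, true_and, notMem_empty, iff_false]
        intro h
        have := hA' _ h
        simp at this
      rw [this]; simp
    have b2 : cb π (π (Sum.inr e.2)) = 1 := by
      unfold cb
      have : (univ.filter fun u : β => π (Sum.inr u) = π (Sum.inr e.2)) = {e.2} := by
        ext u
        simp only [mem_filter, mem_univ, true_and, mem_singleton]
        exact ⟨fun h => Sum.inr_injective (hB' _ h), fun h => by rw [h]⟩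
      rw [this]; simp
    have a2 : ca π (π (Sum.inr e.2)) = 0 := by
      unfold ca
      have : (univ.filter fun u : α => π (Sum.inl u) = π (Sum.inr e.2)) = ∅ := by
        ext u
        simp only [mem_filter, mem_univ, true_and, notMem_empty, iff_false]
        intro h
        have := hB' _ h
        simp at this
      rw [this]; simp
    have d1 : dd π (π (Sum.inl e.1)) = Fintype.card β := by rw [dd, a1, b1]; ring
    have d2 : dd π (π (Sum.inr e.2)) = Fintype.card α := by rw [dd, a2, b2]; ring
    refine ⟨_, rec_insert hr e hne, ?_, ?_, ?_, ?_⟩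
    · have h3 := Pr_mg π hne (hmem _) (hmem _)
      rw [d1, d2, hP] at h3
      have h4 : Pr (mg π (π (Sum.inl e.1)) (π (Sum.inr e.2))) =
          (Pr (mg π (π (Sum.inl e.1)) (π (Sum.inr e.2))) *
            ((Fintype.card β : ℝ) * Fintype.card α)) / ((Fintype.card β : ℝ) * Fintype.card α) := by
        field_simp
      rw [h4, h3, Finset.card_insert_of_notMem he, pow_succ]
      field_simp
      ring
    · rw [Ss_mg π hne (hmem _) (hmem _), a1, a2, b1, b2, d1, d2, hS, Finset.card_insert_of_notMem he]
      push_cast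
      field_simp
      ring
    · intro u hu' w hw
      have hue : e.1 ≠ u := hu' e (mem_insert_self _ _)
      have hA2 := hA u (fun f hf => hu' f (mem_insert_of_mem hf))
      have n1 : π (Sum.inl e.1) ≠ π (Sum.inl u) := fun h => hue (Sum.inl_injective (hA2 _ h))
      have n2 : π (Sum.inr e.2) ≠ π (Sum.inl u) := fun h => by simpa using hA2 _ h
      simp only [mg, n2.symm, if_false] at hw
      split_ifs at hw with h5
      · exact absurd hw n1
      · exact hA2 _ hw
    · intro u hu' w hw
      have hue : e.2 ≠ u := hu' e (mem_insert_self _ _)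
      have hB2 := hB u (fun f hf => hu' f (mem_insert_of_mem hf))
      have n1 : π (Sum.inl e.1) ≠ π (Sum.inr u) := fun h => by simpa using hB2 _ h
      have n2 : π (Sum.inr e.2) ≠ π (Sum.inr u) := fun h => hue (Sum.inr_injective (hB2 _ h))
      simp only [mg, n2.symm, if_false] at hw
      split_ifs at hw with h5
      · exact absurd hw n1
      · exact hB2 _ hw

theorem mat_tau [Nonempty α] [Nonempty β] (F : Finset (α × β)) (h : Mat F) :
    (tau F : ℝ) = tau (∅ : Finset (α × β)) *
      ((((Fintype.card α : ℝ) + Fintype.card β) / (Fintype.card α * Fintype.card β)) ^ #F *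
      (1 - #F / ((Fintype.card α : ℝ) + Fintype.card β))) := by
  have hp : (0 : ℝ) < Fintype.card α := by exact_mod_cast Fintype.card_pos
  have hq : (0 : ℝ) < Fintype.card β := by exact_mod_cast Fintype.card_pos
  obtain ⟨π, hr, hP, hS, -⟩ := mat_aux F h
  refine mul_left_cancel₀ (mul_pos hp hq).ne' ?_
  rw [← mul_assoc, tau_empty, tau_eq hr, hP, hS]
  ring

theorem tau_empty_pos [Nonempty α] [Nonempty β] : (0 : ℝ) < tau (∅ : Finset (α × β)) := by
  have hp : (0 : ℝ) < Fintype.card α := by exact_mod_cast Fintype.card_pos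
  have hq : (0 : ℝ) < Fintype.card β := by exact_mod_cast Fintype.card_pos
  have h := tau_empty (α := α) (β := β)
  have h2 := Pr_id_pos (α := α) (β := β)
  rw [← h] at h2
  exact pos_of_mul_pos_right h2 (mul_pos hp hq).le


open Classical in
/-- Matchings with `k` edges. -/
noncomputable def mats (α β : Type*) [Fintype α] [Fintype β] [DecidableEq α] [DecidableEq β] (k : ℕ) :
    Finset (Finset (α × β)) := (powersetCard k univ).filter Mat

theorem mem_mats {k : ℕ} {F : Finset (α × β)} : F ∈ mats α β k ↔ #F = k ∧ Mat F := by
  simp [mats]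

theorem mats_step (k : ℕ) : #(mats α β k) * ((Fintype.card α - k) * (Fintype.card β - k))
    ≤ #(mats α β (k + 1)) * (k + 1) := by
  refine Finset.card_mul_le_card_mul (· ⊆ ·) ?_ ?_
  · intro F hF
    obtain ⟨hk, hM⟩ := mem_mats.1 hF
    have h1 : Fintype.card α - k ≤ #((F.image Prod.fst)ᶜ) := by
      rw [Finset.card_compl]
      have : #(F.image Prod.fst) ≤ k := hk ▸ Finset.card_image_le
      omega
    have h2 : Fintype.card β - k ≤ #((F.image Prod.snd)ᶜ) := by
      rw [Finset.card_compl]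
      have : #(F.image Prod.snd) ≤ k := hk ▸ Finset.card_image_le
      omega
    refine (Nat.mul_le_mul h1 h2).trans ?_
    rw [← Finset.card_product]
    have hA : ∀ e ∈ (F.image Prod.fst)ᶜ ×ˢ (F.image Prod.snd)ᶜ,
        (∀ f ∈ F, f.1 ≠ e.1) ∧ (∀ f ∈ F, f.2 ≠ e.2) := by
      intro e he
      rw [Finset.mem_product, Finset.mem_compl, Finset.mem_compl] at he
      exact ⟨fun f hf h => he.1 (Finset.mem_image.2 ⟨f, hf, h⟩),
        fun f hf h => he.2 (Finset.mem_image.2 ⟨f, hf, h⟩)⟩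
    have hnot : ∀ e ∈ (F.image Prod.fst)ᶜ ×ˢ (F.image Prod.snd)ᶜ, e ∉ F :=
      fun e he h => (hA e he).1 e h rfl
    refine Finset.card_le_card_of_injOn (fun e => insert e F) ?_ ?_
    · intro e he
      have he' : e ∈ (F.image Prod.fst)ᶜ ×ˢ (F.image Prod.snd)ᶜ := he
      obtain ⟨a1, a2⟩ := hA e he'
      refine Finset.mem_coe.2 ((Finset.mem_bipartiteAbove _).2
        ⟨mem_mats.2 ⟨?_, ?_, ?_⟩, Finset.subset_insert _ _⟩)
      · rw [Finset.card_insert_of_notMem (hnot e he'), hk]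
      · intro x hx y hy hxy
        rcases Finset.mem_insert.1 hx with rfl | hx1 <;> rcases Finset.mem_insert.1 hy with rfl | hy1
        · rfl
        · exact absurd hxy.symm (a1 y hy1)
        · exact absurd hxy (a1 x hx1)
        · exact hM.1 x hx1 y hy1 hxy
      · intro x hx y hy hxy
        rcases Finset.mem_insert.1 hx with rfl | hx1 <;> rcases Finset.mem_insert.1 hy with rfl | hy1
        · rfl
        · exact absurd hxy.symm (a2 y hy1)
        · exact absurd hxy (a2 x hx1)
        · exact hM.2 x hx1 y hy1 hxy
    · intro e he f hf hef
      have h3 : e ∈ insert f F := by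
        have : insert e F = insert f F := hef
        rw [← this]; exact Finset.mem_insert_self _ _
      rcases Finset.mem_insert.1 h3 with h | h
      · exact h
      · exact absurd h (hnot e he)
  · intro F hF
    obtain ⟨hk, hM⟩ := mem_mats.1 hF
    have : (mats α β k).bipartiteBelow (· ⊆ ·) F ⊆ powersetCard k F := by
      intro G hG
      rw [Finset.mem_bipartiteBelow] at hG
      exact Finset.mem_powersetCard.2 ⟨hG.2, (mem_mats.1 hG.1).1⟩
    refine (Finset.card_le_card this).trans ?_
    rw [Finset.card_powersetCard, hk]
    simp

theorem mats_lower (K k : ℕ) (hk : k ≤ K) :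
    ((Fintype.card α - K) * (Fintype.card β - K)) ^ k ≤ #(mats α β k) * k.factorial := by
  induction k with
  | zero =>
    have : (∅ : Finset (α × β)) ∈ mats α β 0 := mem_mats.2 ⟨rfl, by simp [Mat]⟩
    simpa using Finset.card_pos.2 ⟨_, this⟩
  | succ k ih =>
    have h1 := ih (by omega)
    have h2 := mats_step (α := α) (β := β) k
    rw [pow_succ, Nat.factorial_succ]
    calc _ ≤ (#(mats α β k) * k.factorial) * ((Fintype.card α - k) * (Fintype.card β - k)) := by
          refine Nat.mul_le_mul h1 (Nat.mul_le_mul ?_ ?_) <;> omega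
      _ = (#(mats α β k) * ((Fintype.card α - k) * (Fintype.card β - k))) * k.factorial := by ring
      _ ≤ (#(mats α β (k + 1)) * (k + 1)) * k.factorial := Nat.mul_le_mul_right _ h2
      _ = _ := by ring

theorem mats_upper (k : ℕ) : #(mats α β k) ≤ (Fintype.card α * Fintype.card β).choose k := by
  classical
  unfold mats
  refine (Finset.card_filter_le _ _).trans ?_
  simp

/-- The `k`-th binomial moment. -/
noncomputable def mom (α β : Type*) [Fintype α] [Fintype β] [DecidableEq α] [DecidableEq β] (k : ℕ) : ℝ :=
  ∑ F ∈ powersetCard k (univ : Finset (α × β)), ((tau F : ℝ) / tau (∅ : Finset (α × β))) ^ 2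

/-- Normalised number of matchings. -/
noncomputable def tk (α β : Type*) [Fintype α] [Fintype β] [DecidableEq α] [DecidableEq β] (k : ℕ) : ℝ :=
  #(mats α β k) / ((Fintype.card α : ℝ) * Fintype.card β) ^ k

/-- Growth ratio. -/
noncomputable def rr (α β : Type*) [Fintype α] [Fintype β] : ℝ :=
  4 * ((Fintype.card α : ℝ) * Fintype.card β) / min (Fintype.card α : ℝ) (Fintype.card β) ^ 2

theorem mom_nonneg (k : ℕ) : 0 ≤ mom α β k := Finset.sum_nonneg fun _ _ => sq_nonneg _

theorem sq_le [Nonempty α] [Nonempty β] (F : Finset (α × β)) :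
    ((tau F : ℝ) / tau (∅ : Finset (α × β))) ^ 2 ≤
      (rr α β) ^ #F / ((Fintype.card α : ℝ) * Fintype.card β) ^ #F := by
  have hp : (0 : ℝ) < Fintype.card α := by exact_mod_cast Fintype.card_pos
  have hq : (0 : ℝ) < Fintype.card β := by exact_mod_cast Fintype.card_pos
  have hm : 0 < min (Fintype.card α : ℝ) (Fintype.card β) := lt_min hp hq
  have h := upper F
  have h0 := tau_empty_pos (α := α) (β := β)
  have h1 : (tau F : ℝ) / tau (∅ : Finset (α × β)) ≤
      (2 / min (Fintype.card α : ℝ) (Fintype.card β)) ^ #F := by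
    rw [div_le_iff₀ h0, mul_comm]; exact h
  calc _ ≤ ((2 / min (Fintype.card α : ℝ) (Fintype.card β)) ^ #F) ^ 2 := by gcongr
    _ = _ := by
      rw [← div_pow, ← pow_mul, mul_comm, pow_mul, rr]
      congr 1
      field_simp
      norm_num

theorem mom_upper [Nonempty α] [Nonempty β] (k : ℕ) : mom α β k ≤ rr α β ^ k / k.factorial := by
  have hp : (0 : ℝ) < Fintype.card α := by exact_mod_cast Fintype.card_pos
  have hq : (0 : ℝ) < Fintype.card β := by exact_mod_cast Fintype.card_pos
  have hr : 0 ≤ rr α β := by unfold rr; positivity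
  have h1 : mom α β k ≤ ∑ F ∈ powersetCard k (univ : Finset (α × β)),
      (rr α β) ^ k / ((Fintype.card α : ℝ) * Fintype.card β) ^ k := by
    refine Finset.sum_le_sum fun F hF => ?_
    have := sq_le F
    rwa [(Finset.mem_powersetCard.1 hF).2] at this
  refine h1.trans ?_
  rw [Finset.sum_const, Finset.card_powersetCard, nsmul_eq_mul, Finset.card_univ, Fintype.card_prod]
  have := Nat.choose_le_pow_div (α := ℝ) k (Fintype.card α * Fintype.card β)
  push_cast at this
  calc _ ≤ (((Fintype.card α : ℝ) * Fintype.card β) ^ k / k.factorial) *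
        ((rr α β) ^ k / ((Fintype.card α : ℝ) * Fintype.card β) ^ k) := by gcongr
    _ = _ := by field_simp

theorem tk_le [Nonempty α] [Nonempty β] (k : ℕ) : tk α β k ≤ 1 / k.factorial := by
  have hp : (0 : ℝ) < Fintype.card α := by exact_mod_cast Fintype.card_pos
  have hq : (0 : ℝ) < Fintype.card β := by exact_mod_cast Fintype.card_pos
  have := Nat.choose_le_pow_div (α := ℝ) k (Fintype.card α * Fintype.card β)
  push_cast at this
  have h2 : (#(mats α β k) : ℝ) ≤ (Fintype.card α * Fintype.card β).choose k := by
    exact_mod_cast mats_upper k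
  unfold tk
  rw [div_le_iff₀ (by positivity)]
  refine (h2.trans this).trans (le_of_eq ?_)
  ring

theorem tk_ge [Nonempty α] [Nonempty β] (k : ℕ) :
    ((((Fintype.card α - k : ℕ) : ℝ) / Fintype.card α) *
      (((Fintype.card β - k : ℕ) : ℝ) / Fintype.card β)) ^ k / k.factorial ≤ tk α β k := by
  have hp : (0 : ℝ) < Fintype.card α := by exact_mod_cast Fintype.card_pos
  have hq : (0 : ℝ) < Fintype.card β := by exact_mod_cast Fintype.card_pos
  have h : (((((Fintype.card α - k : ℕ) : ℝ)) * ((Fintype.card β - k : ℕ) : ℝ)) ^ k)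
      ≤ #(mats α β k) * k.factorial := by exact_mod_cast mats_lower k k le_rfl
  unfold tk
  rw [div_mul_div_comm, div_pow, div_div, div_le_div_iff₀ (by positivity) (by positivity)]
  calc _ ≤ (#(mats α β k) * k.factorial) * ((Fintype.card α : ℝ) * Fintype.card β) ^ k := by gcongr
    _ = _ := by ring

theorem mom_approx [Nonempty α] [Nonempty β] (k : ℕ) :
    |mom α β k - tk α β k * ((((Fintype.card α : ℝ) + Fintype.card β) ^ 2 /
      (Fintype.card α * Fintype.card β)) ^ k *
      (1 - k / ((Fintype.card α : ℝ) + Fintype.card β)) ^ 2)|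
    ≤ (1 / k.factorial - tk α β k) * rr α β ^ k := by
  classical
  have hp : (0 : ℝ) < Fintype.card α := by exact_mod_cast Fintype.card_pos
  have hq : (0 : ℝ) < Fintype.card β := by exact_mod_cast Fintype.card_pos
  have hr : 0 ≤ rr α β := by unfold rr; positivity
  have h0 := tau_empty_pos (α := α) (β := β)
  have hsplit : mom α β k = ∑ F ∈ mats α β k, ((tau F : ℝ) / tau (∅ : Finset (α × β))) ^ 2 +
      ∑ F ∈ (powersetCard k (univ : Finset (α × β))).filter (fun F => ¬ Mat F),
        ((tau F : ℝ) / tau (∅ : Finset (α × β))) ^ 2 := by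
    unfold mom mats
    rw [Finset.sum_filter_add_sum_filter_not]
  have hM : ∑ F ∈ mats α β k, ((tau F : ℝ) / tau (∅ : Finset (α × β))) ^ 2 =
      tk α β k * ((((Fintype.card α : ℝ) + Fintype.card β) ^ 2 /
      (Fintype.card α * Fintype.card β)) ^ k *
      (1 - k / ((Fintype.card α : ℝ) + Fintype.card β)) ^ 2) := by
    have : ∀ F ∈ mats α β k, ((tau F : ℝ) / tau (∅ : Finset (α × β))) ^ 2 =
      ((((Fintype.card α : ℝ) + Fintype.card β) / (Fintype.card α * Fintype.card β)) ^ k *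
      (1 - k / ((Fintype.card α : ℝ) + Fintype.card β))) ^ 2 := by
      intro F hF
      obtain ⟨hk, hF⟩ := mem_mats.1 hF
      rw [mat_tau F hF, hk, mul_div_cancel_left₀ _ h0.ne']
    rw [Finset.sum_congr rfl this, Finset.sum_const, nsmul_eq_mul, tk, mul_pow, ← mul_assoc,
      ← mul_assoc]
    congr 1
    rw [div_mul_eq_mul_div, mul_div_assoc, ← div_pow, ← pow_mul, mul_comm k 2, pow_mul]
    congr 2
    field_simp
  have hN0 : 0 ≤ ∑ F ∈ (powersetCard k (univ : Finset (α × β))).filter (fun F => ¬ Mat F),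
        ((tau F : ℝ) / tau (∅ : Finset (α × β))) ^ 2 := Finset.sum_nonneg fun _ _ => sq_nonneg _
  rw [hsplit, hM, add_sub_cancel_left, abs_of_nonneg hN0]
  have h1 : ∑ F ∈ (powersetCard k (univ : Finset (α × β))).filter (fun F => ¬ Mat F),
        ((tau F : ℝ) / tau (∅ : Finset (α × β))) ^ 2 ≤
      ∑ F ∈ (powersetCard k (univ : Finset (α × β))).filter (fun F => ¬ Mat F),
      (rr α β) ^ k / ((Fintype.card α : ℝ) * Fintype.card β) ^ k := by
    refine Finset.sum_le_sum fun F hF => ?_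
    have := sq_le F
    rwa [(Finset.mem_powersetCard.1 (Finset.mem_filter.1 hF).1).2] at this
  refine h1.trans ?_
  rw [Finset.sum_const, nsmul_eq_mul]
  have hc : (#(mats α β k) : ℝ) + #((powersetCard k (univ : Finset (α × β))).filter (fun F => ¬ Mat F))
      = (Fintype.card α * Fintype.card β).choose k := by
    have := Finset.card_filter_add_card_filter_not (s := powersetCard k (univ : Finset (α × β))) Mat
    rw [Finset.card_powersetCard, Finset.card_univ, Fintype.card_prod] at this
    unfold mats
    exact_mod_cast this
  have := Nat.choose_le_pow_div (α := ℝ) k (Fintype.card α * Fintype.card β)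
  push_cast at this
  have h2 : (#((powersetCard k (univ : Finset (α × β))).filter (fun F => ¬ Mat F)) : ℝ) ≤
      ((Fintype.card α : ℝ) * Fintype.card β) ^ k / k.factorial - #(mats α β k) := by linarith
  calc _ ≤ (((Fintype.card α : ℝ) * Fintype.card β) ^ k / k.factorial - #(mats α β k)) *
        ((rr α β) ^ k / ((Fintype.card α : ℝ) * Fintype.card β) ^ k) := by gcongr
    _ = _ := by unfold tk; field_simp

theorem choose_indicator (x r L : ℕ) (hL : x < L) :
    ∑ j ∈ range L, (-1 : ℝ) ^ j * (r + j).choose r * x.choose (r + j) = if x = r then 1 else 0 := by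
  by_cases hxr : r ≤ x
  · have h1 : ∀ j ∈ range L, (-1 : ℝ) ^ j * (r + j).choose r * x.choose (r + j)
        = x.choose r * ((-1 : ℝ) ^ j * (x - r).choose j) := by
      intro j _
      have := Nat.choose_mul (n := x) (k := r + j) (s := r) (Nat.le_add_right _ _)
      rw [Nat.add_sub_cancel_left] at this
      have h2 : (x.choose (r + j) : ℝ) * (r + j).choose r = x.choose r * (x - r).choose j := by
        exact_mod_cast this
      linear_combination (-1 : ℝ) ^ j * h2
    rw [Finset.sum_congr rfl h1, ← Finset.mul_sum]
    have h2 : ∑ j ∈ range L, (-1 : ℝ) ^ j * (x - r).choose j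
        = ∑ j ∈ range (x - r + 1), (-1 : ℝ) ^ j * (x - r).choose j := by
      symm
      refine Finset.sum_subset ?_ ?_
      · intro j hj
        rw [Finset.mem_range] at *
        omega
      · intro j _ hj
        rw [Finset.mem_range] at hj
        rw [Nat.choose_eq_zero_of_lt (by omega)]
        simp
    rw [h2]
    have h3 := Int.alternating_sum_range_choose (n := x - r)
    have h4 : ∑ j ∈ range (x - r + 1), (-1 : ℝ) ^ j * (x - r).choose j
        = if x - r = 0 then 1 else 0 := by exact_mod_cast h3
    rw [h4]
    by_cases h : x = r
    · subst h; simp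
    · rw [if_neg (by omega), if_neg h]; simp
  · rw [if_neg (by omega)]
    refine Finset.sum_eq_zero fun j _ => ?_
    rw [Nat.choose_eq_zero_of_lt (by omega : x < r + j)]
    simp

/-- Pairs of trees with `r` common edges. -/
noncomputable def pairs (α β : Type*) [Fintype α] [Fintype β] [DecidableEq α] [DecidableEq β] (r : ℕ) :
    Finset (Finset (α × β) × Finset (α × β)) :=
  (trees α β ×ˢ trees α β).filter fun q => #(q.1 ∩ q.2) = r

theorem sum_choose (k : ℕ) : ∑ q ∈ trees α β ×ˢ trees α β, ((#(q.1 ∩ q.2)).choose k : ℝ)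
    = ∑ F ∈ powersetCard k (univ : Finset (α × β)), (tau F : ℝ) ^ 2 := by
  have h1 : ∀ A : Finset (α × β), ((#A).choose k : ℝ) =
      ∑ F ∈ powersetCard k (univ : Finset (α × β)), if F ⊆ A then (1 : ℝ) else 0 := by
    intro A
    rw [← Finset.card_powersetCard, ← Finset.sum_filter, Finset.sum_const, nsmul_eq_mul, mul_one]
    congr 2
    ext F
    simp [Finset.mem_powersetCard, and_comm]
  simp only [h1]
  rw [Finset.sum_comm]
  refine Finset.sum_congr rfl fun F _ => ?_
  rw [← Finset.sum_filter, Finset.sum_const, nsmul_eq_mul, mul_one, sq, tau, ← Nat.cast_mul,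
    ← Finset.card_product]
  congr 2
  ext ⟨S, T⟩
  simp only [mem_filter, mem_product, Finset.subset_inter_iff]
  tauto

theorem tau_empty_card : tau (∅ : Finset (α × β)) = #(trees α β) := by
  simp [tau]

theorem prob_eq [Nonempty α] [Nonempty β] (r : ℕ) :
    (#(pairs α β r) : ℝ) / (#(trees α β) : ℝ) ^ 2 =
      ∑' j : ℕ, (-1 : ℝ) ^ j * (r + j).choose r * mom α β (r + j) := by
  set L := Fintype.card α * Fintype.card β + 1 with hL
  rw [tsum_eq_sum (s := range L)]
  · have hmom : ∀ k, mom α β k = (∑ q ∈ trees α β ×ˢ trees α β, ((#(q.1 ∩ q.2)).choose k : ℝ)) /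
        (#(trees α β) : ℝ) ^ 2 := by
      intro k
      rw [sum_choose, mom, Finset.sum_div, ← tau_empty_card]
      simp only [div_pow]
    simp only [hmom, mul_div_assoc', ← Finset.sum_div]
    congr 1
    simp only [Finset.mul_sum]
    rw [Finset.sum_comm]
    have : ∀ q ∈ trees α β ×ˢ trees α β, ∑ j ∈ range L, (-1 : ℝ) ^ j * (r + j).choose r *
        (#(q.1 ∩ q.2)).choose (r + j) = if #(q.1 ∩ q.2) = r then 1 else 0 := by
      intro q _
      refine choose_indicator _ r L ?_
      have := Finset.card_le_univ (q.1 ∩ q.2)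
      rw [Fintype.card_prod] at this
      omega
    rw [Finset.sum_congr rfl this, pairs, ← Finset.sum_filter, Finset.sum_const, nsmul_eq_mul, mul_one]
  · intro j hj
    rw [Finset.mem_range] at hj
    have : powersetCard (r + j) (univ : Finset (α × β)) = ∅ := by
      rw [Finset.powersetCard_eq_empty, Finset.card_univ, Fintype.card_prod]
      omega
    rw [mom, this]
    simp

theorem card_trees_eq : Nat.card {T : SimpleGraph (α ⊕ β) //
    T ≤ completeBipartiteGraph α β ∧ T.IsTree} = #(trees α β) := by
  rw [← Nat.card_eq_finsetCard]
  symm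
  refine Nat.card_congr (Equiv.ofBijective
    (fun F : trees α β => (⟨bg F.1, bg_le _, mem_trees.1 F.2⟩ : {T : SimpleGraph (α ⊕ β) //
    T ≤ completeBipartiteGraph α β ∧ T.IsTree})) ⟨?_, ?_⟩)
  · intro F G h
    exact Subtype.ext (bg_inj (Subtype.ext_iff.1 h))
  · rintro ⟨T, h1, h2⟩
    obtain ⟨F, rfl⟩ := bg_surj T h1
    exact ⟨⟨F, mem_trees.2 h2⟩, rfl⟩

theorem mem_pairs {r : ℕ} {q : Finset (α × β) × Finset (α × β)} : q ∈ pairs α β r ↔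
    (bg q.1).IsTree ∧ (bg q.2).IsTree ∧ Nat.card (bg q.1 ⊓ bg q.2).edgeSet = r := by
  rw [bg_inter, bg_card, pairs, Finset.mem_filter, Finset.mem_product, mem_trees, mem_trees, and_assoc]

theorem card_pairs_eq (r : ℕ) : Nat.card {q : SimpleGraph (α ⊕ β) × SimpleGraph (α ⊕ β) //
      q.1 ≤ completeBipartiteGraph α β ∧ q.2 ≤ completeBipartiteGraph α β ∧
      q.1.IsTree ∧ q.2.IsTree ∧ Nat.card (q.1 ⊓ q.2).edgeSet = r} = #(pairs α β r) := by
  rw [← Nat.card_eq_finsetCard]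
  symm
  refine Nat.card_congr (Equiv.ofBijective
    (fun F : pairs α β r => (⟨(bg F.1.1, bg F.1.2), bg_le _, bg_le _, mem_pairs.1 F.2⟩ :
    {q : SimpleGraph (α ⊕ β) × SimpleGraph (α ⊕ β) //
      q.1 ≤ completeBipartiteGraph α β ∧ q.2 ≤ completeBipartiteGraph α β ∧
      q.1.IsTree ∧ q.2.IsTree ∧ Nat.card (q.1 ⊓ q.2).edgeSet = r})) ⟨?_, ?_⟩)
  · intro F G h
    have h' := Subtype.ext_iff.1 h
    exact Subtype.ext (Prod.ext (bg_inj (congrArg Prod.fst h')) (bg_inj (congrArg Prod.snd h')))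
  · rintro ⟨⟨S, T⟩, h1, h2, h3⟩
    obtain ⟨F, rfl⟩ := bg_surj S h1
    obtain ⟨G, rfl⟩ := bg_surj T h2
    exact ⟨⟨(F, G), mem_pairs.2 h3⟩, rfl⟩

end Graph

section Limit

open Filter Topology

theorem tendsto_sub_div (p : ℕ → ℕ) (hp : Tendsto (fun n => (p n : ℝ)) atTop atTop) (k : ℕ) :
    Tendsto (fun n => ((p n - k : ℕ) : ℝ) / p n) atTop (𝓝 1) := by
  have h1 : Tendsto (fun n => 1 - (k : ℝ) / p n) atTop (𝓝 (1 - 0)) :=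
    tendsto_const_nhds.sub (tendsto_const_nhds.div_atTop hp)
  rw [sub_zero] at h1
  refine h1.congr' ?_
  filter_upwards [hp.eventually_ge_atTop ((k : ℝ) + 1)] with n hn
  have h2 : k ≤ p n := by
    have : ((k + 1 : ℕ) : ℝ) ≤ p n := by push_cast; exact hn
    have := Nat.cast_le.1 this
    omega
  have h3 : (0 : ℝ) < p n := by
    have : (0 : ℝ) ≤ k := Nat.cast_nonneg k
    linarith
  rw [Nat.cast_sub h2]
  field_simp

variable (c₁ c₂ : ℝ) (p q : ℕ → ℕ)

theorem tendsto_top (hc : 0 < c₁) (h : Tendsto (fun n => (p n : ℝ) / n) atTop (𝓝 c₁)) :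
    Tendsto (fun n => (p n : ℝ)) atTop atTop := by
  have h1 := h.pos_mul_atTop hc (tendsto_natCast_atTop_atTop (R := ℝ))
  refine h1.congr' ?_
  filter_upwards [eventually_gt_atTop 0] with n hn
  have : (0 : ℝ) < n := by exact_mod_cast hn
  field_simp

theorem tk_tendsto (hp : Tendsto (fun n => (p n : ℝ)) atTop atTop)
    (hq : Tendsto (fun n => (q n : ℝ)) atTop atTop) (k : ℕ) :
    Tendsto (fun n => tk (Fin (p n)) (Fin (q n)) k) atTop (𝓝 (1 / k.factorial)) := by
  have hlow : Tendsto (fun n => (((p n - k : ℕ) : ℝ) / p n * (((q n - k : ℕ) : ℝ) / q n)) ^ k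
      / k.factorial) atTop (𝓝 ((1 * 1) ^ k / k.factorial)) :=
    (((tendsto_sub_div p hp k).mul (tendsto_sub_div q hq k)).pow k).div_const _
  have e : ((1 * 1 : ℝ) ^ k / k.factorial) = 1 / k.factorial := by simp
  rw [e] at hlow
  have hev : ∀ᶠ n in atTop, Nonempty (Fin (p n)) ∧ Nonempty (Fin (q n)) := by
    filter_upwards [hp.eventually_gt_atTop 0, hq.eventually_gt_atTop 0] with n h1 h2
    exact ⟨⟨⟨0, by exact_mod_cast h1⟩⟩, ⟨⟨0, by exact_mod_cast h2⟩⟩⟩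
  refine tendsto_of_tendsto_of_tendsto_of_le_of_le' hlow tendsto_const_nhds ?_ ?_
  · filter_upwards [hev] with n ⟨h1, h2⟩
    simpa using tk_ge (α := Fin (p n)) (β := Fin (q n)) k
  · filter_upwards [hev] with n ⟨h1, h2⟩
    exact tk_le k

theorem rr_tendsto (hc₁ : 0 < c₁) (hc₂ : 0 < c₂)
    (h₁ : Tendsto (fun n => (p n : ℝ) / n) atTop (𝓝 c₁))
    (h₂ : Tendsto (fun n => (q n : ℝ) / n) atTop (𝓝 c₂)) :
    Tendsto (fun n => rr (Fin (p n)) (Fin (q n))) atTop (𝓝 (4 * (c₁ * c₂) / min c₁ c₂ ^ 2)) := by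
  have hm : 0 < min c₁ c₂ := lt_min hc₁ hc₂
  have h := ((h₁.mul h₂).const_mul 4).div ((h₁.min h₂).pow 2) (by positivity)
  refine h.congr' ?_
  filter_upwards [eventually_gt_atTop 0] with n hn
  have hn' : (0 : ℝ) < n := by exact_mod_cast hn
  simp only [Pi.div_apply]
  rw [rr, Fintype.card_fin, Fintype.card_fin, min_div_div_right hn'.le]
  field_simp

theorem mom_tendsto (hc₁ : 0 < c₁) (hc₂ : 0 < c₂)
    (htot : ∀ᶠ n in atTop, p n + q n = n)
    (h₁ : Tendsto (fun n => (p n : ℝ) / n) atTop (𝓝 c₁))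
    (h₂ : Tendsto (fun n => (q n : ℝ) / n) atTop (𝓝 c₂)) (k : ℕ) :
    Tendsto (fun n => mom (Fin (p n)) (Fin (q n)) k) atTop
      (𝓝 ((1 / (c₁ * c₂)) ^ k / k.factorial)) := by
  have hp := tendsto_top c₁ p hc₁ h₁
  have hq := tendsto_top c₂ q hc₂ h₂
  have ht := tk_tendsto p q hp hq k
  have hr := rr_tendsto c₁ c₂ p q hc₁ hc₂ h₁ h₂
  have hev : ∀ᶠ n in atTop, Nonempty (Fin (p n)) ∧ Nonempty (Fin (q n)) := by
    filter_upwards [hp.eventually_gt_atTop 0, hq.eventually_gt_atTop 0] with n h1 h2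
    exact ⟨⟨⟨0, by exact_mod_cast h1⟩⟩, ⟨⟨0, by exact_mod_cast h2⟩⟩⟩
  have hmain : Tendsto (fun n => tk (Fin (p n)) (Fin (q n)) k *
      ((1 / ((p n : ℝ) / n * ((q n : ℝ) / n))) ^ k * (1 - (k : ℝ) / n) ^ 2)) atTop
      (𝓝 (1 / k.factorial * ((1 / (c₁ * c₂)) ^ k * (1 - 0) ^ 2))) := by
    refine ht.mul (((tendsto_const_nhds.div (h₁.mul h₂) (mul_pos hc₁ hc₂).ne').pow k).mul
      ((tendsto_const_nhds.sub (tendsto_const_nhds.div_atTop tendsto_natCast_atTop_atTop)).pow 2))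
  have hz : Tendsto (fun n => (1 / (k.factorial : ℝ) - tk (Fin (p n)) (Fin (q n)) k) *
      rr (Fin (p n)) (Fin (q n)) ^ k) atTop (𝓝 0) := by
    have := (ht.const_sub (1 / (k.factorial : ℝ))).mul (hr.pow k)
    rwa [sub_self, zero_mul] at this
  have hd : Tendsto (fun n => mom (Fin (p n)) (Fin (q n)) k - tk (Fin (p n)) (Fin (q n)) k *
      ((1 / ((p n : ℝ) / n * ((q n : ℝ) / n))) ^ k * (1 - (k : ℝ) / n) ^ 2)) atTop (𝓝 0) := by
    refine squeeze_zero_norm' ?_ hz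
    filter_upwards [hev, htot, eventually_gt_atTop 0] with n ⟨h1, h2⟩ h3 h4
    have := mom_approx (α := Fin (p n)) (β := Fin (q n)) k
    rw [Real.norm_eq_abs]
    refine le_trans (le_of_eq ?_) this
    have h5 : (p n : ℝ) + q n = n := by exact_mod_cast h3
    have h6 : (0 : ℝ) < n := by exact_mod_cast h4
    rw [Fintype.card_fin, Fintype.card_fin, h5]
    congr 5
    field_simp
  have := hd.add hmain
  have e : 0 + 1 / (k.factorial : ℝ) * ((1 / (c₁ * c₂)) ^ k * (1 - 0) ^ 2)
      = (1 / (c₁ * c₂)) ^ k / k.factorial := by ring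
  rw [e] at this
  refine this.congr fun n => ?_
  ring

theorem fact_id (r j : ℕ) (x : ℝ) : ((r + j).choose r : ℝ) * (x ^ (r + j) / (r + j).factorial)
    = x ^ r / r.factorial * (x ^ j / j.factorial) := by
  have h : ((r + j).choose r : ℝ) * r.factorial * j.factorial = (r + j).factorial := by
    rw [Nat.choose_symm_add]
    exact_mod_cast Nat.add_choose_mul_factorial_mul_factorial r j
  have : ((r + j).factorial : ℝ) ≠ 0 := by positivity
  rw [← h] at this ⊢
  have h2 : ((r + j).choose r : ℝ) ≠ 0 := fun h0 => this (by rw [h0]; ring)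
  rw [pow_add]
  field_simp

theorem exp_id (r : ℕ) (x : ℝ) : ∑' j : ℕ, (-1 : ℝ) ^ j * (r + j).choose r *
    (x ^ (r + j) / (r + j).factorial) = Real.exp (-x) * x ^ r / r.factorial := by
  have : ∀ j : ℕ, (-1 : ℝ) ^ j * (r + j).choose r * (x ^ (r + j) / (r + j).factorial)
      = x ^ r / r.factorial * ((-x) ^ j / j.factorial) := by
    intro j
    rw [mul_assoc, fact_id, neg_pow x]; ring
  simp only [this]
  rw [tsum_mul_left, Real.exp_eq_exp_ℝ, NormedSpace.exp_eq_tsum_div]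
  ring

theorem prob_tendsto (hc₁ : 0 < c₁) (hc₂ : 0 < c₂)
    (htot : ∀ᶠ n in atTop, p n + q n = n)
    (h₁ : Tendsto (fun n => (p n : ℝ) / n) atTop (𝓝 c₁))
    (h₂ : Tendsto (fun n => (q n : ℝ) / n) atTop (𝓝 c₂)) (r : ℕ) :
    Tendsto (fun n => (#(pairs (Fin (p n)) (Fin (q n)) r) : ℝ) /
        (#(trees (Fin (p n)) (Fin (q n))) : ℝ) ^ 2) atTop
      (𝓝 (Real.exp (-(1 / (c₁ * c₂))) * (1 / (c₁ * c₂)) ^ r / r.factorial)) := by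
  have hp := tendsto_top c₁ p hc₁ h₁
  have hq := tendsto_top c₂ q hc₂ h₂
  have hr := rr_tendsto c₁ c₂ p q hc₁ hc₂ h₁ h₂
  have hev : ∀ᶠ n in atTop, Nonempty (Fin (p n)) ∧ Nonempty (Fin (q n)) := by
    filter_upwards [hp.eventually_gt_atTop 0, hq.eventually_gt_atTop 0] with n h1 h2
    exact ⟨⟨⟨0, by exact_mod_cast h1⟩⟩, ⟨⟨0, by exact_mod_cast h2⟩⟩⟩
  set D := 4 * (c₁ * c₂) / min c₁ c₂ ^ 2 + 1 with hD
  have hDev : ∀ᶠ n in atTop, rr (Fin (p n)) (Fin (q n)) ≤ D :=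
    hr.eventually_le_const (by rw [hD]; linarith)
  rw [← exp_id]
  have hT : Tendsto (fun n => ∑' j : ℕ, (-1 : ℝ) ^ j * (r + j).choose r *
      mom (Fin (p n)) (Fin (q n)) (r + j)) atTop (𝓝 (∑' j : ℕ, (-1 : ℝ) ^ j * (r + j).choose r *
    ((1 / (c₁ * c₂)) ^ (r + j) / (r + j).factorial))) := by
    refine tendsto_tsum_of_dominated_convergence
      (bound := fun j => D ^ r / r.factorial * (D ^ j / j.factorial))
      ((Real.summable_pow_div_factorial D).mul_left _) ?_ ?_
    · intro j
      exact (mom_tendsto c₁ c₂ p q hc₁ hc₂ htot h₁ h₂ (r + j)).const_mul _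
    · filter_upwards [hev, hDev] with n ⟨n1, n2⟩ hn j
      have hr0 : 0 ≤ rr (Fin (p n)) (Fin (q n)) := by unfold rr; positivity
      rw [← fact_id, norm_mul, norm_mul, norm_pow, norm_neg, norm_one, one_pow, one_mul,
        Real.norm_of_nonneg (Nat.cast_nonneg _), Real.norm_of_nonneg (mom_nonneg _)]
      refine mul_le_mul_of_nonneg_left ((mom_upper _).trans ?_) (Nat.cast_nonneg _)
      gcongr
  refine hT.congr' ?_
  filter_upwards [hev] with n ⟨n1, n2⟩
  exact (prob_eq r).symm

end Limit

end BipPoisson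

/-- `P(X = m)` for the complete bipartite graph `K_{n₁,n₂}`: the number of ordered
pairs `(T₁, T₂)` of spanning trees with exactly `m` common edges, divided by the square
of the total number of spanning trees. -/
noncomputable def bipartiteProbCommonEdgesEq (n₁ n₂ m : ℕ) : ℝ :=
  (Nat.card {q : SimpleGraph (Fin n₁ ⊕ Fin n₂) × SimpleGraph (Fin n₁ ⊕ Fin n₂) //
      q.1 ≤ completeBipartiteGraph (Fin n₁) (Fin n₂) ∧
      q.2 ≤ completeBipartiteGraph (Fin n₁) (Fin n₂) ∧
      q.1.IsTree ∧ q.2.IsTree ∧ Nat.card (q.1 ⊓ q.2).edgeSet = m} : ℝ) /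
    (Nat.card {T : SimpleGraph (Fin n₁ ⊕ Fin n₂) //
        T ≤ completeBipartiteGraph (Fin n₁) (Fin n₂) ∧ T.IsTree} : ℝ) ^ 2

/-- Fix positive reals `c₁, c₂` with `c₁ + c₂ = 1`.  For complete
bipartite graphs `K_{n₁,n₂}` with `n = n₁ + n₂ → ∞`, `n₁/n → c₁` and `n₂/n → c₂`, the
number `X` of common edges of two independent uniformly random spanning trees satisfies
`P(X = m) → e^(−1/(c₁c₂)) (1/(c₁c₂))^m / m!` for every fixed `m`; that is, `X`
converges in distribution to a Poisson distribution with expected value `1/(c₁c₂)`. -/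
theorem bipartite_poisson_limit (c₁ c₂ : ℝ) (hc₁ : 0 < c₁) (hc₂ : 0 < c₂)
    (hsum : c₁ + c₂ = 1) (n₁ n₂ : ℕ → ℕ)
    (hpos : ∀ n, 2 ≤ n → 1 ≤ n₁ n ∧ 1 ≤ n₂ n)
    (htot : ∀ n, 2 ≤ n → n₁ n + n₂ n = n)
    (hconv₁ : Filter.Tendsto (fun n => (n₁ n : ℝ) / n) Filter.atTop (nhds c₁))
    (hconv₂ : Filter.Tendsto (fun n => (n₂ n : ℝ) / n) Filter.atTop (nhds c₂))
    (m : ℕ) :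
    Filter.Tendsto (fun n => bipartiteProbCommonEdgesEq (n₁ n) (n₂ n) m) Filter.atTop
      (nhds (Real.exp (-(1 / (c₁ * c₂))) * (1 / (c₁ * c₂)) ^ m / m.factorial)) := by
  have ht : ∀ᶠ n in Filter.atTop, n₁ n + n₂ n = n := by
    filter_upwards [Filter.eventually_ge_atTop 2] with n hn
    exact htot n hn
  have h := BipPoisson.prob_tendsto c₁ c₂ n₁ n₂ hc₁ hc₂ ht hconv₁ hconv₂ m
  refine h.congr fun n => ?_
  rw [bipartiteProbCommonEdgesEq, BipPoisson.card_trees_eq, BipPoisson.card_pairs_eq]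
end
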